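/- arXiv:2406.13780 — 2 statements merged into one kernel-verified Lean document; each statement's English description precedes it below -/
import Mathlib

section
/- For every integer k ≥ 3 there exist constants C > 0 and N such that for every integer n > N, f_{C_{2k},K_4}(n) ≤ C · n^{k/(3k-2)} · (log n)^{6k/(3k-2)}. -/
/-!
The upper bound comes from a random induced subgraph of a `K₄`-free graph built on a hermitian unital.

Let `q` be a prime. The hermitian unital over the field with `q ^ 2` elements has at most `q ^ 3`
points and about `q ^ 4` non-tangent lines, each with at least `q` points; two lines share at most
one point, and by O'Nan's theorem four lines that meet pairwise include three concurrent ones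
(`exists_unital`). Take the lines as vertices and replace, for each point, the clique of the lines
through it by a random complete bipartite graph. The result is `K₄`-free, and with positive
probability it is locally dense: every set `X` of at least `32 q ^ 2` vertices contains a vertex
joined to at least `|X| / (8 q)` vertices of `X` (`exists_locally_dense_K4_free`).

In a locally dense graph there are few `s`-sets of maximum degree at most `D`, by a container-type
count (`card_lowDegreeSets_mul_le`): selecting vertices of large degree one after another exhausts
the degree budget of all but `32 q ^ 2` vertices within about `q D log q` steps. A random set `W` of
`n` vertices therefore contains no such `s`-set, for suitable parameters
(`exists_card_eq_avoiding`).

On the other hand, a `C_{2k}`-free graph on fewer than `r ^ k` vertices has a vertex of degree `O(r)`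
by the Bondy–Simonovits argument (`pow_le_card_of_minDegree`), so a `C_{2k}`-free induced subgraph on
`2 s < r ^ k` vertices contains an `s`-set of maximum degree `D = O(r)` (`exists_subset_degIn_le`).
Hence no `2 s` vertices of `W` induce a `C_{2k}`-free graph (`minFIndep_le_of_params`).

The requirements are `n / q ^ 2 ≪ s` from the sampling and `q r (log n) ^ 2 ≪ s` from the container
count. With `q` of order `√(n / s)` and `r` of order `s ^ (1 / k)` the second one reads
`n ^ k (log n) ^ (4 k) ≪ s ^ (3 k - 2)`, which holds for `s = ⌈T⌉` with
`T = n ^ (k / (3 k - 2)) (log n) ^ (6 k / (3 k - 2))` (`minFIndep_le_ceil`).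
-/

/-- `G` contains a copy of `F` as a (not necessarily induced) subgraph, i.e. there is an
injective graph homomorphism from `F` to `G`. -/
def ContainsCopy {α β : Type*} (F : SimpleGraph α) (G : SimpleGraph β) : Prop :=
  ∃ f : α → β, Function.Injective f ∧ ∀ ⦃a b : α⦄, F.Adj a b → G.Adj (f a) (f b)

/-- The `F`-independence number of a finite graph `G`: the maximum size of a set `S` of
vertices such that the induced subgraph `G[S]` contains no copy of `F`. -/
noncomputable def fIndepNum {α β : Type*} [Fintype β] (F : SimpleGraph α) (G : SimpleGraph β) :
    ℕ :=
  sSup {k | ∃ S : Finset β, S.card = k ∧ ¬ ContainsCopy F (G.induce (S : Set β))}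

/-- `f_{F,H}(n)`: the minimum of the `F`-independence number over all `H`-free graphs on
`n` vertices. -/
noncomputable def minFIndep {α γ : Type*} (F : SimpleGraph α) (H : SimpleGraph γ) (n : ℕ) : ℕ :=
  sInf {k | ∃ G : SimpleGraph (Fin n), ¬ ContainsCopy H G ∧ fIndepNum F G = k}

/-- The Turán number `ex(n, F)`: the maximum number of edges of an `F`-free graph on `n`
vertices. -/
noncomputable def turanNum (n : ℕ) {α : Type*} (F : SimpleGraph α) : ℕ :=
  sSup {k | ∃ G : SimpleGraph (Fin n), ¬ ContainsCopy F G ∧ k = Nat.card G.edgeSet}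

/-! ### Even cycles and minimum degree: the Bondy–Simonovits theorem -/

section EvenCycles

open scoped Classical

/-- A closed sequence of `n` distinct, consecutively adjacent vertices is a copy of `C_n`. -/
theorem containsCopy_cycleGraph_of_seq {V : Type*} (G : SimpleGraph V) {n : ℕ} (hn : 3 ≤ n)
    (c : ℕ → V) (hinj : ∀ a b, a < b → b < n → c a ≠ c b)
    (hadj : ∀ a, a + 1 < n → G.Adj (c a) (c (a + 1))) (hlast : G.Adj (c (n - 1)) (c 0)) :
    ContainsCopy (SimpleGraph.cycleGraph n) G := by
  have key : ∀ a b : Fin n, ((a - b : Fin n) : ℕ) = 1 → G.Adj (c b) (c a) := by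
    intro a b h
    rw [Fin.val_sub] at h
    have ha := a.2
    have hb := b.2
    rcases lt_or_ge (n - (b : ℕ) + a) n with h1 | h1
    · rw [Nat.mod_eq_of_lt h1] at h
      have h2 : (b : ℕ) = n - 1 := by omega
      have h3 : (a : ℕ) = 0 := by omega
      rw [h2, h3]
      exact hlast
    · rw [Nat.mod_eq_sub_mod h1, Nat.mod_eq_of_lt (by omega)] at h
      have h2 : (a : ℕ) = b + 1 := by omega
      rw [h2]
      exact hadj _ (by omega)
  refine ⟨fun i => c i, ?_, ?_⟩
  · intro a b hab
    rcases lt_trichotomy (a : ℕ) b with h | h | h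
    · exact absurd hab (hinj _ _ h b.2)
    · exact Fin.ext h
    · exact absurd hab.symm (hinj _ _ h a.2)
  · intro a b hab
    rw [SimpleGraph.cycleGraph_adj'] at hab
    rcases hab with h | h
    · exact (key _ _ h).symm
    · exact key _ _ h

/-- A bipartite relation with more than `r` times as many edges as vertices has a nonempty
subrelation in which every vertex that occurs has degree more than `r`: vertices of small degree are
deleted one at a time. -/
theorem exists_subrelation_minDegree {V : Type*} (r : ℕ) (s : ℕ) :
    ∀ (U Y : Finset V) (E : Finset (V × V)), U.card + Y.card = s → E ⊆ U ×ˢ Y →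
      r * (U.card + Y.card) < E.card →
      ∃ E' ⊆ E, E'.Nonempty ∧ ∀ e ∈ E', r < (E'.filter fun e' => e'.1 = e.1).card ∧
        r < (E'.filter fun e' => e'.2 = e.2).card := by
  induction s with
  | zero =>
    intro U Y E hs hE h
    have hU : U = ∅ := Finset.card_eq_zero.1 (by omega)
    subst hU
    simp at hE
    subst hE
    simp at h
  | succ s ih =>
    intro U Y E hs hE h
    by_cases hgood : ∀ e ∈ E, r < (E.filter fun e' => e'.1 = e.1).card ∧
        r < (E.filter fun e' => e'.2 = e.2).card
    · exact ⟨E, subset_rfl, Finset.card_pos.1 (by omega), hgood⟩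
    · push Not at hgood
      obtain ⟨e, he, hbad⟩ := hgood
      have heU := Finset.mem_product.1 (hE he)
      by_cases h1 : r < (E.filter fun e' => e'.1 = e.1).card
      · have h2 := hbad h1
        have hsplit := Finset.card_filter_add_card_filter_not (s := E) (fun e' => e'.2 = e.2)
        have hc := Finset.card_erase_add_one heU.2
        obtain ⟨E', hE', hE''⟩ := ih U (Y.erase e.2) (E.filter fun e' => ¬ e'.2 = e.2)
          (by omega)
          (by
            intro x hx
            have hx' := Finset.mem_filter.1 hx
            have := Finset.mem_product.1 (hE hx'.1)
            exact Finset.mem_product.2 ⟨this.1, Finset.mem_erase.2 ⟨hx'.2, this.2⟩⟩)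
          (by rw [← hc] at h; nlinarith)
        exact ⟨E', hE'.trans (Finset.filter_subset _ _), hE''⟩
      · have hsplit := Finset.card_filter_add_card_filter_not (s := E) (fun e' => e'.1 = e.1)
        have hc := Finset.card_erase_add_one heU.1
        obtain ⟨E', hE', hE''⟩ := ih (U.erase e.1) Y (E.filter fun e' => ¬ e'.1 = e.1)
          (by omega)
          (by
            intro x hx
            have hx' := Finset.mem_filter.1 hx
            have := Finset.mem_product.1 (hE hx'.1)
            exact Finset.mem_product.2 ⟨Finset.mem_erase.2 ⟨hx'.2, this.1⟩, this.2⟩)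
          (by rw [← hc] at h; nlinarith)
        exact ⟨E', hE'.trans (Finset.filter_subset _ _), hE''⟩

/-- Greedy construction of a path `g 0, g 1, …, g (n + 1)` that alternates between first and
second coordinates of a relation of large minimum degree. -/
theorem exists_alternating_path {V : Type*} {r : ℕ} {E : Finset (V × V)}
    (hne : E.Nonempty) (hirr : ∀ e ∈ E, e.1 ≠ e.2)
    (hdeg : ∀ e ∈ E, r < (E.filter fun e' => e'.1 = e.1).card ∧
        r < (E.filter fun e' => e'.2 = e.2).card) :
    ∀ n, n + 1 ≤ r → ∃ g : ℕ → V, (∀ a b, a < b → b ≤ n + 1 → g a ≠ g b) ∧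
      (∀ a, a ≤ n → Even a → (g a, g (a + 1)) ∈ E) ∧
      (∀ a, a ≤ n → ¬ Even a → (g (a + 1), g a) ∈ E) := by
  intro n
  induction n with
  | zero =>
    intro _
    obtain ⟨⟨u, y⟩, he⟩ := hne
    refine ⟨fun a => if a = 0 then u else y, ?_, ?_, ?_⟩
    · intro a b hab hb
      have h1 : a = 0 := by omega
      have h2 : b = 1 := by omega
      subst h1 h2
      simpa using hirr _ he
    · intro a ha _
      have h1 : a = 0 := by omega
      subst h1
      simpa using he
    · intro a ha h
      have h1 : a = 0 := by omega
      subst h1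
      simp at h
  | succ n ih =>
    intro hn
    obtain ⟨g, hinj, hev, hodd⟩ := ih (by omega)
    have hcard : ((Finset.range (n + 2)).image g).card ≤ n + 2 :=
      Finset.card_image_le.trans (by simp)
    have ext : ∀ v, v ∉ (Finset.range (n + 2)).image g →
        (Even (n + 1) → (g (n + 1), v) ∈ E) → (¬ Even (n + 1) → (v, g (n + 1)) ∈ E) →
        ∃ g : ℕ → V, (∀ a b, a < b → b ≤ n + 1 + 1 → g a ≠ g b) ∧
          (∀ a, a ≤ n + 1 → Even a → (g a, g (a + 1)) ∈ E) ∧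
          (∀ a, a ≤ n + 1 → ¬ Even a → (g (a + 1), g a) ∈ E) := by
      intro v hv h1 h2
      refine ⟨fun a => if a ≤ n + 1 then g a else v, ?_, ?_, ?_⟩
      · intro a b hab hb
        have ha : a ≤ n + 1 := by omega
        by_cases hb' : b ≤ n + 1
        · simpa [ha, hb'] using hinj a b hab hb'
        · simp only [ha, hb', if_true, if_false]
          rintro rfl
          exact hv (Finset.mem_image.2 ⟨a, Finset.mem_range.2 (by omega), rfl⟩)
      · intro a ha he
        by_cases ha' : a ≤ n
        · have : a + 1 ≤ n + 1 := by omega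
          simpa [ha, ha'] using hev a ha' he
        · have : a = n + 1 := by omega
          subst this
          simpa using h1 he
      · intro a ha he
        by_cases ha' : a ≤ n
        · have : a + 1 ≤ n + 1 := by omega
          simpa [ha, ha'] using hodd a ha' he
        · have : a = n + 1 := by omega
          subst this
          simpa using h2 he
    by_cases hpar : Even (n + 1)
    · have hodd' : ¬ Even n := by
        intro h
        exact (Nat.even_add_one.1 hpar) h
      have hlast := hodd n le_rfl hodd'
      have hd := (hdeg _ hlast).1
      have hci : ((E.filter fun e' => e'.1 = g (n + 1)).image Prod.snd).card
          = (E.filter fun e' => e'.1 = g (n + 1)).card := by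
        apply Finset.card_image_of_injOn
        rintro ⟨a, b⟩ hx ⟨a', b'⟩ hy hxy
        simp at hx hy hxy
        simp [hx.2, hy.2, hxy]
      obtain ⟨v, hv, hv'⟩ := Finset.exists_mem_notMem_of_card_lt_card
        (show ((Finset.range (n + 2)).image g).card <
          ((E.filter fun e' => e'.1 = g (n + 1)).image Prod.snd).card by
            rw [hci]; simp only at hd; omega)
      refine ext v hv' (fun _ => ?_) (fun h => absurd hpar h)
      obtain ⟨⟨a, b⟩, hab, rfl⟩ := Finset.mem_image.1 hv
      simp at hab
      rw [← hab.2]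
      exact hab.1
    · have heven' : Even n := by
        by_contra h
        exact hpar (Nat.even_add_one.2 h)
      have hlast := hev n le_rfl heven'
      have hd := (hdeg _ hlast).2
      have hci : ((E.filter fun e' => e'.2 = g (n + 1)).image Prod.fst).card
          = (E.filter fun e' => e'.2 = g (n + 1)).card := by
        apply Finset.card_image_of_injOn
        rintro ⟨a, b⟩ hx ⟨a', b'⟩ hy hxy
        simp at hx hy hxy
        simp [hx.2, hy.2, hxy]
      obtain ⟨v, hv, hv'⟩ := Finset.exists_mem_notMem_of_card_lt_card
        (show ((Finset.range (n + 2)).image g).card <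
          ((E.filter fun e' => e'.2 = g (n + 1)).image Prod.fst).card by
            rw [hci]; simp only at hd; omega)
      refine ext v hv' (fun h => absurd h hpar) (fun _ => ?_)
      obtain ⟨⟨a, b⟩, hab, rfl⟩ := Finset.mem_image.1 hv
      simp at hab
      rw [← hab.2]
      exact hab.1

/-- A levelling of a graph as produced by breadth-first search up to depth `k`: `lvl` is the level
and `par` the parent of a vertex in the search tree. -/
structure IsBFS {V : Type*} (G : SimpleGraph V) (k : ℕ) (lvl : V → ℕ) (par : V → V) : Prop where
  adj_par : ∀ v, 0 < lvl v → lvl v ≤ k → G.Adj (par v) v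
  lvl_par : ∀ v, 0 < lvl v → lvl v ≤ k → lvl (par v) + 1 = lvl v
  lvl_adj : ∀ u v, G.Adj u v → lvl v ≤ lvl u + 1

theorem IsBFS.lvl_iterate {V : Type*} {G : SimpleGraph V} {k : ℕ} {lvl : V → ℕ} {par : V → V}
    (h : IsBFS G k lvl par) {u : V} (hu : lvl u ≤ k) :
    ∀ s, s ≤ lvl u → lvl (par^[s] u) + s = lvl u := by
  intro s
  induction s with
  | zero => simp
  | succ s ih =>
    intro hs
    have := ih (by omega)
    rw [Function.iterate_succ_apply']
    have := h.lvl_par (par^[s] u) (by omega) (by omega)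
    omega

theorem IsBFS.adj_iterate {V : Type*} {G : SimpleGraph V} {k : ℕ} {lvl : V → ℕ} {par : V → V}
    (h : IsBFS G k lvl par) {u : V} (hu : lvl u ≤ k) (s : ℕ) (hs : s < lvl u) :
    G.Adj (par^[s + 1] u) (par^[s] u) := by
  have := h.lvl_iterate hu s hs.le
  rw [Function.iterate_succ_apply']
  exact h.adj_par _ (by omega) (by omega)

/-- A path of length `2 * l` inside the levels `≥ i` whose two end vertices lie on level `i` and
have their lowest common ancestor exactly `h` levels higher closes up, through the search tree, to
a cycle of length `2 * l + 2 * h`. -/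
theorem IsBFS.containsCopy_cycle {V : Type*} {G : SimpleGraph V} {k : ℕ} {lvl : V → ℕ}
    {par : V → V} (hB : IsBFS G k lvl par) (hk : 2 ≤ k) {i h l : ℕ} (hi : i ≤ k) (hh : 1 ≤ h)
    (hhi : h ≤ i) (hl : 1 ≤ l) (hlk : l + h = k) (g : ℕ → V)
    (hinj : ∀ a b, a < b → b ≤ 2 * l → g a ≠ g b)
    (hadj : ∀ a, a < 2 * l → G.Adj (g a) (g (a + 1)))
    (hlvl : ∀ a, a ≤ 2 * l → i ≤ lvl (g a))
    (h0 : lvl (g 0) = i) (h1 : lvl (g (2 * l)) = i)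
    (hanc : par^[h] (g 0) = par^[h] (g (2 * l)))
    (hne : par^[h - 1] (g 0) ≠ par^[h - 1] (g (2 * l))) :
    ContainsCopy (SimpleGraph.cycleGraph (2 * k)) G := by
  have hL0 : ∀ s, s ≤ i → lvl (par^[s] (g 0)) + s = i := by
    intro s hs
    have := hB.lvl_iterate (u := g 0) (by omega) s (by omega)
    omega
  have hL1 : ∀ s, s ≤ i → lvl (par^[s] (g (2 * l))) + s = i := by
    intro s hs
    have := hB.lvl_iterate (u := g (2 * l)) (by omega) s (by omega)
    omega
  have hdiff : ∀ s, s < h → par^[s] (g 0) ≠ par^[s] (g (2 * l)) := by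
    intro s hs heq
    apply hne
    have : h - 1 = (h - 1 - s) + s := by omega
    rw [this, Function.iterate_add_apply, Function.iterate_add_apply, heq]
  set c : ℕ → V := fun a => if a ≤ 2 * l then g a else
    if a ≤ 2 * l + h then par^[a - 2 * l] (g (2 * l)) else par^[2 * k - a] (g 0) with hc
  have c1 : ∀ a, a ≤ 2 * l → c a = g a := by
    intro a ha
    simp [hc, ha]
  have c2 : ∀ s, 1 ≤ s → s ≤ h → c (2 * l + s) = par^[s] (g (2 * l)) := by
    intro s h1 h2
    have : ¬ (2 * l + s ≤ 2 * l) := by omega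
    simp [hc, h2, show s ≠ 0 by omega]
  have c3 : ∀ s, 1 ≤ s → s < h → c (2 * k - s) = par^[s] (g 0) := by
    intro s h1 h2
    have e1 : ¬ (2 * k - s ≤ 2 * l) := by omega
    have e2 : ¬ (2 * k - s ≤ 2 * l + h) := by omega
    have e3 : 2 * k - (2 * k - s) = s := by omega
    simp only [hc, e1, e2, e3, if_false]
  refine containsCopy_cycleGraph_of_seq G (by omega) c ?_ ?_ ?_
  · intro a b hab hb heq
    by_cases hb1 : b ≤ 2 * l
    · rw [c1 a (by omega), c1 b hb1] at heq
      exact hinj a b hab hb1 heq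
    have hbform : (∃ s, 1 ≤ s ∧ s ≤ h ∧ b = 2 * l + s) ∨ (∃ s, 1 ≤ s ∧ s < h ∧ b = 2 * k - s) := by
      by_cases hb2 : b ≤ 2 * l + h
      · exact Or.inl ⟨b - 2 * l, by omega, by omega, by omega⟩
      · exact Or.inr ⟨2 * k - b, by omega, by omega, by omega⟩
    by_cases ha1 : a ≤ 2 * l
    · rw [c1 a ha1] at heq
      have hla := hlvl a ha1
      rcases hbform with ⟨s, s1, s2, rfl⟩ | ⟨s, s1, s2, rfl⟩
      · rw [c2 s s1 s2] at heq
        have := hL1 s (by omega)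
        rw [← heq] at this
        omega
      · rw [c3 s s1 s2] at heq
        have := hL0 s (by omega)
        rw [← heq] at this
        omega
    have haform : (∃ s, 1 ≤ s ∧ s ≤ h ∧ a = 2 * l + s) ∨ (∃ s, 1 ≤ s ∧ s < h ∧ a = 2 * k - s) := by
      by_cases hb2 : a ≤ 2 * l + h
      · exact Or.inl ⟨a - 2 * l, by omega, by omega, by omega⟩
      · exact Or.inr ⟨2 * k - a, by omega, by omega, by omega⟩
    rcases hbform with ⟨s, s1, s2, rfl⟩ | ⟨s, s1, s2, rfl⟩
    · rcases haform with ⟨t, t1, t2, rfl⟩ | ⟨t, t1, t2, rfl⟩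
      · rw [c2 s s1 s2, c2 t t1 t2] at heq
        have e1 := hL1 s (by omega)
        have e2 := hL1 t (by omega)
        rw [heq] at e2
        omega
      · omega
    · rcases haform with ⟨t, t1, t2, rfl⟩ | ⟨t, t1, t2, rfl⟩
      · rw [c3 s s1 s2, c2 t t1 t2] at heq
        have e1 := hL0 s (by omega)
        have e2 := hL1 t (by omega)
        rw [heq] at e2
        have : s = t := by omega
        subst this
        exact hdiff s s2 heq.symm
      · rw [c3 s s1 s2, c3 t t1 t2] at heq
        have e1 := hL0 s (by omega)
        have e2 := hL0 t (by omega)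
        rw [heq] at e2
        omega
  · intro a ha
    by_cases h1' : a < 2 * l
    · rw [c1 a h1'.le, c1 (a + 1) h1']
      exact hadj a h1'
    by_cases h2' : a + 1 ≤ 2 * l + h
    · obtain ⟨s, rfl⟩ : ∃ s, a = 2 * l + s := ⟨a - 2 * l, by omega⟩
      have e := hB.adj_iterate (u := g (2 * l)) (by omega) s (by omega)
      rw [add_assoc, c2 (s + 1) (by omega) (by omega)]
      rcases Nat.eq_zero_or_pos s with rfl | hs
      · rw [c1 _ (by omega)]
        exact e.symm
      · rw [c2 s hs (by omega)]
        exact e.symm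
    · obtain ⟨s, hs⟩ : ∃ s, a + 1 = 2 * k - s := ⟨2 * k - (a + 1), by omega⟩
      have e := hB.adj_iterate (u := g 0) (by omega) s (by omega)
      rw [hs, c3 s (by omega) (by omega)]
      by_cases hs' : s + 1 = h
      · have ea : a = 2 * l + h := by omega
        rw [ea, c2 h hh le_rfl, ← hanc, ← hs']
        exact e
      · have ea : a = 2 * k - (s + 1) := by omega
        rw [ea, c3 (s + 1) (by omega) (by omega)]
        exact e
  · rw [c1 0 (by omega)]
    have e := hB.adj_iterate (u := g 0) (by omega) 0 (by omega)
    by_cases hs' : 1 = h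
    · have ea : 2 * k - 1 = 2 * l + h := by omega
      rw [ea, c2 h hh le_rfl, ← hanc, ← hs']
      exact e
    · rw [c3 1 le_rfl (by omega)]
      exact e

/-- If a vertex `y` of a relation is called dominated when at least half of its neighbours share
one ancestor `d` generations up, then the edges at vertices that are not dominated (while all
neighbours of each `y` share the ancestor `d + 1` generations up) are few in a graph without
`2 * k`-cycles. -/
theorem IsBFS.card_undominated_le {V : Type*} {G : SimpleGraph V} {k : ℕ} {lvl : V → ℕ}
    {par : V → V} (hB : IsBFS G k lvl par) (hk : 2 ≤ k)
    (hG : ¬ ContainsCopy (SimpleGraph.cycleGraph (2 * k)) G) {i d : ℕ} (hi : i < k) (hd : d < i)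
    (U Y : Finset V) (E F : Finset (V × V)) (hEU : E ⊆ U ×ˢ Y) (hFE : F ⊆ E)
    (hE : ∀ e ∈ E, G.Adj e.1 e.2 ∧ lvl e.1 = i ∧ i ≤ lvl e.2)
    (hcoh : ∀ e ∈ E, ∀ e' ∈ E, e.2 = e'.2 → par^[d + 1] e.1 = par^[d + 1] e'.1)
    (hF : ∀ e ∈ F, ∀ c, 2 * (E.filter fun e' => e'.2 = e.2 ∧ par^[d] e'.1 = c).card <
      (E.filter fun e' => e'.2 = e.2).card) :
    F.card ≤ 4 * k * (U.card + Y.card) := by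
  by_contra hlt
  push Not at hlt
  obtain ⟨E', hE'F, hne, hdeg⟩ := exists_subrelation_minDegree (4 * k) _ U Y F rfl
    (hFE.trans hEU) hlt
  have hE'E : E' ⊆ E := hE'F.trans hFE
  obtain ⟨l, hl⟩ : ∃ l, l + (d + 1) = k := ⟨k - (d + 1), by omega⟩
  have hl1 : 1 ≤ l := by omega
  obtain ⟨g, hinj, hev, hodd⟩ := exists_alternating_path hne
    (fun e he => (hE e (hE'E he)).1.ne) hdeg (2 * l - 2) (by omega)
  have hlastE' : (g (2 * l - 2), g (2 * l - 1)) ∈ E' := by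
    have := hev (2 * l - 2) le_rfl ⟨l - 1, by omega⟩
    rwa [show 2 * l - 2 + 1 = 2 * l - 1 by omega] at this
  have hdy := (hdeg _ hlastE').2
  simp only at hdy
  have hdyE : (E'.filter fun e' => e'.2 = g (2 * l - 1)).card ≤
      (E.filter fun e' => e'.2 = g (2 * l - 1)).card :=
    Finset.card_le_card (Finset.filter_subset_filter _ hE'E)
  have hdom := hF _ (hE'F hlastE') (par^[d] (g 0))
  simp only at hdom
  -- the last vertex of the path branches off from the first one `d + 1` generations up
  have hsplit : (E.filter fun e' => e'.2 = g (2 * l - 1) ∧ par^[d] e'.1 = par^[d] (g 0)).card +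
      (E.filter fun e' => e'.2 = g (2 * l - 1) ∧ ¬ par^[d] e'.1 = par^[d] (g 0)).card =
      (E.filter fun e' => e'.2 = g (2 * l - 1)).card := by
    rw [← Finset.filter_filter, ← Finset.filter_filter]
    exact Finset.card_filter_add_card_filter_not _
  set Q := E.filter fun e' => e'.2 = g (2 * l - 1) ∧ ¬ par^[d] e'.1 = par^[d] (g 0) with hQ
  have hQi : (Q.image Prod.fst).card = Q.card := by
    apply Finset.card_image_of_injOn
    rintro ⟨a, b⟩ hx ⟨a', b'⟩ hy hxy
    simp [hQ] at hx hy hxy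
    simp [hx.2.1, hy.2.1, hxy]
  have hcard : ((Finset.range (2 * l)).image g).card ≤ 2 * l :=
    Finset.card_image_le.trans (by simp)
  obtain ⟨v, hv, hv'⟩ := Finset.exists_mem_notMem_of_card_lt_card
    (show ((Finset.range (2 * l)).image g).card < (Q.image Prod.fst).card by
      rw [hQi]; omega)
  obtain ⟨⟨v, y⟩, hvQ, rfl⟩ := Finset.mem_image.1 hv
  simp only [hQ, Finset.mem_filter] at hvQ
  obtain ⟨hvE, hy, hvne⟩ := hvQ
  subst hy
  simp only at hv'
  have hcohg : ∀ a, 2 * a ≤ 2 * l - 2 → par^[d + 1] (g (2 * a)) = par^[d + 1] (g 0) := by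
    intro a
    induction a with
    | zero => simp
    | succ a ih =>
      intro ha
      rw [← ih (by omega)]
      have e1 := hE'E (hev (2 * a) (by omega) ⟨a, by omega⟩)
      have e2 := hE'E (hodd (2 * a + 1) (by omega) (by
        rw [Nat.not_even_iff_odd]; exact ⟨a, rfl⟩))
      exact hcoh _ e2 _ e1 rfl
  have hvcoh : par^[d + 1] v = par^[d + 1] (g 0) := by
    rw [← hcohg (l - 1) (by omega)]
    rw [show 2 * (l - 1) = 2 * l - 2 by omega]
    exact hcoh _ hvE _ (hE'E hlastE') rfl
  apply hG
  have g1 : ∀ a, a < 2 * l → (if a < 2 * l then g a else v) = g a := by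
    intro a ha; simp [ha]
  have g2 : (if 2 * l < 2 * l then g (2 * l) else v) = v := by simp
  have hpos : 0 < 2 * l := by omega
  have hg0 : (g 0, g 1) ∈ E := hE'E (hev 0 (by omega) (by simp))
  refine hB.containsCopy_cycle hk hi.le (h := d + 1) (l := l) (by omega) (by omega) hl1 hl
    (fun a => if a < 2 * l then g a else v) ?_ ?_ ?_ ?_ ?_ ?_ ?_
  · intro a b hab hb
    rw [g1 a (by omega)]
    by_cases hb' : b < 2 * l
    · rw [g1 b hb']
      exact hinj a b hab (by omega)
    · have : b = 2 * l := by omega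
      subst this
      rw [g2]
      rintro rfl
      exact hv' (Finset.mem_image.2 ⟨a, Finset.mem_range.2 hab, rfl⟩)
  · intro a ha
    rw [g1 a ha]
    by_cases ha' : a + 1 < 2 * l
    · rw [g1 _ ha']
      by_cases hp : Even a
      · exact (hE _ (hE'E (hev a (by omega) hp))).1
      · exact (hE _ (hE'E (hodd a (by omega) hp))).1.symm
    · have : a + 1 = 2 * l := by omega
      rw [this, g2]
      have ha2 : a = 2 * l - 1 := by omega
      rw [ha2]
      exact (hE _ hvE).1.symm
  · intro a ha
    by_cases ha' : a < 2 * l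
    · rw [g1 a ha']
      by_cases hlst : a = 2 * l - 1
      · subst hlst
        exact (hE _ hvE).2.2
      by_cases hp : Even a
      · exact (hE _ (hE'E (hev a (by omega) hp))).2.1.ge
      · exact (hE _ (hE'E (hodd a (by omega) hp))).2.2
    · have : a = 2 * l := by omega
      subst this
      rw [g2]
      exact (hE _ hvE).2.1.ge
  · simpa [hpos] using (hE _ hg0).2.1
  · simpa using (hE _ hvE).2.1
  · simpa [hpos] using hvcoh.symm
  · simpa [hpos] using fun h => hvne h.symm

/-- Bound on the edges from level `i` to the levels `≥ i`. If the neighbours of each vertex share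
their ancestor `d` generations up, this follows by induction on `d`: at most `4 k` edges per vertex
are lost at the undominated vertices, and keeping at each dominated vertex only the edges to
neighbours under its dominating ancestor costs a factor two. For `d = i` the common ancestor is the
root, so the hypothesis is automatic. -/
theorem IsBFS.card_edges_le {V : Type*} {G : SimpleGraph V} {k : ℕ} {lvl : V → ℕ}
    {par : V → V} (hB : IsBFS G k lvl par) (hk : 2 ≤ k)
    (hG : ¬ ContainsCopy (SimpleGraph.cycleGraph (2 * k)) G) {i : ℕ} (hi : i < k)
    (U Y : Finset V) :
    ∀ d, d ≤ i → ∀ E : Finset (V × V), E ⊆ U ×ˢ Y →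
      (∀ e ∈ E, G.Adj e.1 e.2 ∧ lvl e.1 = i ∧ i ≤ lvl e.2) →
      (∀ e ∈ E, ∀ e' ∈ E, e.2 = e'.2 → par^[d] e.1 = par^[d] e'.1) →
      E.card + 4 * k * (U.card + Y.card) ≤ 2 ^ d * ((4 * k + 1) * (U.card + Y.card)) := by
  intro d
  induction d with
  | zero =>
    intro _ E hEU hE hcoh
    have : E.card ≤ Y.card := by
      apply Finset.card_le_card_of_injOn Prod.snd
      · intro e he
        exact (Finset.mem_product.1 (hEU he)).2
      · intro e he e' he' h
        exact Prod.ext (hcoh e he e' he' h) h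
    nlinarith
  | succ d ih =>
    intro hd E hEU hE hcoh
    -- `F`: edges at vertices without a dominating ancestor `d` generations up
    set P : V → Prop := fun y => ∀ c, 2 * (E.filter fun e' => e'.2 = y ∧ par^[d] e'.1 = c).card <
      (E.filter fun e' => e'.2 = y).card with hP
    have hF := hB.card_undominated_le hk hG hi (d := d) (by omega) U Y E (E.filter fun e => P e.2)
      hEU (Finset.filter_subset _ _) hE hcoh (fun e he => (Finset.mem_filter.1 he).2)
    have hch : ∀ y, ∃ c, ¬ P y → (E.filter fun e' => e'.2 = y).card ≤
        2 * (E.filter fun e' => e'.2 = y ∧ par^[d] e'.1 = c).card := by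
      intro y
      by_cases h : P y
      · exact ⟨y, fun h' => absurd h h'⟩
      · have h' := h
        simp only [hP] at h'
        push Not at h'
        obtain ⟨c, hc⟩ := h'
        exact ⟨c, fun _ => hc⟩
    choose c hc using hch
    set E₁ := E.filter fun e => ¬ P e.2 ∧ par^[d] e.1 = c e.2 with hE₁
    have hI : (E.filter fun e => ¬ P e.2).card ≤ 2 * E₁.card := by
      rw [Finset.card_eq_sum_card_fiberwise (f := Prod.snd) (t := Y) (s := E.filter fun e => ¬ P e.2)
        (fun e he => (Finset.mem_product.1 (hEU (Finset.mem_filter.1 he).1)).2),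
        Finset.card_eq_sum_card_fiberwise (f := Prod.snd) (t := Y) (s := E₁)
        (fun e he => (Finset.mem_product.1 (hEU (Finset.mem_filter.1 he).1)).2), Finset.mul_sum]
      refine Finset.sum_le_sum fun y _ => ?_
      by_cases hy : P y
      · have : ((E.filter fun e => ¬ P e.2).filter fun e => e.2 = y) = ∅ := by
          ext e
          simp only [Finset.mem_filter, Finset.notMem_empty, iff_false]
          rintro ⟨⟨_, h1⟩, rfl⟩
          exact h1 hy
        rw [this]
        simp
      · have e1 : ((E.filter fun e => ¬ P e.2).filter fun e => e.2 = y) =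
            E.filter fun e => e.2 = y := by
          ext e
          simp only [Finset.mem_filter]
          constructor
          · rintro ⟨⟨h1, _⟩, h2⟩; exact ⟨h1, h2⟩
          · rintro ⟨h1, rfl⟩; exact ⟨⟨h1, hy⟩, rfl⟩
        have e2 : (E₁.filter fun e => e.2 = y) =
            E.filter fun e => e.2 = y ∧ par^[d] e.1 = c y := by
          ext e
          simp only [hE₁, Finset.mem_filter]
          constructor
          · rintro ⟨⟨h1, _, h3⟩, rfl⟩; exact ⟨h1, rfl, h3⟩
          · rintro ⟨h1, rfl, h3⟩; exact ⟨⟨h1, hy, h3⟩, rfl⟩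
        rw [e1, e2]
        exact hc y hy
    have hsplit := Finset.card_filter_add_card_filter_not (s := E) (fun e => P e.2)
    have hE₁sub : E₁ ⊆ E := Finset.filter_subset _ _
    have hrec := ih (by omega) E₁ (hE₁sub.trans hEU) (fun e he => hE e (hE₁sub he)) (by
      intro e he e' he' h
      rw [(Finset.mem_filter.1 he).2.2, (Finset.mem_filter.1 he').2.2, h])
    rw [pow_succ]
    nlinarith

theorem exists_isBFS {V : Type*} (G : SimpleGraph V) (x : V) (k : ℕ) :
    ∃ (lvl : V → ℕ) (par : V → V), IsBFS G k lvl par ∧ ∀ v, lvl v = 0 ↔ v = x := by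
  set lvl : V → ℕ := fun v => if G.Reachable x v then G.dist x v else k + 1 with hlvl
  have hstep : ∀ u v, G.Adj u v → lvl v ≤ lvl u + 1 := by
    intro u v huv
    by_cases hu : G.Reachable x u
    · have hv := hu.trans huv.reachable
      obtain ⟨w, hw⟩ := hu.exists_walk_length_eq_dist
      have := SimpleGraph.dist_le (w.concat huv)
      simp only [hlvl, hu, hv, if_true]
      rw [SimpleGraph.Walk.length_concat] at this
      omega
    · have hv : ¬ G.Reachable x v := fun h => hu (h.trans huv.symm.reachable)
      simp only [hlvl, hu, hv, if_false]
      omega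
  have hpar : ∀ v, ∃ u, 0 < lvl v → lvl v ≤ k → G.Adj u v ∧ lvl u + 1 = lvl v := by
    intro v
    by_cases h : 0 < lvl v ∧ lvl v ≤ k
    · have hv : G.Reachable x v := by
        by_contra hv
        have : lvl v = k + 1 := by simp only [hlvl, hv, if_false]
        omega
      obtain ⟨w, hw⟩ := hv.symm.exists_walk_length_eq_dist
      have hlv : lvl v = w.length := by
        simp only [hlvl, hv, if_true]
        rw [hw, SimpleGraph.dist_comm]
      cases w with
      | nil => simp at hlv; omega
      | cons huv w' =>
        rename_i u
        refine ⟨u, fun _ _ => ⟨huv.symm, ?_⟩⟩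
        have h1 := hstep u v huv.symm
        have hu : G.Reachable x u := w'.reachable.symm
        have h2 : lvl u ≤ w'.length := by
          simp only [hlvl, hu, if_true]
          rw [SimpleGraph.dist_comm]
          exact SimpleGraph.dist_le w'
        rw [SimpleGraph.Walk.length_cons] at hlv
        omega
    · exact ⟨v, fun h1 h2 => absurd ⟨h1, h2⟩ h⟩
  choose par hpar using hpar
  refine ⟨lvl, par, ⟨fun v h1 h2 => (hpar v h1 h2).1, fun v h1 h2 => (hpar v h1 h2).2, hstep⟩, ?_⟩
  intro v
  by_cases hv : G.Reachable x v
  · simp only [hlvl, hv, if_true]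
    rw [hv.dist_eq_zero_iff, eq_comm]
  · simp only [hlvl, hv, if_false]
    constructor
    · intro h; omega
    · rintro rfl
      exact absurd (SimpleGraph.Reachable.refl _) hv

/-- The Bondy–Simonovits bound in minimum degree form: the levels of a breadth-first search
grow by a factor `r` for `k` steps. -/
theorem pow_le_card_of_minDegree {V : Type*} [Fintype V] [Nonempty V] (G : SimpleGraph V)
    {k r : ℕ} (hk : 2 ≤ k) (hr : 2 ≤ r)
    (hG : ¬ ContainsCopy (SimpleGraph.cycleGraph (2 * k)) G)
    (hdeg : ∀ v, 4 * (2 ^ k * (4 * k + 1)) * r ≤ (Finset.univ.filter fun u => G.Adj v u).card) :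
    r ^ k ≤ Fintype.card V := by
  obtain ⟨x⟩ := ‹Nonempty V›
  obtain ⟨lvl, par, hB, hx⟩ := exists_isBFS G x k
  set K := 2 ^ k * (4 * k + 1) with hK
  have hKpos : 1 ≤ K := Nat.one_le_iff_ne_zero.2 (by positivity)
  set A : ℕ → Finset V := fun i => Finset.univ.filter fun v => lvl v = i with hA
  set E : ℕ → Finset (V × V) := fun i => Finset.univ.filter fun e : V × V =>
    G.Adj e.1 e.2 ∧ lvl e.1 = i ∧ i ≤ lvl e.2 with hE
  have memA : ∀ i v, v ∈ A i ↔ lvl v = i := by simp [hA]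
  have memE : ∀ i (e : V × V), e ∈ E i ↔ G.Adj e.1 e.2 ∧ lvl e.1 = i ∧ i ≤ lvl e.2 := by
    simp [hE]
  have hEb : ∀ i, i < k → (E i).card ≤ K * (2 * (A i).card + (A (i + 1)).card) := by
    intro i hi
    have h := hB.card_edges_le hk hG hi (A i) (A i ∪ A (i + 1)) i le_rfl (E i) (by
        intro e he
        rw [memE] at he
        have := hB.lvl_adj _ _ he.1
        rw [Finset.mem_product, Finset.mem_union, memA, memA, memA]
        omega) (fun e he => (memE _ _).1 he) (by
        intro e he e' he' _
        have h1 := ((memE _ _).1 he).2.1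
        have h2 := ((memE _ _).1 he').2.1
        have h3 := hB.lvl_iterate (u := e.1) (by omega) i (by omega)
        have h4 := hB.lvl_iterate (u := e'.1) (by omega) i (by omega)
        rw [(hx _).1 (show lvl (par^[i] e.1) = 0 by omega),
          (hx _).1 (show lvl (par^[i] e'.1) = 0 by omega)])
    have hu := Finset.card_union_le (A i) (A (i + 1))
    have h2 : 2 ^ i * ((4 * k + 1) * ((A i).card + (A i ∪ A (i + 1)).card)) ≤
        K * (2 * (A i).card + (A (i + 1)).card) := by
      rw [hK, mul_assoc]
      exact Nat.mul_le_mul (Nat.pow_le_pow_right (by norm_num) hi.le)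
        (Nat.mul_le_mul le_rfl (by omega))
    omega
  have hA0 : A 0 = {x} := by
    ext v; rw [memA, hx]; simp
  have hA1 : r ≤ (A 1).card := by
    have : (Finset.univ.filter fun u => G.Adj x u) ⊆ A 1 := by
      intro u hu
      have hu := (Finset.mem_filter.1 hu).2
      have h1 := hB.lvl_adj _ _ hu
      have h2 : lvl x = 0 := (hx x).2 rfl
      have h3 : lvl u ≠ 0 := fun h => hu.ne ((hx u).1 h).symm
      rw [memA]; omega
    have h1 := Finset.card_le_card this
    have h2 := hdeg x
    nlinarith
  have hstep : ∀ i, i + 1 < k → (A i).card ≤ (A (i + 1)).card →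
      r * (A (i + 1)).card ≤ (A (i + 2)).card := by
    intro i hi hle
    have hsum : 4 * K * r * (A (i + 1)).card ≤ (E (i + 1)).card + (E i).card := by
      have e1 : ∑ v ∈ A (i + 1), (Finset.univ.filter fun u => G.Adj v u).card ≥
          4 * K * r * (A (i + 1)).card := by
        rw [mul_comm, ← smul_eq_mul]
        exact Finset.card_nsmul_le_sum _ _ _ fun v _ => hdeg v
      refine e1.le.trans ?_
      rw [← Finset.card_sigma]
      have e2 : (E (i + 1)).card + (E i).card = ((E (i + 1)).disjSum (E i)).card := by
        rw [Finset.card_disjSum]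
      rw [e2]
      refine Finset.card_le_card_of_injOn
        (fun p => if i + 1 ≤ lvl p.2 then Sum.inl (p.1, p.2) else Sum.inr (p.2, p.1)) ?_ ?_
      · rintro ⟨v, u⟩ hp
        simp only [Finset.coe_sigma, Set.mem_sigma_iff, Finset.mem_coe, memA, Finset.mem_filter,
          Finset.mem_univ, true_and] at hp
        obtain ⟨hv, huv⟩ := hp
        by_cases h : i + 1 ≤ lvl u
        · simp only [h, if_true]
          exact Finset.inl_mem_disjSum.2 ((memE _ _).2 ⟨huv, hv, h⟩)
        · simp only [h, if_false]
          have := hB.lvl_adj _ _ huv.symm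
          exact Finset.inr_mem_disjSum.2 ((memE _ _).2 ⟨huv.symm, by simp only; omega, by
            simp only; omega⟩)
      · rintro ⟨v, u⟩ _ ⟨v', u'⟩ _ heq
        simp only at heq
        split_ifs at heq <;> simp at heq <;> simp [heq]
    have b1 := hEb i (by omega)
    have b2 := hEb (i + 1) hi
    have : K * (4 * r * (A (i + 1)).card) ≤
        K * (5 * (A (i + 1)).card + (A (i + 2)).card) := by nlinarith
    have := Nat.le_of_mul_le_mul_left this (by omega)
    nlinarith
  have hgrow : ∀ i, i + 1 ≤ k → (A i).card ≤ (A (i + 1)).card ∧ r ^ (i + 1) ≤ (A (i + 1)).card := by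
    intro i
    induction i with
    | zero =>
      intro _
      rw [hA0, Finset.card_singleton, zero_add, pow_one]
      exact ⟨by omega, hA1⟩
    | succ i ih =>
      intro hi
      obtain ⟨h1, h2⟩ := ih (by omega)
      have h3 := hstep i (by omega) h1
      refine ⟨by nlinarith, ?_⟩
      rw [pow_succ, mul_comm]
      exact (Nat.mul_le_mul le_rfl h2).trans h3
  have := (hgrow (k - 1) (by omega)).2
  rw [show k - 1 + 1 = k by omega] at this
  exact this.trans (Finset.card_le_univ _)

/-- The number of neighbours of `v` inside `S`. -/
noncomputable def degIn {V : Type*} (G : SimpleGraph V) (S : Finset V) (v : V) : ℕ :=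
  (S.filter fun u => G.Adj v u).card

theorem degIn_mono {V : Type*} (G : SimpleGraph V) {S T : Finset V} (h : S ⊆ T) (v : V) :
    degIn G S v ≤ degIn G T v :=
  Finset.card_le_card (Finset.filter_subset_filter _ h)

theorem ContainsCopy.mono_induce {V α : Type*} {F : SimpleGraph α} {G : SimpleGraph V}
    {S T : Set V} (h : S ⊆ T) (hc : ContainsCopy F (G.induce S)) :
    ContainsCopy F (G.induce T) := by
  obtain ⟨f, hf, hadj⟩ := hc
  refine ⟨fun a => ⟨f a, h (f a).2⟩, ?_, fun a b hab => hadj hab⟩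
  intro a b hab
  exact hf (Subtype.ext (Subtype.mk.inj hab))

/-- A small set without `2 * k`-cycles contains a vertex of small degree. -/
theorem exists_degIn_lt {V : Type*} (G : SimpleGraph V) (S : Finset V) (hS : S.Nonempty)
    {k r : ℕ} (hk : 2 ≤ k) (hr : 2 ≤ r) (hcard : S.card < r ^ k)
    (hG : ¬ ContainsCopy (SimpleGraph.cycleGraph (2 * k)) (G.induce (S : Set V))) :
    ∃ v ∈ S, degIn G S v < 4 * (2 ^ k * (4 * k + 1)) * r := by
  by_contra hcon
  push Not at hcon
  have : Nonempty (S : Set V) := hS.to_subtype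
  have h := pow_le_card_of_minDegree (G.induce (S : Set V)) hk hr hG (by
    rintro ⟨v, hv⟩
    refine (hcon v hv).trans ?_
    refine Finset.card_le_card_of_surjOn Subtype.val ?_
    intro u hu
    have hu := Finset.mem_filter.1 hu
    exact ⟨⟨u, hu.1⟩, by simpa using hu.2, rfl⟩)
  have hc : Fintype.card (S : Set V) = S.card := by simp
  omega

/-- A set without `2 * k`-cycles contains a subset of half its size of bounded maximum degree. -/
theorem exists_subset_degIn_le {V : Type*} (G : SimpleGraph V) {k r s : ℕ} (hk : 2 ≤ k)
    (hr : 2 ≤ r) (hcard : 2 * s < r ^ k) (S : Finset V) (hS : S.card = 2 * s)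
    (hG : ¬ ContainsCopy (SimpleGraph.cycleGraph (2 * k)) (G.induce (S : Set V))) :
    ∃ T ⊆ S, T.card = s ∧
      ∀ v ∈ T, degIn G T v ≤ 4 * (4 * (2 ^ k * (4 * k + 1)) * r) := by
  set D := 4 * (2 ^ k * (4 * k + 1)) * r with hD
  have hsum : ∀ m, ∀ T ⊆ S, T.card = m → ∑ v ∈ T, degIn G T v ≤ 2 * D * T.card := by
    intro m
    induction m with
    | zero =>
      intro T _ hT
      rw [Finset.card_eq_zero] at hT
      subst hT
      simp
    | succ m ih =>
      intro T hTS hT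
      have hTne : T.Nonempty := Finset.card_pos.1 (by omega)
      obtain ⟨v, hv, hvd⟩ := exists_degIn_lt G T hTne hk hr
        ((Finset.card_le_card hTS).trans_lt (by omega))
        (fun hc => hG (hc.mono_induce (by exact_mod_cast hTS)))
      have hrec := ih (T.erase v) ((Finset.erase_subset _ _).trans hTS) (by
        rw [Finset.card_erase_of_mem hv]; omega)
      rw [← Finset.add_sum_erase _ _ hv]
      have hb : ∀ u ∈ T.erase v, degIn G T u = degIn G (T.erase v) u +
          if G.Adj v u then 1 else 0 := by
        intro u _
        unfold degIn
        rw [← Finset.insert_erase hv, Finset.erase_insert (by simp), Finset.filter_insert]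
        by_cases h : G.Adj v u
        · rw [if_pos h.symm, if_pos h, Finset.card_insert_of_notMem (by simp)]
        · rw [if_neg (fun h' => h h'.symm), if_neg h, add_zero]
      rw [Finset.sum_congr rfl hb, Finset.sum_add_distrib, ← Finset.card_filter]
      have h1 : ((T.erase v).filter fun u => G.Adj v u).card ≤ degIn G T v :=
        degIn_mono G (Finset.erase_subset _ _) v
      have h2 := Finset.card_erase_add_one hv
      nlinarith
  have h1 := hsum _ S subset_rfl rfl
  set T := S.filter fun v => degIn G S v ≤ 4 * D with hT
  have hTcard : s ≤ T.card := by
    by_contra hlt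
    push Not at hlt
    have hsplit := Finset.card_filter_add_card_filter_not (s := S) (fun v => degIn G S v ≤ 4 * D)
    have h2 : (S.filter fun v => ¬ degIn G S v ≤ 4 * D).card * (4 * D + 1) ≤
        ∑ v ∈ S, degIn G S v := by
      refine le_trans ?_ (Finset.sum_le_sum_of_subset (Finset.filter_subset
        (fun v => ¬ degIn G S v ≤ 4 * D) S))
      rw [← smul_eq_mul]
      exact Finset.card_nsmul_le_sum _ _ _ fun v hv => by
        have := (Finset.mem_filter.1 hv).2
        omega
    rw [← hT] at hsplit
    have : s + 1 ≤ (S.filter fun v => ¬ degIn G S v ≤ 4 * D).card := by omega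
    rw [hS] at h1
    nlinarith
  obtain ⟨T', hT'T, hT'⟩ := Finset.exists_subset_card_eq hTcard
  refine ⟨T', hT'T.trans (Finset.filter_subset _ _), hT', fun v hv => ?_⟩
  exact (degIn_mono G (hT'T.trans (Finset.filter_subset _ _)) v).trans
    (Finset.mem_filter.1 (hT'T hv)).2

end EvenCycles

/-! ### Counting sets of small maximum degree -/

section Containers

open scoped Classical

/-- Weighted count of the sets of maximum degree at most `D` inside a graph all of whose subsets
of size at least `m` contain a vertex of relative degree at least `1 / b`. Here `w v` records the
number of neighbours of `v` already selected, and the total remaining budget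
`∑ v ∈ A, (D + 1 - w v)` shrinks by a constant factor with each selected vertex. -/
theorem sum_pow_card_lowDegree_le {V : Type*} (G : SimpleGraph V) (m b D : ℕ) (hb : 1 ≤ b)
    (hdens : ∀ X : Finset V, m ≤ X.card → ∃ v ∈ X, X.card ≤ b * degIn G X v)
    (x : ℝ) (hx0 : 0 ≤ x) (hx1 : x ≤ 1) (a : ℕ) :
    ∀ (j : ℕ) (A : Finset V) (w : V → ℕ), A.card = a → (∀ v ∈ A, w v ≤ D) →
      ((∑ v ∈ A, (D + 1 - w v) : ℕ) : ℝ) * (1 - 1 / (b * (D + 1))) ^ j < m →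
      ∑ S ∈ A.powerset.filter (fun S => ∀ v ∈ S, degIn G S v + w v ≤ D), x ^ S.card ≤
        (1 + x) ^ m * (1 + a : ℝ) ^ j := by
  induction a using Nat.strong_induction_on with
  | _ a ih =>
  intro j A w hA hw hΦ
  have ha0 : (0 : ℝ) ≤ a := by positivity
  have hxm : (0 : ℝ) ≤ (1 + x) ^ m := by positivity
  -- fewer than `m` vertices are left: all their subsets are counted
  by_cases hsmall : A.card < m
  · have h1 : ∑ S ∈ A.powerset.filter (fun S => ∀ v ∈ S, degIn G S v + w v ≤ D), x ^ S.card ≤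
        ∑ S ∈ A.powerset, x ^ S.card :=
      Finset.sum_le_sum_of_subset_of_nonneg (Finset.filter_subset _ _)
        (fun _ _ _ => by positivity)
    have h2 := Finset.sum_pow_mul_eq_add_pow x 1 A
    simp only [one_pow, mul_one] at h2
    rw [h2, add_comm] at h1
    refine h1.trans ((pow_le_pow_right₀ (by linarith) hsmall.le).trans ?_)
    exact le_mul_of_one_le_right hxm (one_le_pow₀ (by linarith))
  push Not at hsmall
  have hΦA : A.card ≤ ∑ v ∈ A, (D + 1 - w v) := by
    rw [Finset.card_eq_sum_ones]
    refine Finset.sum_le_sum fun v hv => ?_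
    have := hw v hv
    omega
  have hΦD : ∑ v ∈ A, (D + 1 - w v) ≤ A.card * (D + 1) := by
    rw [← smul_eq_mul]
    exact Finset.sum_le_card_nsmul _ _ _ fun v _ => Nat.sub_le _ _
  cases j with
  | zero =>
    rw [pow_zero, mul_one] at hΦ
    have : (∑ v ∈ A, (D + 1 - w v)) < m := by exact_mod_cast hΦ
    omega
  | succ j =>
  obtain ⟨v, hv, hvd⟩ := hdens A hsmall
  have hcardv := Finset.card_erase_add_one hv
  have hb' : (0 : ℝ) < b * (D + 1) := by
    have : (1 : ℝ) ≤ b := by exact_mod_cast hb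
    positivity
  have hρ0 : (0 : ℝ) ≤ 1 - 1 / (b * (D + 1)) := by
    rw [sub_nonneg, div_le_one hb']
    have : (1 : ℝ) ≤ b := by exact_mod_cast hb
    nlinarith
  -- the sets avoiding `v`
  have h1 := ih (A.erase v).card (by omega) (j + 1) (A.erase v) w rfl
    (fun u hu => hw u (Finset.mem_of_mem_erase hu)) (by
      refine lt_of_le_of_lt ?_ hΦ
      refine mul_le_mul_of_nonneg_right ?_ (pow_nonneg hρ0 _)
      exact_mod_cast Finset.sum_le_sum_of_subset (Finset.erase_subset v A))
  -- the sets containing `v`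
  set w' : V → ℕ := fun u => w u + if G.Adj v u then 1 else 0 with hw'
  set A' := (A.erase v).filter fun u => w' u ≤ D with hA'
  have hA'card : A'.card ≤ (A.erase v).card := Finset.card_filter_le _ _
  have hΦ' : (∑ u ∈ A', (D + 1 - w' u)) + degIn G A v ≤ ∑ u ∈ A, (D + 1 - w u) := by
    have e1 : ∑ u ∈ A', (D + 1 - w' u) ≤ ∑ u ∈ A.erase v, (D + 1 - w' u) :=
      Finset.sum_le_sum_of_subset (Finset.filter_subset _ _)
    have e2 : degIn G A v = ∑ u ∈ A.erase v, if G.Adj v u then 1 else 0 := by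
      rw [← Finset.card_filter]
      unfold degIn
      congr 1
      ext u
      simp only [Finset.mem_filter, Finset.mem_erase]
      exact ⟨fun h => ⟨⟨h.2.ne', h.1⟩, h.2⟩, fun h => ⟨h.1.2, h.2⟩⟩
    rw [e2]
    refine (Nat.add_le_add_right e1 _).trans ?_
    rw [← Finset.sum_add_distrib]
    refine le_trans (Finset.sum_le_sum fun u hu => ?_)
      (Finset.sum_le_sum_of_subset (Finset.erase_subset v A))
    have := hw u (Finset.mem_of_mem_erase hu)
    simp only [hw']
    split_ifs <;> omega
  have hΦ'' : ((∑ u ∈ A', (D + 1 - w' u) : ℕ) : ℝ) ≤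
      ((∑ u ∈ A, (D + 1 - w u) : ℕ) : ℝ) * (1 - 1 / (b * (D + 1))) := by
    have e1 : ((∑ u ∈ A', (D + 1 - w' u) : ℕ) : ℝ) + degIn G A v ≤
      ((∑ u ∈ A, (D + 1 - w u) : ℕ) : ℝ) := by exact_mod_cast hΦ'
    have e2 : ((∑ u ∈ A, (D + 1 - w u) : ℕ) : ℝ) ≤ b * degIn G A v * (D + 1) := by
      exact_mod_cast hΦD.trans (Nat.mul_le_mul_right _ hvd)
    have e3 : ((∑ u ∈ A, (D + 1 - w u) : ℕ) : ℝ) * (1 / (b * (D + 1))) ≤ degIn G A v := by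
      rw [mul_one_div, div_le_iff₀ hb']
      linarith
    linarith
  have h2 := ih A'.card (by omega) j A' w' rfl (fun u hu => (Finset.mem_filter.1 hu).2) (by
      refine lt_of_le_of_lt ?_ hΦ
      rw [pow_succ', ← mul_assoc]
      exact mul_le_mul_of_nonneg_right hΦ'' (pow_nonneg hρ0 _))
  rw [← Finset.sum_filter_add_sum_filter_not _ (fun S => v ∉ S)]
  have g1 : ∑ S ∈ (A.powerset.filter (fun S => ∀ v ∈ S, degIn G S v + w v ≤ D)).filter
      (fun S => v ∉ S), x ^ S.card ≤ (1 + x) ^ m * (1 + ((A.erase v).card : ℝ)) ^ (j + 1) := by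
    refine le_trans (Finset.sum_le_sum_of_subset_of_nonneg ?_ (fun _ _ _ => by positivity)) h1
    intro S hS
    simp only [Finset.mem_filter, Finset.mem_powerset] at hS ⊢
    exact ⟨Finset.subset_erase.2 ⟨hS.1.1, hS.2⟩, hS.1.2⟩
  have g2 : ∑ S ∈ (A.powerset.filter (fun S => ∀ v ∈ S, degIn G S v + w v ≤ D)).filter
      (fun S => ¬ v ∉ S), x ^ S.card ≤ x * ((1 + x) ^ m * (1 + (A'.card : ℝ)) ^ j) := by
    set B := (A.powerset.filter (fun S => ∀ v ∈ S, degIn G S v + w v ≤ D)).filter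
      (fun S => ¬ v ∉ S) with hB
    have hvB : ∀ S ∈ B, v ∈ S := fun S hS => not_not.1 (Finset.mem_filter.1 hS).2
    have e1 : ∑ S ∈ B, x ^ S.card = x * ∑ T ∈ B.image (fun S => S.erase v), x ^ T.card := by
      rw [Finset.sum_image, Finset.mul_sum]
      · refine Finset.sum_congr rfl fun S hS => ?_
        rw [← pow_succ', Finset.card_erase_add_one (hvB S hS)]
      · intro S hS S' hS' h
        simp only at h
        rw [← Finset.insert_erase (hvB S hS), ← Finset.insert_erase (hvB S' hS'), h]
    rw [e1]
    refine mul_le_mul_of_nonneg_left ?_ hx0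
    refine le_trans (Finset.sum_le_sum_of_subset_of_nonneg ?_ (fun _ _ _ => by positivity)) h2
    intro T hT
    obtain ⟨S, hS, rfl⟩ := Finset.mem_image.1 hT
    have hvS := hvB S hS
    simp only [hB, Finset.mem_filter, Finset.mem_powerset] at hS
    have hdegS : ∀ u ∈ S.erase v, degIn G (S.erase v) u + w' u ≤ D := by
      intro u hu
      have h := hS.1.2 u (Finset.mem_of_mem_erase hu)
      have : degIn G S u = degIn G (S.erase v) u + if G.Adj v u then 1 else 0 := by
        unfold degIn
        conv_lhs => rw [← Finset.insert_erase hvS]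
        rw [Finset.filter_insert]
        by_cases h : G.Adj v u
        · rw [if_pos h.symm, if_pos h, Finset.card_insert_of_notMem (by simp)]
        · rw [if_neg (fun h' => h h'.symm), if_neg h, add_zero]
      simp only [hw']
      omega
    simp only [Finset.mem_filter, Finset.mem_powerset]
    refine ⟨?_, hdegS⟩
    intro u hu
    refine Finset.mem_filter.2 ⟨Finset.erase_subset_erase _ hS.1.1 hu, ?_⟩
    have := hdegS u hu
    omega
  have hae : ((A.erase v).card : ℝ) + 1 = a := by
    rw [← hA]; exact_mod_cast hcardv
  have hA'a : (1 + (A'.card : ℝ)) ^ j ≤ (a : ℝ) ^ j := by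
    refine pow_le_pow_left₀ (by positivity) ?_ _
    have : (A'.card : ℝ) ≤ (A.erase v).card := by exact_mod_cast hA'card
    linarith
  have hfin : (a : ℝ) ^ (j + 1) + x * (a : ℝ) ^ j ≤ (1 + a) ^ (j + 1) := by
    rw [pow_succ, pow_succ]
    have e1 : (a : ℝ) ^ j ≤ (1 + a) ^ j := pow_le_pow_left₀ ha0 (by linarith) _
    have e2 : (0 : ℝ) ≤ (a : ℝ) ^ j := by positivity
    nlinarith
  calc _ ≤ (1 + x) ^ m * (1 + ((A.erase v).card : ℝ)) ^ (j + 1) +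
        x * ((1 + x) ^ m * (1 + (A'.card : ℝ)) ^ j) := add_le_add g1 g2
    _ ≤ (1 + x) ^ m * (a : ℝ) ^ (j + 1) + x * ((1 + x) ^ m * (a : ℝ) ^ j) := by
        rw [add_comm 1 ((A.erase v).card : ℝ), hae]
        gcongr
    _ = (1 + x) ^ m * ((a : ℝ) ^ (j + 1) + x * (a : ℝ) ^ j) := by ring
    _ ≤ _ := mul_le_mul_of_nonneg_left hfin hxm

/-- The sets of size `s` and maximum degree at most `D`. -/
noncomputable def lowDegreeSets {V : Type*} [Fintype V] (G : SimpleGraph V) (D s : ℕ) :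
    Finset (Finset V) :=
  Finset.univ.filter fun S => S.card = s ∧ ∀ v ∈ S, degIn G S v ≤ D

/-- The number of `s`-sets of maximum degree at most `D` in a locally dense graph, extracted from the
weighted count by keeping only the terms `x ^ s`. -/
theorem card_lowDegreeSets_mul_le {V : Type*} [Fintype V] (G : SimpleGraph V) (m b D s j : ℕ)
    (hb : 1 ≤ b) (hdens : ∀ X : Finset V, m ≤ X.card → ∃ v ∈ X, X.card ≤ b * degIn G X v)
    (x : ℝ) (hx0 : 0 ≤ x) (hx1 : x ≤ 1)
    (hj : (Fintype.card V : ℝ) * (D + 1) * (1 - 1 / (b * (D + 1))) ^ j < m) :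
    ((lowDegreeSets G D s).card : ℝ) * x ^ s ≤
      (1 + x) ^ m * (1 + Fintype.card V : ℝ) ^ j := by
  have h := sum_pow_card_lowDegree_le G m b D hb hdens x hx0 hx1 (Fintype.card V) j
    Finset.univ (fun _ => 0) (by simp) (by simp) (by
      refine lt_of_eq_of_lt ?_ hj
      simp)
  refine le_trans ?_ h
  have e1 : ((lowDegreeSets G D s).card : ℝ) * x ^ s =
      ∑ S ∈ lowDegreeSets G D s, x ^ S.card := by
    rw [Finset.sum_congr rfl (g := fun _ => x ^ s), Finset.sum_const, nsmul_eq_mul]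
    intro S hS
    rw [(Finset.mem_filter.1 hS).2.1]
  rw [e1]
  refine Finset.sum_le_sum_of_subset_of_nonneg ?_ (fun _ _ _ => by positivity)
  intro S hS
  simpa using (Finset.mem_filter.1 hS).2.2

/-- A fixed `s`-set lies in a uniformly random `n`-subset of an `N`-set with probability at most
`(n / N) ^ s`. -/
theorem pow_mul_choose_sub_le {n N : ℕ} (hn : n ≤ N) (s : ℕ) (hs : s ≤ n) :
    N ^ s * (N - s).choose (n - s) ≤ n ^ s * N.choose n := by
  induction s with
  | zero => simp
  | succ s ih =>
    have h := ih (by omega)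
    obtain ⟨c, hc⟩ : ∃ c, n = s + 1 + c := ⟨n - (s + 1), by omega⟩
    obtain ⟨d, hd⟩ : ∃ d, N = s + 1 + d := ⟨N - (s + 1), by omega⟩
    have e1 : N - s = d + 1 := by omega
    have e2 : n - s = c + 1 := by omega
    have e3 : N - (s + 1) = d := by omega
    have e4 : n - (s + 1) = c := by omega
    rw [e1, e2] at h
    rw [e3, e4]
    have h1 := Nat.add_one_mul_choose_eq d c
    have h2 : N * (c + 1) ≤ n * (d + 1) := by
      have : c ≤ d := by omega
      rw [hc, hd]
      nlinarith
    have h3 : N * d.choose c * (c + 1) ≤ n * (d + 1).choose (c + 1) * (c + 1) := by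
      calc N * d.choose c * (c + 1) = N * (c + 1) * d.choose c := by ring
        _ ≤ n * (d + 1) * d.choose c := Nat.mul_le_mul_right _ h2
        _ = n * ((d + 1) * d.choose c) := by ring
        _ = n * (d + 1).choose (c + 1) * (c + 1) := by rw [h1]; ring
    have h4 := Nat.le_of_mul_le_mul_right h3 (by omega)
    calc N ^ (s + 1) * d.choose c = N ^ s * (N * d.choose c) := by ring
      _ ≤ N ^ s * (n * (d + 1).choose (c + 1)) := Nat.mul_le_mul_left _ h4
      _ = n * (N ^ s * (d + 1).choose (c + 1)) := by ring
      _ ≤ n * (n ^ s * N.choose n) := Nat.mul_le_mul_left _ h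
      _ = n ^ (s + 1) * N.choose n := by ring

/-- First moment argument: some set of size `n` contains no member of a sparse family of
`s`-sets. -/
theorem exists_card_eq_avoiding {V : Type*} [Fintype V] (F : Finset (Finset V)) (n s : ℕ)
    (hF : ∀ T ∈ F, T.card = s) (hn : n ≤ Fintype.card V)
    (hcard : F.card * n ^ s < Fintype.card V ^ s) :
    ∃ W : Finset V, W.card = n ∧ ∀ T ∈ F, ¬ T ⊆ W := by
  by_contra hcon
  push Not at hcon
  set N := Fintype.card V with hN
  have hcov : (Finset.powersetCard n (Finset.univ : Finset V)) ⊆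
      F.biUnion fun T => (Finset.powersetCard n (Finset.univ : Finset V)).filter fun W => T ⊆ W := by
    intro W hW
    obtain ⟨T, hT, hTW⟩ := hcon W (Finset.mem_powersetCard.1 hW).2
    exact Finset.mem_biUnion.2 ⟨T, hT, Finset.mem_filter.2 ⟨hW, hTW⟩⟩
  have h1 := (Finset.card_le_card hcov).trans Finset.card_biUnion_le
  rw [Finset.card_powersetCard, Finset.card_univ, ← hN] at h1
  have h2 : ∀ T ∈ F, N ^ s * ((Finset.powersetCard n (Finset.univ : Finset V)).filter
      fun W => T ⊆ W).card ≤ n ^ s * N.choose n := by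
    intro T hT
    have hTs := hF T hT
    by_cases hsn : s ≤ n
    · refine le_trans (Nat.mul_le_mul_left _ ?_) (pow_mul_choose_sub_le hn s hsn)
      have : ((Finset.univ : Finset V) \ T).card = N - s := by
        rw [Finset.card_sdiff_of_subset (Finset.subset_univ _), Finset.card_univ, hTs]
      rw [← this, ← Finset.card_powersetCard]
      refine Finset.card_le_card_of_injOn (fun W => W \ T) ?_ ?_
      · intro W hW
        have hW := Finset.mem_filter.1 hW
        refine Finset.mem_powersetCard.2 ⟨Finset.sdiff_subset_sdiff (Finset.subset_univ _)
          subset_rfl, ?_⟩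
        rw [Finset.card_sdiff_of_subset hW.2, (Finset.mem_powersetCard.1 hW.1).2, hTs]
      · intro W hW W' hW' h
        have hW := (Finset.mem_filter.1 hW).2
        have hW' := (Finset.mem_filter.1 hW').2
        simp only at h
        rw [← Finset.sdiff_union_of_subset hW, ← Finset.sdiff_union_of_subset hW', h]
    · have : ((Finset.powersetCard n (Finset.univ : Finset V)).filter fun W => T ⊆ W) = ∅ := by
        rw [Finset.filter_eq_empty_iff]
        intro W hW hTW
        have := Finset.card_le_card hTW
        rw [(Finset.mem_powersetCard.1 hW).2] at this
        omega
      rw [this]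
      simp
  have h3 : N ^ s * N.choose n ≤ F.card * (n ^ s * N.choose n) := by
    refine (Nat.mul_le_mul_left _ h1).trans ?_
    rw [Finset.mul_sum, ← smul_eq_mul (F.card)]
    exact Finset.sum_le_card_nsmul _ _ _ h2
  have h4 : 0 < N.choose n := Nat.choose_pos hn
  nlinarith

end Containers

/-! ### Locally dense `K₄`-free graphs from incidence structures -/

section RandomBipartitions

open scoped Classical

/-- The sign `±1` of a Boolean. -/
noncomputable def boolSign (b : Bool) : ℝ := if b then 1 else -1

/-- Chernoff bound, in counting form, for a sum of independent random signs. -/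
theorem card_signSum_gt_le {E : Type*} [Fintype E] (F : Finset E) (σ : E → Bool) :
    ((Finset.univ.filter fun c : E → Bool =>
      (F.card : ℝ) / 2 < ∑ e ∈ F, boolSign (σ e) * boolSign (c e)).card : ℝ) ≤
      2 ^ Fintype.card E * Real.exp (-(F.card : ℝ) / 8) := by
  set f : E → Bool → ℝ := fun e b =>
    if e ∈ F then Real.exp (1 / 2 * (boolSign (σ e) * boolSign b)) else 1 with hf
  have hprod : ∀ c : E → Bool, ∏ e, f e (c e) =
      Real.exp (1 / 2 * ∑ e ∈ F, boolSign (σ e) * boolSign (c e)) := by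
    intro c
    rw [Finset.mul_sum, Real.exp_sum]
    simp only [hf]
    rw [Finset.prod_ite_mem, Finset.univ_inter]
  have hsum : ∑ c : E → Bool, ∏ e, f e (c e) = ∏ e, ∑ b, f e b := by
    rw [Finset.prod_univ_sum, Fintype.piFinset_univ]
  have hle : ∏ e, ∑ b, f e b ≤ ∏ e : E, (2 * if e ∈ F then Real.exp (1 / 8) else 1) := by
    refine Finset.prod_le_prod (fun e _ => Finset.sum_nonneg fun b _ => ?_) fun e _ => ?_
    · simp only [hf]
      split_ifs <;> positivity
    · by_cases he : e ∈ F
      · have hcosh := Real.cosh_le_exp_half_sq (1 / 2)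
        rw [Real.cosh_eq] at hcosh
        have h8 : Real.exp ((1 / 2 : ℝ) ^ 2 / 2) = Real.exp (1 / 8) := by norm_num
        rw [h8] at hcosh
        simp only [hf, he, if_true, Fintype.sum_bool, boolSign]
        cases σ e <;> simp at hcosh ⊢ <;> linarith
      · simp only [hf, he, if_false]
        simp
  have htot : ∏ e : E, (2 * if e ∈ F then Real.exp (1 / 8) else 1) =
      2 ^ Fintype.card E * Real.exp ((F.card : ℝ) / 8) := by
    rw [Finset.prod_mul_distrib, Finset.prod_const, Finset.card_univ, Finset.prod_ite_mem,
      Finset.univ_inter, Finset.prod_const, ← Real.exp_nat_mul]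
    congr 2
    ring
  set B := Finset.univ.filter fun c : E → Bool =>
      (F.card : ℝ) / 2 < ∑ e ∈ F, boolSign (σ e) * boolSign (c e) with hB
  have hmark : (B.card : ℝ) * Real.exp ((F.card : ℝ) / 4) ≤ ∑ c : E → Bool, ∏ e, f e (c e) := by
    rw [← nsmul_eq_mul, ← Finset.sum_const]
    refine (Finset.sum_le_sum fun c hc => ?_).trans
      (Finset.sum_le_sum_of_subset_of_nonneg (Finset.subset_univ B) fun c _ _ => ?_)
    · rw [hprod, Real.exp_le_exp]
      have := (Finset.mem_filter.1 hc).2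
      linarith
    · rw [hprod]
      positivity
  rw [hsum] at hmark
  have h := hmark.trans (hle.trans htot.le)
  have e1 : Real.exp ((F.card : ℝ) / 8) =
      Real.exp (-(F.card : ℝ) / 8) * Real.exp ((F.card : ℝ) / 4) := by
    rw [← Real.exp_add]; congr 1; ring
  rw [e1, ← mul_assoc] at h
  exact le_of_mul_le_mul_right h (Real.exp_pos _)

/-- The incident pairs `(v, p)` with `v ∈ X`. -/
noncomputable def flags {V P : Type*} [Fintype V] [Fintype P] (I : V → Finset P) (X : Finset V) :
    Finset (V × P) :=
  Finset.univ.filter fun e => e.1 ∈ X ∧ e.2 ∈ I e.1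

theorem mul_card_le_card_flags {V P : Type*} [Fintype V] [Fintype P] (I : V → Finset P) (q : ℕ)
    (hq : ∀ v, q ≤ (I v).card) (X : Finset V) : q * X.card ≤ (flags I X).card := by
  have : flags I X = (X.sigma (fun v => I v)).map (Equiv.sigmaEquivProd V P).toEmbedding := by
    ext ⟨v, p⟩
    simp [flags]
  rw [this, Finset.card_map, Finset.card_sigma, mul_comm, ← smul_eq_mul]
  exact Finset.card_nsmul_le_sum _ _ _ fun v _ => hq v

/-- Some colouring of the flags has discrepancy at most half the number of flags on every large set
`X` of blocks, for every sign pattern `σ` on the points. The bound `e ^ (-q |X| / 8)` of a single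
failure is split as `e ^ (-2 q³) · e ^ (-q |X| / 16)`; the first factor pays for the at most
`2 ^ (q³)` patterns, the second for the sets `X`. -/
theorem exists_balanced_coloring {V P : Type*} [Fintype V] [Fintype P] (I : V → Finset P) (q : ℕ)
    (hq : ∀ v, q ≤ (I v).card) (hP : Fintype.card P ≤ q ^ 3)
    (hV : (Fintype.card V : ℝ) * Real.exp (-(q : ℝ) / 16) ≤ 1) (hq2 : 2 ≤ q) :
    ∃ c : V × P → Bool, ∀ X : Finset V, 32 * q ^ 2 ≤ X.card → ∀ σ : P → Bool,
      ∑ e ∈ flags I X, boolSign (σ e.2) * boolSign (c e) ≤ ((flags I X).card : ℝ) / 2 := by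
  by_contra hcon
  push Not at hcon
  set B : Finset V × (P → Bool) → Finset (V × P → Bool) := fun Xσ =>
    Finset.univ.filter fun c => ((flags I Xσ.1).card : ℝ) / 2 <
      ∑ e ∈ flags I Xσ.1, boolSign (Xσ.2 e.2) * boolSign (c e) with hB
  set T : Finset (Finset V × (P → Bool)) :=
    (Finset.univ.filter fun X : Finset V => 32 * q ^ 2 ≤ X.card) ×ˢ Finset.univ with hT
  have hcov : (Finset.univ : Finset (V × P → Bool)) ⊆ T.biUnion B := by
    intro c _
    obtain ⟨X, hX, σ, h⟩ := hcon c
    refine Finset.mem_biUnion.2 ⟨(X, σ), ?_, ?_⟩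
    · simpa [hT] using hX
    · simpa [hB] using h
  have h1 := (Finset.card_le_card hcov).trans Finset.card_biUnion_le
  rw [Finset.card_univ, Fintype.card_fun, Fintype.card_bool] at h1
  have h1' : (2 : ℝ) ^ Fintype.card (V × P) ≤ ∑ t ∈ T, ((B t).card : ℝ) := by exact_mod_cast h1
  set y : ℝ := Real.exp (-(q : ℝ) / 16) with hy
  have hy0 : 0 < y := Real.exp_pos _
  have h2 : ∀ t ∈ T, ((B t).card : ℝ) ≤
      2 ^ Fintype.card (V × P) * (Real.exp (-2 * (q : ℝ) ^ 3) * y ^ t.1.card) := by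
    intro t ht
    have h := card_signSum_gt_le (flags I t.1) (fun e => t.2 e.2)
    refine le_trans (le_of_eq ?_) (h.trans ?_)
    · simp only [hB]
      congr!
    refine mul_le_mul_of_nonneg_left ?_ (by positivity)
    rw [hy, ← Real.exp_nat_mul, ← Real.exp_add, Real.exp_le_exp]
    have e1 : (q : ℝ) * t.1.card ≤ (flags I t.1).card := by
      exact_mod_cast mul_card_le_card_flags I q hq t.1
    have e2 : 32 * (q : ℝ) ^ 2 ≤ t.1.card := by
      have : 32 * q ^ 2 ≤ t.1.card := by simpa [hT] using ht
      exact_mod_cast this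
    have e3 : (0 : ℝ) ≤ q := by positivity
    nlinarith
  have h3 := h1'.trans (Finset.sum_le_sum h2)
  rw [← Finset.mul_sum, hT, Finset.sum_product] at h3
  simp only [Finset.sum_const, Finset.card_univ, Fintype.card_fun, Fintype.card_bool,
    nsmul_eq_mul] at h3
  have h4 : ∑ X ∈ Finset.univ.filter (fun X : Finset V => 32 * q ^ 2 ≤ X.card),
      (((2 ^ Fintype.card P : ℕ) : ℝ) * (Real.exp (-2 * (q : ℝ) ^ 3) * y ^ X.card)) ≤
      Real.exp ((q : ℝ) ^ 3 - 2 * (q : ℝ) ^ 3 + 1) := by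
    rw [← Finset.mul_sum, ← Finset.mul_sum]
    have e1 : ∑ X ∈ Finset.univ.filter (fun X : Finset V => 32 * q ^ 2 ≤ X.card), y ^ X.card ≤
        Real.exp 1 := by
      refine (Finset.sum_le_sum_of_subset_of_nonneg (Finset.subset_univ _)
        fun _ _ _ => by positivity).trans ?_
      have e := Fintype.sum_pow_mul_eq_add_pow V y 1
      simp only [one_pow, mul_one] at e
      rw [e]
      refine (pow_le_pow_left₀ (by positivity) (Real.add_one_le_exp y) _).trans ?_
      rw [← Real.exp_nat_mul, Real.exp_le_exp]
      exact hV
    have e2 : ((2 ^ Fintype.card P : ℕ) : ℝ) ≤ Real.exp ((q : ℝ) ^ 3) := by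
      push_cast
      have : (2 : ℝ) ≤ Real.exp 1 := by
        have := Real.add_one_le_exp (1 : ℝ); linarith
      refine (pow_le_pow_left₀ (by norm_num) this _).trans ?_
      rw [← Real.exp_nat_mul, Real.exp_le_exp, mul_one]
      exact_mod_cast hP
    have e3 : Real.exp ((q : ℝ) ^ 3 - 2 * (q : ℝ) ^ 3 + 1) =
        Real.exp ((q : ℝ) ^ 3) * (Real.exp (-2 * (q : ℝ) ^ 3) * Real.exp 1) := by
      rw [← Real.exp_add, ← Real.exp_add]; congr 1; ring
    rw [e3]
    gcongr
  have h5 : Real.exp ((q : ℝ) ^ 3 - 2 * (q : ℝ) ^ 3 + 1) < 1 := by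
    rw [Real.exp_lt_one_iff]
    have : (2 : ℝ) ≤ q := by exact_mod_cast hq2
    nlinarith [sq_nonneg ((q : ℝ) - 2), pow_le_pow_left₀ (by norm_num : (0:ℝ) ≤ 2) this 3]
  have h6 : (0 : ℝ) < 2 ^ Fintype.card (V × P) := by positivity
  nlinarith

/-- The graph on the blocks of an incidence structure in which two blocks are adjacent when they
share a point at which they are coloured differently: the clique of all blocks through a point is
replaced by a complete bipartite graph. -/
def flagGraph {V P : Type*} (I : V → Finset P) (c : V × P → Bool) : SimpleGraph V where
  Adj u v := ∃ p, p ∈ I u ∧ p ∈ I v ∧ c (u, p) ≠ c (v, p)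
  symm := ⟨fun _ _ ⟨p, h1, h2, h3⟩ => ⟨p, h2, h1, h3.symm⟩⟩
  loopless := ⟨fun _ ⟨_, _, _, h⟩ => h rfl⟩

/-- A `K₄` in the flag graph consists of four pairwise meeting blocks, so three of them pass through
a common point, where two of the three have the same colour. -/
theorem flagGraph_K4_free {V P : Type*} (I : V → Finset P) (c : V × P → Bool)
    (hlin : ∀ u v, u ≠ v → ∀ p p', p ∈ I u → p ∈ I v → p' ∈ I u → p' ∈ I v → p = p')
    (hON : ∀ l : Fin 4 → V, Function.Injective l → (∀ i j, ∃ p, p ∈ I (l i) ∧ p ∈ I (l j)) →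
      ∃ i j k, i ≠ j ∧ i ≠ k ∧ j ≠ k ∧ ∃ p, p ∈ I (l i) ∧ p ∈ I (l j) ∧ p ∈ I (l k)) :
    ¬ ContainsCopy (⊤ : SimpleGraph (Fin 4)) (flagGraph I c) := by
  rintro ⟨l, hl, hadj⟩
  have hadj' : ∀ i j, i ≠ j → (flagGraph I c).Adj (l i) (l j) := fun i j h => hadj h
  obtain ⟨i, j, k, hij, hik, hjk, p, hi, hj, hk⟩ := hON l hl (by
    intro i j
    by_cases h : i = j
    · obtain ⟨j', hj'⟩ : ∃ j' : Fin 4, i ≠ j' := by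
        by_cases h0 : i = 0
        · exact ⟨1, by rw [h0]; decide⟩
        · exact ⟨0, h0⟩
      obtain ⟨p, hp, _⟩ := hadj' i j' hj'
      exact ⟨p, hp, h ▸ hp⟩
    · obtain ⟨p, hp, hp', _⟩ := hadj' i j h
      exact ⟨p, hp, hp'⟩)
  have key : ∀ i j, i ≠ j → p ∈ I (l i) → p ∈ I (l j) → c (l i, p) ≠ c (l j, p) := by
    intro i j hij hi hj
    obtain ⟨p', h1, h2, h3⟩ := hadj' i j hij
    rwa [hlin _ _ (hl.ne hij) p' p h1 h2 hi hj] at h3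
  have a1 := key i j hij hi hj
  have a2 := key i k hik hi hk
  have a3 := key j k hjk hj hk
  revert a1 a2 a3
  cases c (l i, p) <;> cases c (l j, p) <;> cases c (l k, p) <;> simp

/-- Small discrepancy gives density: at most half of the flags are spoiled by the imbalance between
the two colours at the points, and the Cauchy–Schwarz inequality over the at most `q³` points bounds
the number of bichromatic pairs, that is of edges inside `X`, from below. -/
theorem exists_large_degIn_flagGraph {V P : Type*} [Fintype V] [Fintype P] (I : V → Finset P)
    (c : V × P → Bool) (q : ℕ) (hq2 : 2 ≤ q)
    (hlin : ∀ u v, u ≠ v → ∀ p p', p ∈ I u → p ∈ I v → p' ∈ I u → p' ∈ I v → p = p')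
    (hq : ∀ v, q ≤ (I v).card) (hP : Fintype.card P ≤ q ^ 3) (X : Finset V) (hX : X.Nonempty)
    (hc : ∀ σ : P → Bool,
      ∑ e ∈ flags I X, boolSign (σ e.2) * boolSign (c e) ≤ ((flags I X).card : ℝ) / 2) :
    ∃ v ∈ X, X.card ≤ 8 * q * degIn (flagGraph I c) X v := by
  set S : P → Bool → Finset V := fun p b => X.filter fun v => p ∈ I v ∧ c (v, p) = b with hS
  -- signed sums over the flags, grouped by points
  have hgroup : ∀ f : P → Bool → ℝ, ∑ e ∈ flags I X, f e.2 (c e) =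
      ∑ p, ((S p true).card * f p true + (S p false).card * f p false) := by
    intro f
    unfold flags
    rw [Finset.sum_filter, Fintype.sum_prod_type_right]
    refine Finset.sum_congr rfl fun p _ => ?_
    simp only [hS]
    rw [← nsmul_eq_mul, ← nsmul_eq_mul, ← Finset.sum_const, ← Finset.sum_const, Finset.sum_filter,
      Finset.sum_filter, ← Finset.sum_add_distrib, ← Finset.sum_filter]
    rw [Finset.sum_filter, ← Finset.sum_subset (Finset.subset_univ X)]
    · refine Finset.sum_congr rfl fun v hv => ?_
      by_cases hp : p ∈ I v
      · cases hcv : c (v, p) <;> simp [hp, hv]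
      · simp [hp]
    · intro v _ hv
      simp [hv]
  set M : ℝ := ((flags I X).card : ℝ) with hM
  have hMsum : M = ∑ p, (((S p true).card : ℝ) + (S p false).card) := by
    have := hgroup (fun _ _ => 1)
    simpa using this
  have habs : ∑ p, |((S p true).card : ℝ) - (S p false).card| ≤ M / 2 := by
    have h := hc (fun p => decide (0 ≤ ((S p true).card : ℝ) - (S p false).card))
    rw [hgroup (fun p b => boolSign (decide (0 ≤ ((S p true).card : ℝ) - (S p false).card)) *
      boolSign b)] at h
    refine le_trans (le_of_eq (Finset.sum_congr rfl fun p _ => ?_)) h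
    by_cases h0 : 0 ≤ ((S p true).card : ℝ) - (S p false).card
    · rw [abs_of_nonneg h0]
      simp only [h0, decide_true, boolSign]
      simp
      ring
    · rw [abs_of_neg (by linarith)]
      simp only [h0, decide_false, boolSign]
      simp
      ring
  -- a bichromatic pair of flags at a point is an edge, and distinct pairs give distinct edges
  have hpairs : ∑ p, (2 * (S p true).card * (S p false).card) ≤
      ∑ v ∈ X, degIn (flagGraph I c) X v := by
    have e1 : ∑ p, (2 * (S p true).card * (S p false).card) =
        (Finset.univ.sigma fun p : P => Finset.univ.sigma fun b : Bool =>
          S p b ×ˢ S p (!b)).card := by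
      rw [Finset.card_sigma]
      refine Finset.sum_congr rfl fun p _ => ?_
      rw [Finset.card_sigma, Fintype.sum_bool, Finset.card_product, Finset.card_product]
      simp only [Bool.not_true, Bool.not_false]
      ring
    have e2 : ∑ v ∈ X, degIn (flagGraph I c) X v =
        (X.sigma fun v => X.filter fun u => (flagGraph I c).Adj v u).card := by
      rw [Finset.card_sigma]
      rfl
    rw [e1, e2]
    refine Finset.card_le_card_of_injOn (fun t => ⟨t.2.2.1, t.2.2.2⟩) ?_ ?_
    · rintro ⟨p, b, u, v⟩ ht
      simp only [hS, Finset.mem_coe, Finset.mem_sigma, Finset.mem_univ, Finset.mem_product,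
        Finset.mem_filter, true_and] at ht ⊢
      obtain ⟨⟨h1, h2, h3⟩, h4, h5, h6⟩ := ht
      refine ⟨h1, h4, p, h2, h5, ?_⟩
      rw [h3, h6]
      cases b <;> simp
    · rintro ⟨p, b, u, v⟩ ht ⟨p', b', u', v'⟩ ht' heq
      simp only [hS, Finset.mem_coe, Finset.mem_sigma, Finset.mem_univ, Finset.mem_product,
        Finset.mem_filter, true_and] at ht ht'
      simp only [Sigma.mk.injEq, heq_eq_eq] at heq
      obtain ⟨rfl, rfl⟩ := heq
      obtain ⟨⟨h1, h2, h3⟩, h4, h5, h6⟩ := ht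
      obtain ⟨⟨h1', h2', h3'⟩, h4', h5', h6'⟩ := ht'
      have huv : u ≠ v := by
        rintro rfl
        rw [h3] at h6
        cases b <;> simp at h6
      obtain rfl := hlin u v huv p p' h2 h5 h2' h5'
      obtain rfl : b = b' := h3.symm.trans h3'
      rfl
  by_contra hcon
  push Not at hcon
  have hlt : ∑ v ∈ X, 8 * q * degIn (flagGraph I c) X v < X.card * X.card := by
    rw [← smul_eq_mul X.card, ← Finset.sum_const]
    exact Finset.sum_lt_sum_of_nonempty hX hcon
  rw [← Finset.mul_sum] at hlt
  have hlt' : 8 * (q : ℝ) * ∑ p, (2 * ((S p true).card : ℝ) * (S p false).card) <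
      (X.card : ℝ) * X.card := by
    have := (Nat.mul_le_mul_left (8 * q) hpairs).trans_lt hlt
    exact_mod_cast this
  -- `(min a b)² ≤ a b` for the numbers `a`, `b` of flags of the two colours at `p`
  have hsq : ∀ p, (((S p true).card : ℝ) + (S p false).card -
      |((S p true).card : ℝ) - (S p false).card|) ^ 2 ≤
      2 * (2 * ((S p true).card : ℝ) * (S p false).card) := by
    intro p
    have h1 : (0 : ℝ) ≤ (S p true).card := by positivity
    have h2 : (0 : ℝ) ≤ (S p false).card := by positivity
    rcases le_total (0 : ℝ) (((S p true).card : ℝ) - (S p false).card) with h | h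
    · rw [abs_of_nonneg h]; nlinarith
    · rw [abs_of_nonpos h]; nlinarith
  have hcs := sq_sum_le_card_mul_sum_sq (s := (Finset.univ : Finset P))
    (f := fun p => ((S p true).card : ℝ) + (S p false).card -
      |((S p true).card : ℝ) - (S p false).card|)
  have hsum2 := Finset.sum_le_sum fun p (_ : p ∈ (Finset.univ : Finset P)) => hsq p
  rw [Finset.sum_sub_distrib, ← hMsum, Finset.card_univ] at hcs
  rw [← Finset.mul_sum] at hsum2
  set Q := ∑ p, (2 * ((S p true).card : ℝ) * (S p false).card) with hQ
  have hMq : (q : ℝ) * X.card ≤ M := by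
    rw [hM]
    exact_mod_cast mul_card_le_card_flags I q hq X
  have hPr : (Fintype.card P : ℝ) ≤ (q : ℝ) ^ 3 := by exact_mod_cast hP
  have hq0 : (0 : ℝ) < q := by
    have : (2 : ℝ) ≤ q := by exact_mod_cast hq2
    linarith
  have hQ0 : 0 ≤ Q := Finset.sum_nonneg fun p _ => by positivity
  have hM0 : 0 ≤ M := by rw [hM]; positivity
  have f1 : (M / 2) ^ 2 ≤ (q : ℝ) ^ 3 * (2 * Q) := by
    refine le_trans (pow_le_pow_left₀ (by positivity) (by linarith) 2) (hcs.trans ?_)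
    refine mul_le_mul hPr hsum2 (Finset.sum_nonneg fun p _ => sq_nonneg _) (by positivity)
  have f2 : ((q : ℝ) * X.card) ^ 2 ≤ M ^ 2 := pow_le_pow_left₀ (by positivity) hMq 2
  have f3 : (q : ℝ) ^ 2 * (X.card * X.card) ≤ (q : ℝ) ^ 2 * (8 * q * Q) := by nlinarith
  have := le_of_mul_le_mul_left f3 (by positivity)
  linarith

/-- Random bipartitions turn a linear space without O'Nan configurations into a locally dense
`K₄`-free graph. -/
theorem exists_locally_dense_K4_free {V P : Type*} [Fintype V] [Fintype P] (I : V → Finset P)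
    (q : ℕ) (hq2 : 2 ≤ q)
    (hlin : ∀ u v, u ≠ v → ∀ p p', p ∈ I u → p ∈ I v → p' ∈ I u → p' ∈ I v → p = p')
    (hON : ∀ l : Fin 4 → V, Function.Injective l → (∀ i j, ∃ p, p ∈ I (l i) ∧ p ∈ I (l j)) →
      ∃ i j k, i ≠ j ∧ i ≠ k ∧ j ≠ k ∧ ∃ p, p ∈ I (l i) ∧ p ∈ I (l j) ∧ p ∈ I (l k))
    (hq : ∀ v, q ≤ (I v).card) (hP : Fintype.card P ≤ q ^ 3)
    (hV : (Fintype.card V : ℝ) * Real.exp (-(q : ℝ) / 16) ≤ 1) :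
    ∃ G : SimpleGraph V, ¬ ContainsCopy (⊤ : SimpleGraph (Fin 4)) G ∧
      ∀ X : Finset V, 32 * q ^ 2 ≤ X.card → ∃ v ∈ X, X.card ≤ 8 * q * degIn G X v := by
  obtain ⟨c, hc⟩ := exists_balanced_coloring I q hq hP hV hq2
  refine ⟨flagGraph I c, flagGraph_K4_free I c hlin hON, fun X hX => ?_⟩
  refine exists_large_degIn_flagGraph I c q hq2 hlin hq hP X ?_ (hc X hX)
  exact Finset.card_pos.1 (lt_of_lt_of_le (by positivity) hX)

end RandomBipartitions

/-! ### The hermitian unital -/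

section Unital

open scoped Classical

/-- Suppose `B` and `C` are isotropic and the line `BC` meets the line `z = a₃ x + b₃` in an
isotropic point. Then the values `β`, `γ` of `z - a₃ x - b₃` at `B` and `C` satisfy one hermitian
relation, because `γ B - β C` is a multiple of the common point. -/
theorem hermitian_relation {K : Type*} [Field K] (σ : K →+* K)
    {a b a₃ b₃ xB zB xC zC xD zD : K}
    (hB : zB + σ zB = xB * σ xB) (hC : zC + σ zC = xC * σ xC) (hD : zD + σ zD = xD * σ xD)
    (lB : zB = a * xB + b) (lC : zC = a * xC + b) (lD : zD = a * xD + b)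
    (lD3 : zD = a₃ * xD + b₃) :
    (zC - a₃ * xC - b₃) * σ (zB - a₃ * xB - b₃) * (zB + σ zC - xB * σ xC) =
      -((zB - a₃ * xB - b₃) * σ (zC - a₃ * xC - b₃) * (zC + σ zB - xC * σ xB)) := by
  set β := zB - a₃ * xB - b₃ with hβ
  set γ := zC - a₃ * xC - b₃ with hγ
  have hx : (a - a₃) * xD = b₃ - b := by linear_combination lD3 - lD
  have e1 : (γ - β) * xD = γ * xB - β * xC := by
    rw [hβ, hγ, lB, lC]
    linear_combination (xC - xB) * hx
  have e2 : (γ - β) * zD = γ * zB - β * zC := by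
    rw [lD, lB, lC]
    linear_combination a * e1
  have e1' : (σ γ - σ β) * σ xD = σ γ * σ xB - σ β * σ xC := by
    simpa only [map_sub, map_mul] using congrArg σ e1
  have e2' : (σ γ - σ β) * σ zD = σ γ * σ zB - σ β * σ zC := by
    simpa only [map_sub, map_mul] using congrArg σ e2
  linear_combination (σ γ - σ β) * e2 + (γ - β) * e2' - (σ γ - σ β) * σ xD * e1 -
    (γ * xB - β * xC) * e1' + γ * σ γ * hB + β * σ β * hC - (γ - β) * (σ γ - σ β) * hD

/-- Hermitian unitals contain no O'Nan configuration: if four lines meet pairwise in isotropic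
points, then three of them are concurrent. Otherwise the products of the three relations given by
the fourth line on the sides of the triangle formed by the first three show that the Gram
determinant of the vertices of this triangle vanishes, but up to sign it equals `Δ * σ Δ`, where
`Δ ≠ 0` is the determinant of the coordinates of the vertices. -/
theorem unital_no_onan {K : Type*} [Field K] (σ : K →+* K)
    {a b : Fin 4 → K} {x z : Fin 4 → Fin 4 → K}
    (hiso : ∀ i j, z i j + σ (z i j) = x i j * σ (x i j))
    (hl : ∀ i j, z i j = a i * x i j + b i) (hl' : ∀ i j, z i j = a j * x i j + b j) :
    ∃ i j k, i ≠ j ∧ i ≠ k ∧ j ≠ k ∧ ∃ m n, (z m n = a i * x m n + b i) ∧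
      (z m n = a j * x m n + b j) ∧ (z m n = a k * x m n + b k) := by
  by_contra hcon
  push Not at hcon
  have h01 : z 0 1 - a 3 * x 0 1 - b 3 ≠ 0 := fun h =>
    hcon 0 1 3 (by decide) (by decide) (by decide) 0 1 (hl 0 1) (hl' 0 1)
      (by linear_combination h)
  have h02 : z 0 2 - a 3 * x 0 2 - b 3 ≠ 0 := fun h =>
    hcon 0 2 3 (by decide) (by decide) (by decide) 0 2 (hl 0 2) (hl' 0 2)
      (by linear_combination h)
  have h12 : z 1 2 - a 3 * x 1 2 - b 3 ≠ 0 := fun h =>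
    hcon 1 2 3 (by decide) (by decide) (by decide) 1 2 (hl 1 2) (hl' 1 2)
      (by linear_combination h)
  have r0 := hermitian_relation σ (hiso 0 2) (hiso 0 1) (hiso 0 3) (hl 0 2) (hl 0 1) (hl 0 3)
    (hl' 0 3)
  have r1 := hermitian_relation σ (hiso 0 1) (hiso 1 2) (hiso 1 3) (hl' 0 1) (hl 1 2) (hl 1 3)
    (hl' 1 3)
  have r2 := hermitian_relation σ (hiso 1 2) (hiso 0 2) (hiso 2 3) (hl' 1 2) (hl' 0 2) (hl 2 3)
    (hl' 2 3)
  set α := z 1 2 - a 3 * x 1 2 - b 3 with hα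
  set β := z 0 2 - a 3 * x 0 2 - b 3 with hβ
  set γ := z 0 1 - a 3 * x 0 1 - b 3 with hγ
  have hne : α * β * γ * σ (α * β * γ) ≠ 0 :=
    mul_ne_zero (mul_ne_zero (mul_ne_zero h12 h02) h01)
      ((map_ne_zero σ).2 (mul_ne_zero (mul_ne_zero h12 h02) h01))
  -- the Gram determinant of three isotropic points, up to sign
  have hgram : (z 0 2 + σ (z 0 1) - x 0 2 * σ (x 0 1)) *
      (z 0 1 + σ (z 1 2) - x 0 1 * σ (x 1 2)) * (z 1 2 + σ (z 0 2) - x 1 2 * σ (x 0 2)) +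
      (z 0 1 + σ (z 0 2) - x 0 1 * σ (x 0 2)) *
      (z 1 2 + σ (z 0 1) - x 1 2 * σ (x 0 1)) * (z 0 2 + σ (z 1 2) - x 0 2 * σ (x 1 2)) = 0 := by
    refine (mul_eq_zero.1 (?_ : α * β * γ * σ (α * β * γ) * _ = 0)).resolve_left hne
    have := congrArg₂ (· * ·) (congrArg₂ (· * ·) r0 r1) r2
    simp only [map_mul]
    linear_combination this
  set Δ := x 1 2 * (z 0 2 - z 0 1) + x 0 2 * (z 0 1 - z 1 2) + x 0 1 * (z 1 2 - z 0 2) with hΔ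
  have hdet : Δ * σ Δ = 0 := by
    have g1 := hiso 1 2
    have g2 := hiso 0 2
    have g3 := hiso 0 1
    simp only [hΔ, map_add, map_mul, map_sub]
    have i1 : σ (z 1 2) = x 1 2 * σ (x 1 2) - z 1 2 := by linear_combination g1
    have i2 : σ (z 0 2) = x 0 2 * σ (x 0 2) - z 0 2 := by linear_combination g2
    have i3 : σ (z 0 1) = x 0 1 * σ (x 0 1) - z 0 1 := by linear_combination g3
    rw [i1, i2, i3] at hgram ⊢
    linear_combination hgram
  have hΔ0 : Δ = 0 := by
    rcases mul_eq_zero.1 hdet with h | h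
    · exact h
    · exact (map_eq_zero σ).1 h
  have hfac : (z 1 2 - a 0 * x 1 2 - b 0) * (x 0 2 - x 0 1) = 0 := by
    rw [hΔ, hl 0 1, hl 0 2] at hΔ0
    linear_combination -hΔ0
  rcases mul_eq_zero.1 hfac with h | h
  · exact hcon 1 2 0 (by decide) (by decide) (by decide) 1 2 (hl 1 2) (hl' 1 2)
      (by linear_combination h)
  · have hx : x 0 2 = x 0 1 := by linear_combination h
    have hz : z 0 2 = z 0 1 := by rw [hl 0 2, hl 0 1, hx]
    exact hcon 0 1 2 (by decide) (by decide) (by decide) 0 1 (hl 0 1) (hl' 0 1)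
      (by rw [← hx, ← hz]; exact hl' 0 2)

/-- The trace map `z ↦ z + z ^ p` is at most `p`-to-one. -/
theorem card_add_pow_eq_le {K : Type*} [Field K] [Fintype K] {p : ℕ} (hp : 2 ≤ p) (c : K) :
    (Finset.univ.filter fun z : K => z + z ^ p = c).card ≤ p := by
  set f : Polynomial K := Polynomial.X ^ p + (Polynomial.X - Polynomial.C c) with hf
  have hdeg : f.natDegree = p := by
    rw [hf]
    rw [Polynomial.natDegree_add_eq_left_of_natDegree_lt]
    · simp
    · rw [Polynomial.natDegree_X_sub_C, Polynomial.natDegree_X_pow]; omega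
  have hf0 : f ≠ 0 := by
    intro h
    rw [h, Polynomial.natDegree_zero] at hdeg
    omega
  have hsub : (Finset.univ.filter fun z : K => z + z ^ p = c) ⊆ f.roots.toFinset := by
    intro z hz
    rw [Multiset.mem_toFinset, Polynomial.mem_roots hf0, Polynomial.IsRoot.def, hf]
    have := (Finset.mem_filter.1 hz).2
    simp only [Polynomial.eval_add, Polynomial.eval_pow, Polynomial.eval_X, Polynomial.eval_sub,
      Polynomial.eval_C]
    linear_combination this
  calc _ ≤ f.roots.toFinset.card := Finset.card_le_card hsub
    _ ≤ Multiset.card f.roots := Multiset.toFinset_card_le _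
    _ ≤ f.natDegree := Polynomial.card_roots' f
    _ = p := hdeg

/-- Every nonzero element of the prime field is the norm of at least `p` elements of the field
with `p ^ 2` elements. -/
theorem le_card_norm_eq {K : Type*} [Field K] [Fintype K] {p : ℕ} (hp : 2 ≤ p)
    (hK : Fintype.card K = p ^ 2) {e : K} (he : e ≠ 0) (hep : e ^ p = e) :
    p ≤ (Finset.univ.filter fun y : K => y * y ^ p = e).card := by
  obtain ⟨g, hg⟩ := IsCyclic.exists_generator (α := Kˣ)
  have hord : orderOf g = p ^ 2 - 1 := by
    rw [orderOf_eq_card_of_forall_mem_zpowers hg, Nat.card_eq_fintype_card, Fintype.card_units, hK]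
  have hfac : p ^ 2 - 1 = (p - 1) * (p + 1) := by
    obtain ⟨m, rfl⟩ : ∃ m, p = m + 1 := ⟨p - 1, by omega⟩
    simp only [Nat.add_sub_cancel]
    rw [Nat.sub_eq_iff_eq_add (Nat.one_le_pow _ _ (by omega))]
    ring
  obtain ⟨n, hn⟩ := (Submonoid.mem_powers_iff _ _).1
    (mem_powers_iff_mem_zpowers.2 (hg (Units.mk0 e he)))
  have hdvd : (p - 1) * (p + 1) ∣ (p - 1) * n := by
    rw [← hfac, ← hord]
    refine orderOf_dvd_of_pow_eq_one ?_
    rw [mul_comm, pow_mul, hn]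
    ext
    simp only [Units.val_pow_eq_pow_val, Units.val_mk0, Units.val_one]
    have : e * e ^ (p - 1) = e * 1 := by
      rw [← pow_succ', Nat.sub_add_cancel (by omega), hep, mul_one]
    exact mul_left_cancel₀ he this
  obtain ⟨m, rfl⟩ := Nat.dvd_of_mul_dvd_mul_left (by omega) hdvd
  -- the translates of one solution by `g ^ ((p - 1) * i)`
  have hinj : Set.InjOn (fun i : ℕ => ((g ^ (m + (p - 1) * i) : Kˣ) : K))
      (Finset.range p : Set ℕ) := by
    intro i hi j hj hij
    have hi' : i < p := by simpa using hi
    have hj' : j < p := by simpa using hj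
    have h1 : g ^ m * g ^ ((p - 1) * i) = g ^ m * g ^ ((p - 1) * j) := by
      rw [← pow_add, ← pow_add]; exact Units.ext hij
    have h2 := mul_left_cancel h1
    have hlt : ∀ t, t < p → (p - 1) * t < orderOf g := by
      intro t ht
      rw [hord, hfac]
      exact Nat.mul_lt_mul_of_pos_left (by omega) (by omega)
    have h3 := pow_injOn_Iio_orderOf (hlt i hi') (hlt j hj') h2
    exact Nat.eq_of_mul_eq_mul_left (by omega) h3
  refine (Finset.card_range p).symm.le.trans ?_
  rw [← Finset.card_image_of_injOn hinj]
  refine Finset.card_le_card fun y hy => ?_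
  obtain ⟨i, _, rfl⟩ := Finset.mem_image.1 hy
  refine Finset.mem_filter.2 ⟨Finset.mem_univ _, ?_⟩
  rw [← pow_succ']
  have : (g ^ (m + (p - 1) * i)) ^ (p + 1) = Units.mk0 e he := by
    rw [← hn, ← pow_mul, add_mul, pow_add, mul_right_comm, pow_mul g ((p - 1) * (p + 1)), ← hfac,
      ← hord, pow_orderOf_eq_one, one_pow, mul_one, mul_comm m]
  have := congrArg Units.val this
  simpa using this

/-- The hermitian unital over the field with `p ^ 2` elements, as an incidence structure. The points
are the affine points `(x, z)` of the hermitian curve `z + z ^ p = x ^ (p + 1)`, and the blocks are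
the lines `z = a x + b` which are not tangent to it, that is `b + b ^ p + a ^ (p + 1) ≠ 0`. -/
theorem exists_unital (p : ℕ) (hp : p.Prime) :
    ∃ (V P : Type) (_ : Fintype V) (_ : Fintype P) (I : V → Finset P),
      (∀ u v, u ≠ v → ∀ t t', t ∈ I u → t ∈ I v → t' ∈ I u → t' ∈ I v → t = t') ∧
      (∀ l : Fin 4 → V, Function.Injective l → (∀ i j, ∃ t, t ∈ I (l i) ∧ t ∈ I (l j)) →
        ∃ i j k, i ≠ j ∧ i ≠ k ∧ j ≠ k ∧ ∃ t, t ∈ I (l i) ∧ t ∈ I (l j) ∧ t ∈ I (l k)) ∧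
      (∀ v, p ≤ (I v).card) ∧ Fintype.card P ≤ p ^ 3 ∧ p ^ 4 ≤ 2 * Fintype.card V ∧
      Fintype.card V ≤ p ^ 4 := by
  have : Fact p.Prime := ⟨hp⟩
  let K := GaloisField p 2
  let _ : Fintype K := Fintype.ofFinite K
  have hp2 : 2 ≤ p := hp.two_le
  have hK : Fintype.card K = p ^ 2 := by
    rw [← Nat.card_eq_fintype_card]
    exact GaloisField.card p 2 (by norm_num)
  let σ : K →+* K := frobenius K p
  have hσp : ∀ x, σ x = x ^ p := fun x => frobenius_def p x
  have hσ : ∀ x, σ (σ x) = x := by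
    intro x
    rw [hσp, hσp, ← pow_mul, ← sq, ← hK]
    exact FiniteField.pow_card x
  let P : Type := {t : K × K // t.2 + σ t.2 = t.1 * σ t.1}
  let V : Type := {l : K × K // l.2 + σ l.2 + l.1 * σ l.1 ≠ 0}
  let I : V → Finset P := fun l => Finset.univ.filter fun t => t.1.2 = l.1.1 * t.1.1 + l.1.2
  have hI : ∀ (l : V) (t : P), t ∈ I l ↔ t.1.2 = l.1.1 * t.1.1 + l.1.2 := fun l t => by
    simp [I]
  refine ⟨V, P, inferInstance, inferInstance, I, ?_, ?_, ?_, ?_, ?_, ?_⟩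
  · rintro u v huv t t' h1 h2 h3 h4
    rw [hI] at h1 h2 h3 h4
    have h : (u.1.1 - v.1.1) * (t.1.1 - t'.1.1) = 0 := by
      linear_combination -h1 + h2 + h3 - h4
    rcases mul_eq_zero.1 h with h | h
    · exfalso
      have ha : u.1.1 = v.1.1 := by linear_combination h
      have hb : u.1.2 = v.1.2 := by linear_combination -h1 + h2 - t.1.1 * ha
      exact huv (Subtype.ext (Prod.ext ha hb))
    · have hx : t.1.1 = t'.1.1 := by linear_combination h
      have hz : t.1.2 = t'.1.2 := by rw [h1, h3, hx]
      exact Subtype.ext (Prod.ext hx hz)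
  · intro l _ hmeet
    choose t ht ht' using hmeet
    obtain ⟨i, j, k, hij, hik, hjk, m, n, e1, e2, e3⟩ := unital_no_onan σ
      (a := fun i => (l i).1.1) (b := fun i => (l i).1.2) (x := fun i j => (t i j).1.1)
      (z := fun i j => (t i j).1.2) (fun i j => (t i j).2) (fun i j => (hI _ _).1 (ht i j))
      (fun i j => (hI _ _).1 (ht' i j))
    exact ⟨i, j, k, hij, hik, hjk, t m n, (hI _ _).2 e1, (hI _ _).2 e2, (hI _ _).2 e3⟩
  · intro l
    set e : K := l.1.2 + σ l.1.2 + l.1.1 * σ l.1.1 with he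
    have he0 : e ≠ 0 := l.2
    have hep : e ^ p = e := by
      rw [← hσp, he, map_add, map_add, map_mul, hσ, hσ]
      ring
    refine (le_card_norm_eq hp2 hK he0 hep).trans ?_
    -- completing the norm: `y = x - σ a`
    have key : ∀ y : K, y * y ^ p = e →
        (l.1.1 * (y + σ l.1.1) + l.1.2) + σ (l.1.1 * (y + σ l.1.1) + l.1.2) =
          (y + σ l.1.1) * σ (y + σ l.1.1) := by
      intro y hy
      rw [← hσp, he] at hy
      simp only [map_add, map_mul, hσ]
      linear_combination -hy
    refine Finset.card_le_card_of_injOn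
      (fun y => if h : y * y ^ p = e then ⟨(y + σ l.1.1, l.1.1 * (y + σ l.1.1) + l.1.2), key y h⟩
        else ⟨(0, 0), by simp⟩) ?_ ?_
    · intro y hy
      have hy' : y * y ^ p = e := by simpa using hy
      rw [Finset.mem_coe, hI]
      simp only [dif_pos hy']
    · intro y hy y' hy' h
      have h1 : y * y ^ p = e := by simpa using hy
      have h2 : y' * y' ^ p = e := by simpa using hy'
      simp only [dif_pos h1, dif_pos h2] at h
      have := congrArg (fun t : P => t.1.1) h
      exact add_right_cancel this
  · rw [Fintype.card_subtype]
    have hsub : (Finset.univ.filter fun t : K × K => t.2 + σ t.2 = t.1 * σ t.1).card =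
        ∑ x : K, (Finset.univ.filter fun z : K => z + z ^ p = x * σ x).card := by
      rw [← Finset.card_sigma]
      refine Finset.card_bij (fun t _ => ⟨t.1, t.2⟩) ?_ ?_ ?_
      · rintro ⟨x, z⟩ h
        simpa [hσp] using h
      · rintro ⟨x, z⟩ _ ⟨x', z'⟩ _ h
        simpa using h
      · rintro ⟨x, z⟩ h
        exact ⟨(x, z), by simpa [hσp] using h, rfl⟩
    rw [hsub]
    refine (Finset.sum_le_card_nsmul _ _ p fun x _ => card_add_pow_eq_le hp2 _).trans ?_
    rw [Finset.card_univ, hK, smul_eq_mul]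
    exact le_of_eq (by ring)
  · have hbad : Fintype.card {l : K × K // ¬ (l.2 + σ l.2 + l.1 * σ l.1 ≠ 0)} ≤ p ^ 3 := by
      rw [Fintype.card_subtype]
      have hsub : (Finset.univ.filter fun l : K × K =>
          ¬ (l.2 + σ l.2 + l.1 * σ l.1 ≠ 0)).card =
          ∑ x : K, (Finset.univ.filter fun z : K => z + z ^ p = -(x * σ x)).card := by
        rw [← Finset.card_sigma]
        refine Finset.card_bij (fun t _ => ⟨t.1, t.2⟩) ?_ ?_ ?_
        · rintro ⟨x, z⟩ h
          simpa [hσp, eq_neg_iff_add_eq_zero] using h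
        · rintro ⟨x, z⟩ _ ⟨x', z'⟩ _ h
          simpa using h
        · rintro ⟨x, z⟩ h
          exact ⟨(x, z), by simpa [hσp, eq_neg_iff_add_eq_zero] using h, rfl⟩
      rw [hsub]
      refine (Finset.sum_le_card_nsmul _ _ p fun x _ => card_add_pow_eq_le hp2 _).trans ?_
      rw [Finset.card_univ, hK, smul_eq_mul]
      exact le_of_eq (by ring)
    have htot := Fintype.card_subtype_compl (fun l : K × K => l.2 + σ l.2 + l.1 * σ l.1 ≠ 0)
    have hle := Fintype.card_subtype_le (fun l : K × K => l.2 + σ l.2 + l.1 * σ l.1 ≠ 0)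
    have hKK : Fintype.card (K × K) = p ^ 4 := by
      rw [Fintype.card_prod, hK]; ring
    have hpp : 2 * p ^ 3 ≤ p ^ 4 := by
      rw [pow_succ p 3, mul_comm]; exact Nat.mul_le_mul_left _ hp2
    change p ^ 4 ≤ 2 * Fintype.card {l : K × K // l.2 + σ l.2 + l.1 * σ l.1 ≠ 0}
    rw [hKK] at htot hle
    omega
  · refine (Fintype.card_subtype_le _).trans (le_of_eq ?_)
    rw [Fintype.card_prod, hK]; ring

end Unital

/-! ### From the unital to a bound with explicit parameters -/

section Assembly

open scoped Classical

/-- If every set of `s` vertices inducing maximum degree at most `D` leaves `W`, then every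
`C_{2k}`-free set of vertices inside `W` has fewer than `2 s` elements. -/
theorem minFIndep_le_of_avoiding {V : Type*} {G : SimpleGraph V} {k r s n D : ℕ}
    (hk : 2 ≤ k) (hr : 2 ≤ r) (hrs : 2 * s < r ^ k) (hD : 4 * (4 * (2 ^ k * (4 * k + 1)) * r) = D)
    (hG : ¬ ContainsCopy (⊤ : SimpleGraph (Fin 4)) G) (W : Finset V) (hW : W.card = n)
    (hWT : ∀ T ⊆ W, T.card = s → ¬ ∀ v ∈ T, degIn G T v ≤ D) :
    minFIndep (SimpleGraph.cycleGraph (2 * k)) (⊤ : SimpleGraph (Fin 4)) n ≤ 2 * s := by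
  let e := W.equivFinOfCardEq hW
  let f : Fin n ↪ V := e.symm.toEmbedding.trans (Function.Embedding.subtype _)
  have hf : ∀ i, f i ∈ W := fun i => (e.symm i).2
  have hG' : ¬ ContainsCopy (⊤ : SimpleGraph (Fin 4)) (G.comap f) := by
    rintro ⟨g, hg, hadj⟩
    exact hG ⟨fun i => f (g i), f.injective.comp hg, fun a b hab => hadj hab⟩
  have hle : minFIndep (SimpleGraph.cycleGraph (2 * k)) (⊤ : SimpleGraph (Fin 4)) n ≤
      fIndepNum (SimpleGraph.cycleGraph (2 * k)) (G.comap f) :=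
    Nat.sInf_le ⟨G.comap f, hG', rfl⟩
  refine hle.trans ?_
  unfold fIndepNum
  refine csSup_le' ?_
  rintro _ ⟨S, rfl, hS⟩
  by_contra hlt
  push Not at hlt
  obtain ⟨S₀, hS₀, hcard⟩ := Finset.exists_subset_card_eq hlt.le
  have hfree : ¬ ContainsCopy (SimpleGraph.cycleGraph (2 * k))
      (G.induce ((S₀.map f : Finset V) : Set V)) := by
    rintro ⟨g, hg, hadj⟩
    have hmem : ∀ a, ∃ i ∈ S₀, f i = (g a : V) := fun a => by
      simpa using Finset.mem_map.1 (Finset.mem_coe.1 (g a).2)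
    choose h hh hfh using hmem
    refine hS ⟨fun a => ⟨h a, hS₀ (hh a)⟩, ?_, ?_⟩
    · intro a b hab
      have hab' : h a = h b := Subtype.mk.inj hab
      refine hg (Subtype.ext ?_)
      rw [← hfh a, ← hfh b, hab']
    · intro a b hab
      have := hadj hab
      simp only [SimpleGraph.comap_adj, Function.Embedding.subtype_apply] at this ⊢
      rw [hfh, hfh]
      exact this
  obtain ⟨T, hTS, hTs, hTD⟩ := exists_subset_degIn_le G hk hr hrs (S₀.map f)
    (by rw [Finset.card_map, hcard]) hfree
  refine hWT T (fun v hv => ?_) hTs (fun v hv => (hTD v hv).trans hD.le)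
  obtain ⟨i, _, rfl⟩ := Finset.mem_map.1 (hTS hv)
  exact hf i

/-- The bound on `f_{C_{2k}, K₄}(n)` given by the unital of order `q`, under the numerical
conditions that make the container count smaller than the number of samples. -/
theorem minFIndep_le_of_params {k n q r s j D : ℕ} (hk : 2 ≤ k) (hq : q.Prime) (hr : 2 ≤ r)
    (hrs : 2 * s < r ^ k) (hD : 4 * (4 * (2 ^ k * (4 * k + 1)) * r) = D) (hs : 1 ≤ s)
    (hn : 2 * n ≤ q ^ 4)
    (hqV : (q : ℝ) ^ 4 * Real.exp (-(q : ℝ) / 16) ≤ 1) (hsm : s ≤ 32 * q ^ 2)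
    (hj : (q : ℝ) ^ 4 * (D + 1) * (1 - 1 / (8 * q * (D + 1))) ^ j < 32 * q ^ 2)
    (hjs : j * Real.log (1 + (q : ℝ) ^ 4) ≤ s)
    (hns : 64 * n * Real.exp 3 ≤ (q : ℝ) ^ 2 * s) :
    minFIndep (SimpleGraph.cycleGraph (2 * k)) (⊤ : SimpleGraph (Fin 4)) n ≤ 2 * s := by
  obtain ⟨V, P, _, _, I, hlin, hON, hI, hP, hV1, hV2⟩ := exists_unital q hq
  have hV2r : (Fintype.card V : ℝ) ≤ (q : ℝ) ^ 4 := by exact_mod_cast hV2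
  have hV1r : (q : ℝ) ^ 4 ≤ 2 * (Fintype.card V : ℝ) := by exact_mod_cast hV1
  have hq1 : (1 : ℝ) ≤ q := by exact_mod_cast hq.one_le
  have hs1 : (1 : ℝ) ≤ s := by exact_mod_cast hs
  obtain ⟨G, hG, hdens⟩ := exists_locally_dense_K4_free I q hq.two_le hlin hON hI hP
    (le_trans (mul_le_mul_of_nonneg_right hV2r (Real.exp_pos _).le) hqV)
  set m : ℝ := 32 * (q : ℝ) ^ 2 with hm
  have hm0 : 0 < m := by positivity
  have hb1 : (1 : ℝ) ≤ 8 * q * (D + 1) := by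
    have : (0 : ℝ) ≤ D := by positivity
    nlinarith
  have hb2 : 0 ≤ (1 - 1 / (8 * (q : ℝ) * (D + 1))) := by
    rw [sub_nonneg, div_le_one (by linarith)]
    exact hb1
  have hsm' : (s : ℝ) ≤ m := by rw [hm]; exact_mod_cast hsm
  -- the weight `x = s / m` makes `(1 + x) ^ m` at most `e ^ s`
  have hcount := card_lowDegreeSets_mul_le G (32 * q ^ 2) (8 * q) D s j
    (by have := hq.one_le; omega) hdens (s / m) (by positivity) ((div_le_one hm0).2 hsm') (by
      push_cast
      refine lt_of_le_of_lt ?_ hj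
      gcongr)
  set F := lowDegreeSets G D s with hF
  set N : ℝ := (Fintype.card V : ℝ) with hN
  have hN0 : 0 < N := by
    have : (0 : ℝ) < (q : ℝ) ^ 4 := by positivity
    linarith
  have c1 : (1 + (s : ℝ) / m) ^ (32 * q ^ 2) ≤ Real.exp s := by
    have := pow_le_pow_left₀ (by positivity) (Real.add_one_le_exp ((s : ℝ) / m)) (32 * q ^ 2)
    rw [← Real.exp_nat_mul, add_comm] at this
    refine this.trans (le_of_eq ?_)
    congr 1
    push_cast
    rw [← hm]
    field_simp
  have c2 : (1 + N) ^ j ≤ Real.exp s := by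
    have h1 : (1 + N) ^ j ≤ (1 + (q : ℝ) ^ 4) ^ j := by gcongr
    refine h1.trans ?_
    rw [← Real.log_le_iff_le_exp (by positivity), Real.log_pow]
    exact hjs
  have c3 : (n : ℝ) * Real.exp 3 ≤ N * (s / m) := by
    rw [← mul_div_assoc, le_div_iff₀ hm0, hm]
    have : 0 ≤ (q : ℝ) ^ 2 := by positivity
    have h1 : (64 * n * Real.exp 3) * (q : ℝ) ^ 2 ≤ (q : ℝ) ^ 2 * s * (q : ℝ) ^ 2 := by gcongr
    have h2 : (q : ℝ) ^ 4 * s ≤ 2 * N * s := by gcongr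
    nlinarith
  have hlt : (F.card : ℝ) * (n : ℝ) ^ s < N ^ s := by
    have h1 : (F.card : ℝ) * (n : ℝ) ^ s * Real.exp (3 * s) ≤
        N ^ s * (Real.exp s * Real.exp s) := by
      calc (F.card : ℝ) * (n : ℝ) ^ s * Real.exp (3 * s)
          = F.card * ((n : ℝ) * Real.exp 3) ^ s := by
            rw [mul_comm (3 : ℝ), Real.exp_nat_mul, mul_pow]; ring
        _ ≤ F.card * (N * (s / m)) ^ s := by gcongr
        _ = N ^ s * (F.card * (s / m) ^ s) := by rw [mul_pow]; ring
        _ ≤ N ^ s * ((1 + s / m) ^ (32 * q ^ 2) * (1 + N) ^ j) := by gcongr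
        _ ≤ N ^ s * (Real.exp s * Real.exp s) := by gcongr
    have h2 : Real.exp s * Real.exp s < Real.exp (3 * s) := by
      rw [← Real.exp_add, Real.exp_lt_exp]; linarith
    have h3 : N ^ s * (Real.exp s * Real.exp s) < N ^ s * Real.exp (3 * s) := by gcongr
    exact lt_of_mul_lt_mul_right (h1.trans_lt h3) (Real.exp_pos _).le
  obtain ⟨W, hW, hWF⟩ := exists_card_eq_avoiding F n s
    (fun T hT => (Finset.mem_filter.1 hT).2.1) (by omega)
    (by rw [hN] at hlt; exact_mod_cast hlt)
  refine minFIndep_le_of_avoiding hk hr hrs hD hG W hW fun T hTW hTs hTD => hWF T ?_ hTW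
  exact Finset.mem_filter.2 ⟨Finset.mem_univ _, hTs, hTD⟩

end Assembly

/-! ### Choice of parameters -/

section Asymptotics

theorem exists_eventually_pow_mul_exp_le :
    ∃ q₀ : ℕ, ∀ q : ℕ, q₀ ≤ q → (q : ℝ) ^ 4 * Real.exp (-(q : ℝ) / 16) ≤ 1 := by
  have h := (Real.tendsto_pow_mul_exp_neg_atTop_nhds_zero 4).comp
    (tendsto_natCast_atTop_atTop.atTop_div_const (by norm_num : (0 : ℝ) < 16))
  have h2 := h.eventually (ge_mem_nhds (by norm_num : (0 : ℝ) < 1 / 16 ^ 4))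
  obtain ⟨q₀, hq₀⟩ := Filter.eventually_atTop.1 h2
  refine ⟨q₀, fun q hq => ?_⟩
  have := hq₀ q hq
  simp only [Function.comp_apply] at this
  rw [neg_div]
  rw [div_pow, div_mul_eq_mul_div, div_le_div_iff_of_pos_right (by norm_num)] at this
  exact this

/-- An integer `r` of order `s ^ (1 / k)`. -/
theorem exists_root_between {k s : ℕ} (hk : 1 ≤ k) (hs : 1 ≤ s) :
    ∃ r, 2 ≤ r ∧ 2 * s < r ^ k ∧ r ^ k ≤ 2 ^ (k + 1) * s := by
  have hex : ∃ r, 2 * s < r ^ k :=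
    ⟨2 * s + 1, (Nat.lt_succ_self _).trans_le (Nat.le_self_pow (by omega) _)⟩
  have h1 := Nat.find_spec hex
  set r := Nat.find hex with hr
  have hr2 : 2 ≤ r := by
    by_contra hlt
    have h2 : r ^ k ≤ 1 ^ k := Nat.pow_le_pow_left (by omega) k
    rw [one_pow] at h2
    omega
  refine ⟨r, hr2, h1, ?_⟩
  have h2 : ¬ 2 * s < (r - 1) ^ k := Nat.find_min hex (by omega)
  calc r ^ k ≤ (2 * (r - 1)) ^ k := Nat.pow_le_pow_left (by omega) k
    _ = 2 ^ k * (r - 1) ^ k := mul_pow _ _ _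
    _ ≤ 2 ^ k * (2 * s) := Nat.mul_le_mul_left _ (by omega)
    _ = 2 ^ (k + 1) * s := by ring

/-- The number `j` of container steps: after `j` steps fewer than `32 q ^ 2` vertices survive. -/
theorem exists_steps {q D : ℕ} (hq : 1 ≤ q) {L : ℝ} (hL : 1 ≤ L)
    (h1 : Real.log ((q : ℝ) ^ 4 * (D + 1)) ≤ 5 * L) :
    ∃ j : ℕ, (q : ℝ) ^ 4 * (D + 1) * (1 - 1 / (8 * q * (D + 1))) ^ j < 32 * q ^ 2 ∧
      (j : ℝ) ≤ 80 * q * (D + 1) * L := by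
  have hq1 : (1 : ℝ) ≤ q := by exact_mod_cast hq
  have hD : (0 : ℝ) ≤ D := by positivity
  have hb : 1 ≤ (q : ℝ) * (D + 1) := by nlinarith
  have hbL : 1 ≤ (q : ℝ) * (D + 1) * L := by nlinarith
  refine ⟨⌈40 * (q : ℝ) * (D + 1) * L⌉₊, ?_, ?_⟩
  · set j := ⌈40 * (q : ℝ) * (D + 1) * L⌉₊ with hj
    have hj1 : 40 * (q : ℝ) * (D + 1) * L ≤ j := Nat.le_ceil _
    have ht0 : 0 ≤ 1 - 1 / (8 * (q : ℝ) * (D + 1)) := by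
      rw [sub_nonneg, div_le_one (by nlinarith)]
      nlinarith
    have h2 : (1 - 1 / (8 * (q : ℝ) * (D + 1))) ^ j ≤ Real.exp (-(5 * L)) := by
      refine (pow_le_pow_left₀ ht0 (Real.one_sub_le_exp_neg _) j).trans ?_
      rw [← Real.exp_nat_mul, Real.exp_le_exp, mul_neg, neg_le_neg_iff, mul_one_div,
        le_div_iff₀ (by nlinarith)]
      linarith
    have h3 : (q : ℝ) ^ 4 * (D + 1) ≤ Real.exp (5 * L) :=
      (Real.log_le_iff_le_exp (by positivity)).1 h1
    calc (q : ℝ) ^ 4 * (D + 1) * (1 - 1 / (8 * q * (D + 1))) ^ j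
        ≤ Real.exp (5 * L) * Real.exp (-(5 * L)) := by gcongr
      _ = 1 := by rw [← Real.exp_add, add_neg_cancel, Real.exp_zero]
      _ < 32 * (q : ℝ) ^ 2 := by nlinarith
  · refine (Nat.ceil_lt_add_one (by positivity)).le.trans ?_
    nlinarith

/-- A prime of order `√(n / T)`, from Bertrand's postulate. -/
theorem exists_prime_sq_mul_between {n : ℕ} {T : ℝ} (hT0 : 0 < T) (hTn : T ≤ n) :
    ∃ q : ℕ, q.Prime ∧ 64 ^ 2 * (n : ℝ) ≤ (q : ℝ) ^ 2 * T ∧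
      (q : ℝ) ^ 2 * T ≤ 130 ^ 2 * (n : ℝ) := by
  set Q := √((n : ℝ) / T) with hQ
  have hQ2 : Q ^ 2 = n / T := Real.sq_sqrt (by positivity)
  have hQ1 : 1 ≤ Q := by
    rw [hQ, Real.one_le_sqrt, one_le_div hT0]
    exact hTn
  obtain ⟨q, hq, hq1, hq2⟩ := Nat.exists_prime_lt_and_le_two_mul ⌈64 * Q⌉₊
    (Nat.ceil_pos.2 (by linarith)).ne'
  have hqQ1 : 64 * Q ≤ q := (Nat.le_ceil _).trans (by exact_mod_cast hq1.le)
  have hqQ2 : (q : ℝ) ≤ 130 * Q := by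
    have h1 : (q : ℝ) ≤ 2 * ⌈64 * Q⌉₊ := by exact_mod_cast hq2
    have h2 := Nat.ceil_lt_add_one (a := 64 * Q) (by linarith)
    linarith
  have hqT1 : 64 ^ 2 * (n : ℝ) ≤ (q : ℝ) ^ 2 * T := by
    have := pow_le_pow_left₀ (by positivity) hqQ1 2
    rw [mul_pow, hQ2, ← mul_div_assoc, div_le_iff₀ hT0] at this
    exact this
  have hqT2 : (q : ℝ) ^ 2 * T ≤ 130 ^ 2 * n := by
    have := pow_le_pow_left₀ (by positivity) hqQ2 2
    rw [mul_pow, hQ2, ← mul_div_assoc, le_div_iff₀ hT0] at this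
    exact this
  exact ⟨q, hq, hqT1, hqT2⟩

/-- The total cost `q r L ^ 2` of the container steps is at most `s`, up to a constant; the
exponents in `T ^ (3 k - 2) = n ^ k L ^ (6 k)` are dictated by this inequality. -/
theorem container_steps_le {k n A q r s : ℕ} (hk : 3 ≤ k) {T L : ℝ} (hT0 : 0 < T) (hL0 : 0 ≤ L)
    (hT : T ^ (3 * k - 2) = (n : ℝ) ^ k * L ^ (6 * k))
    (hL : (12800 * A : ℝ) ^ (2 * k) * 4 ^ (k + 1) * 130 ^ (2 * k) ≤ L ^ (2 * k))
    (hsT : T ≤ s) (hqT2 : (q : ℝ) ^ 2 * T ≤ 130 ^ 2 * n)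
    (hrs2' : (r : ℝ) ^ k ≤ 2 ^ (k + 1) * s) :
    12800 * A * q * r * L ^ 2 ≤ (s : ℝ) := by
  have hTk : 0 < T ^ k := by positivity
  refine le_of_pow_le_pow_left₀ (n := 2 * k) (by omega) (by positivity) ?_
  refine le_of_mul_le_mul_left ?_ hTk
  have e1 : (q : ℝ) ^ (2 * k) * T ^ k ≤ 130 ^ (2 * k) * (n : ℝ) ^ k := by
    have := pow_le_pow_left₀ (by positivity) hqT2 k
    rwa [mul_pow, mul_pow, ← pow_mul, ← pow_mul] at this
  have e2 : (r : ℝ) ^ (2 * k) ≤ 4 ^ (k + 1) * (s : ℝ) ^ 2 := by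
    have := pow_le_pow_left₀ (by positivity) hrs2' 2
    rw [mul_pow, ← pow_mul, ← pow_mul] at this
    rw [mul_comm 2 k]
    refine this.trans (le_of_eq ?_)
    rw [mul_comm (k + 1) 2, pow_mul]
    norm_num
  have e3 : T ^ (3 * k - 2) = T ^ k * T ^ (2 * k - 2) := by
    rw [← pow_add]; congr 1; omega
  have e4 : (s : ℝ) ^ (2 * k) = (s : ℝ) ^ (2 * k - 2) * (s : ℝ) ^ 2 := by
    rw [← pow_add]; congr 1; omega
  calc T ^ k * (12800 * A * q * r * L ^ 2) ^ (2 * k)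
      = (12800 * A) ^ (2 * k) * ((q : ℝ) ^ (2 * k) * T ^ k) * (r : ℝ) ^ (2 * k) *
        L ^ (4 * k) := by
        simp only [mul_pow, ← pow_mul]
        ring_nf
    _ ≤ (12800 * A) ^ (2 * k) * (130 ^ (2 * k) * (n : ℝ) ^ k) * (4 ^ (k + 1) * (s : ℝ) ^ 2) *
        L ^ (4 * k) := by gcongr
    _ = ((12800 * A) ^ (2 * k) * 4 ^ (k + 1) * 130 ^ (2 * k)) *
        ((n : ℝ) ^ k * L ^ (4 * k) * (s : ℝ) ^ 2) := by ring
    _ ≤ L ^ (2 * k) * ((n : ℝ) ^ k * L ^ (4 * k) * (s : ℝ) ^ 2) := by gcongr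
    _ = ((n : ℝ) ^ k * L ^ (6 * k)) * (s : ℝ) ^ 2 := by
        rw [show 6 * k = 2 * k + 4 * k by ring, pow_add]; ring
    _ = T ^ k * (T ^ (2 * k - 2) * (s : ℝ) ^ 2) := by rw [← hT, e3]; ring
    _ ≤ T ^ k * ((s : ℝ) ^ (2 * k - 2) * (s : ℝ) ^ 2) := by gcongr
    _ = T ^ k * (s : ℝ) ^ (2 * k) := by rw [e4]

/-- The choice of parameters: `s = ⌈T⌉` and `q` of order `√(n / T)`. -/
theorem minFIndep_le_ceil {k n q₀ : ℕ} (hk : 3 ≤ k)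
    (hq₀ : ∀ q : ℕ, q₀ ≤ q → (q : ℝ) ^ 4 * Real.exp (-(q : ℝ) / 16) ≤ 1)
    {T L : ℝ} (hLn : L = Real.log n) (hL1 : 1 ≤ L) (hT1 : 130 ^ 2 ≤ T) (hT2 : T ^ 2 ≤ n)
    (hT : T ^ (3 * k - 2) = (n : ℝ) ^ k * L ^ (6 * k))
    (hL : (12800 * (2 ^ k * (4 * k + 1)) : ℝ) ^ (2 * k) * 4 ^ (k + 1) * 130 ^ (2 * k) ≤
      L ^ (2 * k))
    (hn : 2 ^ (k + 3) * (32 * (2 ^ k * (4 * k + 1))) ≤ n) (hnq : q₀ ^ 4 ≤ n) :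
    minFIndep (SimpleGraph.cycleGraph (2 * k)) (⊤ : SimpleGraph (Fin 4)) n ≤ 2 * ⌈T⌉₊ := by
  have hT0 : 0 < T := by linarith [show (0 : ℝ) < 130 ^ 2 by norm_num]
  set s := ⌈T⌉₊ with hs
  have hsT : T ≤ s := Nat.le_ceil _
  have hsT2 : (s : ℝ) ≤ 2 * T := by
    refine (Nat.ceil_lt_add_one hT0.le).le.trans ?_
    linarith [show (1 : ℝ) ≤ 130 ^ 2 by norm_num]
  have hs1 : 1 ≤ s := Nat.ceil_pos.2 hT0
  have hn0 : (0 : ℝ) < n := lt_of_lt_of_le (by positivity) hT2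
  have hTn : T ≤ n := by nlinarith
  have hn1 : (1 : ℝ) ≤ n := by linarith [show (1 : ℝ) ≤ 130 ^ 2 by norm_num]
  obtain ⟨q, hq, hqT1, hqT2⟩ := exists_prime_sq_mul_between hT0 hTn
  have hTq : T ≤ (q : ℝ) ^ 2 := by
    have : T * T ≤ (q : ℝ) ^ 2 * T := by nlinarith
    exact le_of_mul_le_mul_right this hT0
  have hqn : (q : ℝ) ^ 2 ≤ n := by
    have : (q : ℝ) ^ 2 * 130 ^ 2 ≤ n * 130 ^ 2 := by
      have : 0 ≤ (q : ℝ) ^ 2 := by positivity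
      nlinarith
    exact le_of_mul_le_mul_right this (by norm_num)
  have hq4 : 2 * (n : ℝ) ≤ (q : ℝ) ^ 4 := by
    have h1 : (q : ℝ) ^ 2 * T ≤ (q : ℝ) ^ 2 * (q : ℝ) ^ 2 := by gcongr
    nlinarith
  have hqq₀ : q₀ ≤ q := by
    by_contra hlt
    push Not at hlt
    have h1 : q ^ 4 ≤ n := (Nat.pow_le_pow_left hlt.le 4).trans hnq
    have h2 : (q : ℝ) ^ 4 ≤ n := by exact_mod_cast h1
    linarith
  obtain ⟨r, hr, hrs, hrs2⟩ := exists_root_between (k := k) (by omega) hs1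
  have hrs2' : (r : ℝ) ^ k ≤ 2 ^ (k + 1) * s := by exact_mod_cast hrs2
  have hr1 : (1 : ℝ) ≤ r := by exact_mod_cast (by omega : 1 ≤ r)
  set A : ℕ := 2 ^ k * (4 * k + 1) with hA
  have hA1 : 1 ≤ A := Nat.mul_pos (by positivity) (by omega)
  have hA1' : (1 : ℝ) ≤ A := by exact_mod_cast hA1
  have hAc : (A : ℝ) = 2 ^ k * (4 * k + 1) := by rw [hA]; push_cast; ring
  rw [← hAc] at hL
  have hD1 : ((4 * (4 * A * r) : ℕ) : ℝ) + 1 ≤ 32 * A * r := by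
    push_cast
    nlinarith
  have hDn : ((4 * (4 * A * r) : ℕ) : ℝ) + 1 ≤ (n : ℝ) ^ 2 := by
    have h1 : (r : ℝ) ≤ r ^ k := le_self_pow₀ hr1 (by omega)
    have h2 : (r : ℝ) ≤ 2 ^ (k + 3) * n := by
      calc (r : ℝ) ≤ 2 ^ (k + 1) * s := h1.trans hrs2'
        _ ≤ 2 ^ (k + 1) * (4 * n) := by gcongr; linarith
        _ = 2 ^ (k + 3) * n := by ring
    have h3 : (2 : ℝ) ^ (k + 3) * (32 * A) ≤ n := by exact_mod_cast hn
    calc _ ≤ 32 * A * (r : ℝ) := hD1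
      _ ≤ 32 * A * (2 ^ (k + 3) * n) := by gcongr
      _ = (2 ^ (k + 3) * (32 * A)) * n := by ring
      _ ≤ n * n := by gcongr
      _ = (n : ℝ) ^ 2 := by ring
  have hq4n : (q : ℝ) ^ 4 ≤ (n : ℝ) ^ 2 := by
    calc (q : ℝ) ^ 4 = ((q : ℝ) ^ 2) ^ 2 := by ring
      _ ≤ (n : ℝ) ^ 2 := by gcongr
  have hq0 : (0 : ℝ) < q := by exact_mod_cast hq.pos
  have hlog : ∀ y : ℝ, 0 < y → y ≤ (n : ℝ) ^ 5 → Real.log y ≤ 5 * L := by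
    intro y hy hyn
    have := Real.log_le_log hy hyn
    rw [Real.log_pow, ← hLn] at this
    exact_mod_cast this
  have hn45 : (n : ℝ) ^ 4 ≤ (n : ℝ) ^ 5 := pow_le_pow_right₀ hn1 (by norm_num)
  obtain ⟨j, hj1, hj2⟩ := exists_steps (q := q) (D := 4 * (4 * A * r)) hq.one_le hL1
    (hlog _ (by positivity) (by
      calc _ ≤ (n : ℝ) ^ 2 * (n : ℝ) ^ 2 := by gcongr
        _ = (n : ℝ) ^ 4 := by ring
        _ ≤ _ := hn45))
  have hlog2 : Real.log (1 + (q : ℝ) ^ 4) ≤ 5 * L := by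
    refine hlog _ (by positivity) (le_trans ?_ hn45)
    have h2 : (2 : ℝ) ≤ n := by linarith [show (2 : ℝ) ≤ 130 ^ 2 by norm_num]
    have h3 : (2 : ℝ) ^ 2 ≤ (n : ℝ) ^ 2 := by gcongr
    have h4 : (n : ℝ) ^ 4 = (n : ℝ) ^ 2 * (n : ℝ) ^ 2 := by ring
    have h5 : (2 : ℝ) ^ 2 * (n : ℝ) ^ 2 ≤ (n : ℝ) ^ 2 * (n : ℝ) ^ 2 := by gcongr
    rw [h4]
    linarith
  have hlog0 : 0 ≤ Real.log (1 + (q : ℝ) ^ 4) := Real.log_nonneg (by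
    have : (0 : ℝ) ≤ (q : ℝ) ^ 4 := by positivity
    linarith)
  have hmain : 12800 * A * q * r * L ^ 2 ≤ (s : ℝ) :=
    container_steps_le hk hT0 (by linarith) hT hL hsT hqT2 hrs2'
  refine minFIndep_le_of_params (j := j) (by omega) hq hr hrs rfl hs1 (by exact_mod_cast hq4)
    (hq₀ q hqq₀) ?_ hj1 ?_ ?_
  · have : (s : ℝ) ≤ 32 * (q : ℝ) ^ 2 := by linarith
    exact_mod_cast this
  · calc (j : ℝ) * Real.log (1 + (q : ℝ) ^ 4)
        ≤ (80 * q * (((4 * (4 * A * r) : ℕ) : ℝ) + 1) * L) * (5 * L) := by gcongr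
      _ ≤ (80 * q * (32 * A * r) * L) * (5 * L) := by gcongr
      _ = 12800 * A * q * r * L ^ 2 := by ring
      _ ≤ s := hmain
  · have he : Real.exp 3 ≤ 64 := by
      have h1 := Real.exp_one_lt_d9
      have h2 : Real.exp 3 = Real.exp 1 ^ 3 := by rw [← Real.exp_nat_mul]; norm_num
      rw [h2]
      calc Real.exp 1 ^ 3 ≤ 4 ^ 3 := by
            have := Real.exp_pos 1
            gcongr
            linarith
        _ = 64 := by norm_num
    calc 64 * (n : ℝ) * Real.exp 3 ≤ 64 * n * 64 := by gcongr
      _ = 64 ^ 2 * n := by ring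
      _ ≤ (q : ℝ) ^ 2 * T := hqT1
      _ ≤ (q : ℝ) ^ 2 * s := by gcongr

end Asymptotics

theorem stmt3 (k : ℕ) (hk : 3 ≤ k) :
    ∃ (C : ℝ) (N : ℕ), 0 < C ∧ ∀ n : ℕ, n > N →
      (minFIndep (SimpleGraph.cycleGraph (2 * k)) (⊤ : SimpleGraph (Fin 4)) n : ℝ) ≤
        C * (n : ℝ) ^ ((k : ℝ) / (3 * k - 2)) * Real.log n ^ ((6 * k : ℝ) / (3 * k - 2)) := by
  obtain ⟨q₀, hq₀⟩ := exists_eventually_pow_mul_exp_le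
  set c : ℝ := (12800 * (2 ^ k * (4 * k + 1)) : ℝ) ^ (2 * k) * 4 ^ (k + 1) * 130 ^ (2 * k) with hc
  have hlog : Filter.Tendsto (fun n : ℕ => Real.log n) Filter.atTop Filter.atTop :=
    Real.tendsto_log_atTop.comp tendsto_natCast_atTop_atTop
  have hsmall : ∀ᶠ n : ℕ in Filter.atTop, Real.log n ^ (12 * k) ≤ n := by
    have h := ((Real.isLittleO_pow_log_id_atTop (n := 12 * k)).comp_tendsto
      (tendsto_natCast_atTop_atTop (R := ℝ))).bound (by norm_num : (0 : ℝ) < 1)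
    filter_upwards [h] with n hn
    simp only [Function.comp_apply, id, one_mul, Real.norm_eq_abs, Nat.abs_cast] at hn
    exact (le_abs_self _).trans hn
  have hev := (hlog.eventually_ge_atTop (max 1 c)).and (hsmall.and
    ((Filter.eventually_ge_atTop ((130 ^ 2) ^ (3 * k - 2))).and
    ((Filter.eventually_ge_atTop (2 ^ (k + 3) * (32 * (2 ^ k * (4 * k + 1))))).and
      (Filter.eventually_ge_atTop (q₀ ^ 4)))))
  obtain ⟨N, hN⟩ := Filter.eventually_atTop.1 hev
  refine ⟨4, N, by norm_num, fun n hn => ?_⟩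
  obtain ⟨hLc, hLn, hn1, hn2, hn3⟩ := hN n (le_of_lt hn)
  set L := Real.log n with hLdef
  have hL1 : 1 ≤ L := (le_max_left _ _).trans hLc
  have hn1r : ((130 : ℝ) ^ 2) ^ (3 * k - 2) ≤ n := by exact_mod_cast hn1
  have hn1' : (1 : ℝ) ≤ n := le_trans (one_le_pow₀ (by norm_num)) hn1r
  have h3k : ((3 * k - 2 : ℕ) : ℝ) = 3 * k - 2 := by
    rw [Nat.cast_sub (by omega)]; push_cast; ring
  have h3k0 : (3 * k - 2 : ℝ) ≠ 0 := by
    rw [← h3k]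
    exact_mod_cast (by omega : 3 * k - 2 ≠ 0)
  set T := (n : ℝ) ^ ((k : ℝ) / (3 * k - 2)) * L ^ ((6 * k : ℝ) / (3 * k - 2)) with hT
  have hT0 : 0 ≤ T := by positivity
  have hTpow : T ^ (3 * k - 2) = (n : ℝ) ^ k * L ^ (6 * k) := by
    rw [hT, mul_pow, ← Real.rpow_natCast, ← Real.rpow_natCast, ← Real.rpow_mul (by positivity),
      ← Real.rpow_mul (by positivity), h3k, div_mul_cancel₀ _ h3k0, div_mul_cancel₀ _ h3k0,
      Real.rpow_natCast, ← Real.rpow_natCast L (6 * k)]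
    push_cast
    rfl
  have hT1 : 130 ^ 2 ≤ T := by
    refine le_of_pow_le_pow_left₀ (n := 3 * k - 2) (by omega) hT0 ?_
    rw [hTpow]
    calc ((130 : ℝ) ^ 2) ^ (3 * k - 2) ≤ n := hn1r
      _ ≤ (n : ℝ) ^ k := le_self_pow₀ hn1' (by omega)
      _ ≤ (n : ℝ) ^ k * L ^ (6 * k) := le_mul_of_one_le_right (by positivity) (one_le_pow₀ hL1)
  have hT2 : T ^ 2 ≤ n := by
    refine le_of_pow_le_pow_left₀ (n := 3 * k - 2) (by omega) (by positivity) ?_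
    calc (T ^ 2) ^ (3 * k - 2) = (T ^ (3 * k - 2)) ^ 2 := by rw [← pow_mul, ← pow_mul, mul_comm]
      _ = (n : ℝ) ^ (2 * k) * L ^ (12 * k) := by
        rw [hTpow, mul_pow, ← pow_mul, ← pow_mul]; congr 2 <;> ring
      _ ≤ (n : ℝ) ^ (2 * k) * (n : ℝ) ^ (k - 2) := by
        gcongr
        exact hLn.trans (le_self_pow₀ hn1' (by omega))
      _ = (n : ℝ) ^ (3 * k - 2) := by rw [← pow_add]; congr 1; omega
  have hmain := minFIndep_le_ceil hk hq₀ hLdef hL1 hT1 hT2 hTpow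
    (((le_max_right _ _).trans hLc).trans (le_self_pow₀ hL1 (by omega))) hn2 hn3
  calc (minFIndep (SimpleGraph.cycleGraph (2 * k)) (⊤ : SimpleGraph (Fin 4)) n : ℝ)
      ≤ 2 * (⌈T⌉₊ : ℝ) := by exact_mod_cast hmain
    _ ≤ 2 * (T + 1) := by
      have := (Nat.ceil_lt_add_one hT0).le
      gcongr
    _ ≤ 4 * T := by linarith [show (1 : ℝ) ≤ 130 ^ 2 by norm_num]
    _ = 4 * (n : ℝ) ^ ((k : ℝ) / (3 * k - 2)) * L ^ ((6 * k : ℝ) / (3 * k - 2)) := by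
      rw [hT]; ring
end

section
/- Let α, β, γ, δ, θ be real numbers with 0 ≤ α < 1, β > 0, γ > 0, δ > 0, 0 < θ < 1, and β < θ(1−α), and let F be a graph such that there is a constant c₀ > 0 with ex(b,F) ≤ c₀·b^{1+α} for every positive integer b. Then there exist positive real numbers c, C, and N such that the following holds for every integer n > N. Set s := ⌈n^{β/(1−α)} (log n)^{3/(1−α)}⌉. If G is an n-vertex graph such that e(G[A]) ≥ |A|² · δ · n^{−β} for every vertex subset A with |A| > γ·n^{θ}, then there exists an induced subgraph G' of G with at least m := c·s·n^{1−θ} vertices such that α_F(G') ≤ s ≤ C · m^{β/((1−α)(1−θ)+β)} · (log m)^{3(1−θ)/((1−α)(1−θ)+β)}. -/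
/-! ### Containers -/

/-- Deleting one vertex from a set of `j + 1` vertices whose counters, all at most `L`, sum to `F`,
and then raising the remaining counters by `d` in total to `F'`, lowers the potential
`L * H_k - F / k` by at least `d / (j + 1)`. -/
theorem potential_step (L j : ℕ) (F F' d x : ℝ) (hx : x ≤ L) (hF : F' = F - x + d)
    (hF' : 0 ≤ F') (hj : j = 0 → F' = 0) :
    d / ((j + 1 : ℕ) : ℝ) + ((L : ℝ) * (harmonic j : ℝ) - F' / (j : ℝ)) ≤
      (L : ℝ) * (harmonic (j + 1) : ℝ) - F / ((j + 1 : ℕ) : ℝ) := by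
  have h1 : F' / ((j + 1 : ℕ) : ℝ) ≤ F' / (j : ℝ) := by
    rcases Nat.eq_zero_or_pos j with h | h
    · simp [hj h]
    · have : (0 : ℝ) < j := by exact_mod_cast h
      push_cast
      gcongr
      linarith
  have h2 : F / ((j + 1 : ℕ) : ℝ) + d / ((j + 1 : ℕ) : ℝ) ≤
      F' / ((j + 1 : ℕ) : ℝ) + (L : ℝ) * ((j + 1 : ℕ) : ℝ)⁻¹ := by
    rw [← div_eq_mul_inv, ← add_div, ← add_div]
    exact div_le_div_of_nonneg_right (by linarith) (by positivity)
  rw [harmonic_succ]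
  push_cast at *
  linarith

/-- The container algorithm on a current set `A` of candidates carrying counters `f`. The
fingerprint of `S` splits into the queried vertices `T₁` and the saturated vertices `T₂`; the
container `g (T₁ ∪ T₂)` is determined by the fingerprint because, on running the algorithm, a
queried or saturated vertex belongs to `S` exactly when it belongs to the fingerprint. The last
conclusion bounds the number of queries by the potential `L * H_k - (∑ f) / k`, which drops by at
least `q` at every successful query. -/
theorem exists_containers {V : Type*} [DecidableEq V] (G : SimpleGraph V)
    [DecidableRel G.Adj] (M L : ℕ) (q : ℝ)
    (hdeg : ∀ A : Finset V, M < A.card →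
      ∃ v ∈ A, q * A.card ≤ ((A.filter (G.Adj v)).card : ℝ)) :
    ∀ (k : ℕ) (A : Finset V), A.card = k → ∀ f : V → ℕ, (∀ u ∈ A, f u ≤ L) →
      ∃ g : Finset V → Finset V, (∀ T, (g T).card ≤ M) ∧
        ∀ S ⊆ A, ∃ T₁ T₂ : Finset V, T₁ ⊆ S ∧ T₂ ⊆ S ∧ S ⊆ T₁ ∪ T₂ ∪ g (T₁ ∪ T₂) ∧
          L * T₂.card ≤ ∑ u ∈ T₂, (f u + (T₁.filter (G.Adj u)).card) ∧
          q * T₁.card ≤ L * (harmonic k : ℝ) - (∑ u ∈ A, (f u : ℝ)) / k := by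
  intro k
  induction k with
  | zero =>
    intro A hA f hf
    refine ⟨fun _ => ∅, by simp, fun S hS => ⟨∅, ∅, ?_⟩⟩
    have : A = ∅ := Finset.card_eq_zero.mp hA
    subst this
    simp_all
  | succ j ih =>
    intro A hA f hf
    by_cases hM : A.card ≤ M
    · refine ⟨fun _ => A, fun _ => hM, fun S hS => ⟨∅, ∅, by simp, by simp, by simpa using hS,
        by simp, ?_⟩⟩
      have h1 : (∑ u ∈ A, (f u : ℝ)) ≤ ((j + 1 : ℕ) : ℝ) * L := by
        rw [← hA, ← nsmul_eq_mul]
        exact Finset.sum_le_card_nsmul _ _ _ fun u hu => by exact_mod_cast hf u hu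
      have h2 : (∑ u ∈ A, (f u : ℝ)) / ((j + 1 : ℕ) : ℝ) ≤ L := by
        rw [div_le_iff₀ (by positivity)]; linarith
      have h3 : (1 : ℝ) ≤ (harmonic (j + 1) : ℝ) := by
        have : (1 : ℚ) ≤ harmonic (j + 1) := by
          rw [harmonic, Finset.sum_range_succ']
          simp
          positivity
        exact_mod_cast this
      have h4 : (L : ℝ) * 1 ≤ L * (harmonic (j + 1) : ℝ) := by gcongr
      simp only [Finset.card_empty, Nat.cast_zero, mul_zero]
      linarith
    · have herase : ∀ v ∈ A, (A.erase v).card = j := fun v hv => by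
        rw [Finset.card_erase_of_mem hv, hA]; rfl
      have hpot : ∀ v ∈ A, ∀ f' : V → ℕ, ∀ d : ℝ,
          (∑ u ∈ A.erase v, (f' u : ℝ)) = ∑ u ∈ A.erase v, (f u : ℝ) + d →
          d / ((j + 1 : ℕ) : ℝ) +
            (L * (harmonic j : ℝ) - (∑ u ∈ A.erase v, (f' u : ℝ)) / j) ≤
            L * (harmonic (j + 1) : ℝ) - (∑ u ∈ A, (f u : ℝ)) / ((j + 1 : ℕ) : ℝ) := by
        intro v hv f' d hd
        refine potential_step L j _ _ d (f v) (by exact_mod_cast hf v hv) ?_ ?_ ?_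
        · rw [hd, ← Finset.add_sum_erase A (fun u => (f u : ℝ)) hv]; ring
        · positivity
        · intro hj
          have : A.erase v = ∅ := Finset.card_eq_zero.mp (by rw [herase v hv, hj])
          rw [this]; simp
      -- The cases keep the invariant `f ≤ L`: counters are raised only when all are below `L`.
      by_cases hex : ∃ u ∈ A, f u = L
      · -- A saturated vertex is removed; if it lies in `S`, it is recorded in `T₂`.
        obtain ⟨u, huA, huL⟩ := hex
        obtain ⟨g, hg, hS⟩ := ih (A.erase u) (herase u huA) f
          (fun w hw => hf w (Finset.mem_of_mem_erase hw))
        refine ⟨fun T => g (T.erase u), fun T => hg _, fun S hSA => ?_⟩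
        obtain ⟨T₁, T₂, h1, h2, h3, h4, h5⟩ := hS (S.erase u) (Finset.erase_subset_erase u hSA)
        have hp := hpot u huA f 0 (by simp)
        have hu1 : u ∉ T₁ := fun h => Finset.notMem_erase u S (h1 h)
        have hu2 : u ∉ T₂ := fun h => Finset.notMem_erase u S (h2 h)
        have hp' : q * T₁.card ≤
            L * (harmonic (j + 1) : ℝ) - (∑ u ∈ A, (f u : ℝ)) / ((j + 1 : ℕ) : ℝ) := by
          simp only [zero_div, zero_add] at hp
          exact h5.trans hp
        by_cases huS : u ∈ S
        · have he : (T₁ ∪ insert u T₂).erase u = T₁ ∪ T₂ := by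
            ext w; simp only [Finset.mem_erase, Finset.mem_union, Finset.mem_insert]; grind
          refine ⟨T₁, insert u T₂, h1.trans (Finset.erase_subset _ _), ?_, ?_, ?_, hp'⟩
          · exact Finset.insert_subset huS (h2.trans (Finset.erase_subset _ _))
          · simp only [he]
            intro w hw
            by_cases hwu : w = u
            · simp [hwu]
            · have := h3 (Finset.mem_erase.mpr ⟨hwu, hw⟩)
              simp only [Finset.mem_union, Finset.mem_insert] at this ⊢
              tauto
          · rw [Finset.card_insert_of_notMem hu2, Finset.sum_insert hu2, huL]
            nlinarith
        · rw [Finset.erase_eq_of_notMem huS] at h1 h2 h3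
          refine ⟨T₁, T₂, h1, h2, ?_, h4, hp'⟩
          simp only
          rwa [Finset.erase_eq_of_notMem (by simp [hu1, hu2])]
      · -- Otherwise a vertex of large degree is queried.
        push Not at hex
        obtain ⟨v, hvA, hv⟩ := hdeg A (by omega)
        let f' : V → ℕ := fun w => f w + if G.Adj v w then 1 else 0
        obtain ⟨g₀, hg₀, hS₀⟩ := ih (A.erase v) (herase v hvA) f
          (fun w hw => hf w (Finset.mem_of_mem_erase hw))
        obtain ⟨g₁, hg₁, hS₁⟩ := ih (A.erase v) (herase v hvA) f' (fun w hw => by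
          have hw' := Finset.mem_of_mem_erase hw
          have := lt_of_le_of_ne (hf w hw') (hex w hw')
          simp only [f']; split_ifs <;> omega)
        refine ⟨fun T => if v ∈ T then g₁ (T.erase v) else g₀ T, fun T => ?_, fun S hSA => ?_⟩
        · simp only; split_ifs
          · exact hg₁ _
          · exact hg₀ _
        by_cases hvS : v ∈ S
        · obtain ⟨T₁, T₂, h1, h2, h3, h4, h5⟩ :=
            hS₁ (S.erase v) (Finset.erase_subset_erase v hSA)
          have hv1 : v ∉ T₁ := fun h => Finset.notMem_erase v S (h1 h)
          have hv2 : v ∉ T₂ := fun h => Finset.notMem_erase v S (h2 h)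
          have he : (insert v T₁ ∪ T₂).erase v = T₁ ∪ T₂ := by
            ext w; simp only [Finset.mem_erase, Finset.mem_union, Finset.mem_insert]; grind
          refine ⟨insert v T₁, T₂, ?_, h2.trans (Finset.erase_subset _ _), ?_, ?_, ?_⟩
          · exact Finset.insert_subset hvS (h1.trans (Finset.erase_subset _ _))
          · have hmem : v ∈ insert v T₁ ∪ T₂ := by simp
            simp only [hmem, if_true, he]
            intro w hw
            by_cases hwu : w = v
            · simp [hwu]
            · have := h3 (Finset.mem_erase.mpr ⟨hwu, hw⟩)
              simp only [Finset.mem_union, Finset.mem_insert] at this ⊢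
              tauto
          · refine h4.trans (le_of_eq (Finset.sum_congr rfl fun w hw => ?_))
            simp only [f']
            rw [Finset.filter_insert]
            by_cases hadj : G.Adj v w
            · rw [if_pos hadj, if_pos hadj.symm, Finset.card_insert_of_notMem (by simp [hv1])]
              omega
            · rw [if_neg hadj, if_neg (fun h => hadj h.symm)]
              omega
          · have hd : (∑ u ∈ A.erase v, (f' u : ℝ)) =
                ∑ u ∈ A.erase v, (f u : ℝ) + ((A.filter (G.Adj v)).card : ℝ) := by
              have : A.filter (G.Adj v) = (A.erase v).filter (G.Adj v) := by
                ext w; simp only [Finset.mem_filter, Finset.mem_erase]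
                constructor
                · rintro ⟨h, h'⟩; exact ⟨⟨h'.ne', h⟩, h'⟩
                · rintro ⟨⟨_, h⟩, h'⟩; exact ⟨h, h'⟩
              rw [this, Finset.card_filter]
              push_cast [f']
              rw [Finset.sum_add_distrib]
            have hp := hpot v hvA f' _ hd
            have hq : q ≤ ((A.filter (G.Adj v)).card : ℝ) / ((j + 1 : ℕ) : ℝ) := by
              rw [le_div_iff₀ (by positivity), ← hA]; exact hv
            rw [Finset.card_insert_of_notMem hv1]
            push_cast at *
            linarith
        · obtain ⟨T₁, T₂, h1, h2, h3, h4, h5⟩ := hS₀ S (fun w hw =>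
            Finset.mem_erase.mpr ⟨fun h => hvS (h ▸ hw), hSA hw⟩)
          have hv1 : v ∉ T₁ := fun h => hvS (h1 h)
          have hv2 : v ∉ T₂ := fun h => hvS (h2 h)
          have hp := hpot v hvA f 0 (by simp)
          refine ⟨T₁, T₂, h1, h2, ?_, h4, ?_⟩
          · have hmem : v ∉ T₁ ∪ T₂ := by simp [hv1, hv2]
            simpa only [hmem, if_false] using h3
          · simp only [zero_div, zero_add] at hp
            exact h5.trans hp

/-! ### Counting the family and averaging -/

/-- Double counting of the pairs `S ⊆ B` with `S ∈ 𝓕` and `B.card = m`. An `s`-set lies in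
`C(n - s, m - s)` sets of size `m`, and `C(n - s, m - s) / C(n, m) = C(m, s) / C(n, s)`. -/
theorem exists_avoiding {V : Type*} [Fintype V] [DecidableEq V] (s m : ℕ)
    (𝓕 : Finset (Finset V)) (h𝓕 : ∀ S ∈ 𝓕, S.card = s) (hm : m ≤ Fintype.card V)
    (hlt : 𝓕.card * m.choose s < (Fintype.card V).choose s) :
    ∃ B : Finset V, B.card = m ∧ ∀ S ∈ 𝓕, ¬ S ⊆ B := by
  classical
  by_contra! hcon
  have hcount : ∀ S ∈ 𝓕, ((Finset.univ.powersetCard m).filter (S ⊆ ·)).card ≤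
      (Fintype.card V - s).choose (m - s) := by
    intro S hS
    rw [← h𝓕 S hS, ← Finset.card_compl, ← Finset.card_powersetCard]
    refine Finset.card_le_card_of_injOn (fun B => B \ S) ?_ ?_
    · intro B hB
      simp only [Finset.coe_filter, Finset.mem_powersetCard, Set.mem_ofPred_eq] at hB
      simp only [Finset.mem_coe, Finset.mem_powersetCard]
      refine ⟨fun x hx => by simp at hx ⊢; exact hx.2, ?_⟩
      rw [Finset.card_sdiff_of_subset hB.2, hB.1.2]
    · intro B hB B' hB' h
      simp only [Finset.coe_filter, Set.mem_ofPred_eq] at hB hB'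
      simp only at h
      rw [← Finset.sdiff_union_of_subset hB.2, h, Finset.sdiff_union_of_subset hB'.2]
  have hcov : (Finset.univ : Finset V).powersetCard m ⊆
      𝓕.biUnion fun S => (Finset.univ.powersetCard m).filter (S ⊆ ·) := by
    intro B hB
    obtain ⟨S, hS, hSB⟩ := hcon B (Finset.mem_powersetCard.mp hB).2
    simp only [Finset.mem_biUnion, Finset.mem_filter]
    exact ⟨S, hS, hB, hSB⟩
  have h1 : (Fintype.card V).choose m ≤ 𝓕.card * (Fintype.card V - s).choose (m - s) := by
    calc (Fintype.card V).choose m = ((Finset.univ : Finset V).powersetCard m).card := by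
          rw [Finset.card_powersetCard, Finset.card_univ]
      _ ≤ _ := Finset.card_le_card hcov
      _ ≤ _ := Finset.card_biUnion_le_card_mul _ _ _ hcount
  have hpos : 0 < (Fintype.card V).choose m := Nat.choose_pos hm
  have hsm : s ≤ m := by
    obtain ⟨B, -, hB⟩ := Finset.exists_subset_card_eq (s := (Finset.univ : Finset V)) (n := m)
      (by simpa using hm)
    obtain ⟨S, hS, hSB⟩ := hcon B hB
    rw [← h𝓕 S hS, ← hB]; exact Finset.card_le_card hSB
  have h2 := Nat.choose_mul (n := Fintype.card V) hsm
  have h3 : (Fintype.card V).choose m * (Fintype.card V).choose s ≤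
      (Fintype.card V).choose m * (𝓕.card * m.choose s) := by
    calc _ ≤ 𝓕.card * (Fintype.card V - s).choose (m - s) * (Fintype.card V).choose s := by gcongr
      _ = 𝓕.card * ((Fintype.card V).choose s * (Fintype.card V - s).choose (m - s)) := by ring
      _ = _ := by rw [← h2]; ring
  exact absurd (Nat.le_of_mul_le_mul_left h3 hpos) (by omega)

theorem card_small_sets_le (V : Type*) [Fintype V] [DecidableEq V] (t : ℕ) :
    ((Finset.univ : Finset (Finset V)).filter (fun T => T.card ≤ t)).card ≤
      (Fintype.card V + 1) ^ t := by
  classical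
  have : (Finset.univ : Finset (Finset V)).filter (fun T => T.card ≤ t) ⊆
      (Finset.univ : Finset (Fin t → Option V)).image
        (fun φ => Finset.univ.filter fun v => ∃ i, φ i = some v) := by
    intro T hT
    simp only [Finset.mem_filter, Finset.mem_univ, true_and] at hT
    simp only [Finset.mem_image, Finset.mem_univ, true_and]
    refine ⟨fun i => if h : i.1 < T.card then some (T.equivFin.symm ⟨i, h⟩).1 else none, ?_⟩
    ext v
    simp only [Finset.mem_filter, Finset.mem_univ, true_and]
    constructor
    · rintro ⟨i, hi⟩
      split_ifs at hi with h
      simp only [Option.some.injEq] at hi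
      rw [← hi]; exact Subtype.property _
    · intro hv
      refine ⟨⟨T.equivFin ⟨v, hv⟩, lt_of_lt_of_le (Fin.is_lt _) hT⟩, ?_⟩
      simp
  refine (Finset.card_le_card this).trans (Finset.card_image_le.trans ?_)
  simp

theorem card_family_le {V : Type*} [Fintype V] [DecidableEq V] (s t M : ℕ)
    (𝓕 : Finset (Finset V)) (g : Finset V → Finset V) (hg : ∀ T, (g T).card ≤ M)
    (h : ∀ S ∈ 𝓕, S.card = s ∧ ∃ T : Finset V, T.card ≤ t ∧ S ⊆ T ∪ g T) :
    𝓕.card ≤ (Fintype.card V + 1) ^ t * (t + M).choose s := by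
  classical
  have hcov : 𝓕 ⊆ ((Finset.univ : Finset (Finset V)).filter (fun T => T.card ≤ t)).biUnion
      fun T => (T ∪ g T).powersetCard s := by
    intro S hS
    obtain ⟨hs, T, hT, hST⟩ := h S hS
    simp only [Finset.mem_biUnion, Finset.mem_filter, Finset.mem_univ, true_and,
      Finset.mem_powersetCard]
    exact ⟨T, hT, hST, hs⟩
  refine (Finset.card_le_card hcov).trans
    ((Finset.card_biUnion_le_card_mul _ _ ((t + M).choose s) ?_).trans ?_)
  · intro T hT
    rw [Finset.card_powersetCard]
    refine Nat.choose_le_choose _ ((Finset.card_union_le _ _).trans ?_)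
    have := hg T
    simp only [Finset.mem_filter, Finset.mem_univ, true_and] at hT
    omega
  · gcongr
    exact card_small_sets_le V t

/-! ### Sparse sets and the Turán number -/

theorem sum_degree_induce {V : Type*} [DecidableEq V] (G : SimpleGraph V) [DecidableRel G.Adj]
    (S : Finset V) :
    ∑ u ∈ S, (S.filter (G.Adj u)).card = 2 * Nat.card (G.induce (S : Set V)).edgeSet := by
  classical
  rw [Nat.card_eq_fintype_card, ← SimpleGraph.edgeFinset_card,
    ← SimpleGraph.sum_degrees_eq_twice_card_edges, ← Finset.sum_coe_sort S]
  refine Finset.sum_congr rfl fun u _ => ?_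
  rw [← SimpleGraph.card_neighborFinset_eq_degree]
  symm
  refine Finset.card_bij (fun w _ => w.1) ?_ ?_ ?_
  · intro w hw
    simp only [SimpleGraph.mem_neighborFinset, SimpleGraph.comap_adj] at hw
    simp only [Finset.mem_filter]
    exact ⟨w.2, hw⟩
  · intro w _ w' _ h
    exact Subtype.ext h
  · intro w hw
    simp only [Finset.mem_filter] at hw
    exact ⟨⟨w, hw.1⟩, by simpa using hw.2, rfl⟩

theorem card_edgeSet_le_turanNum {V W : Type*} (F : SimpleGraph W) (G : SimpleGraph V)
    (S : Finset V) (hS : ¬ ContainsCopy F (G.induce (S : Set V))) :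
    Nat.card (G.induce (S : Set V)).edgeSet ≤ turanNum S.card F := by
  classical
  let e : Fin S.card ≃ (S : Set V) := S.equivFin.symm
  refine le_csSup ?_ ⟨(G.induce (S : Set V)).comap e, ?_, ?_⟩
  · refine ⟨Nat.card (Sym2 (Fin S.card)), ?_⟩
    rintro k ⟨H, -, rfl⟩
    exact Nat.card_le_card_of_injective _ Subtype.val_injective
  · rintro ⟨f, hf, hadj⟩
    exact hS ⟨fun w => e (f w), e.injective.comp hf, fun x y hxy => hadj hxy⟩
  · exact (Nat.card_congr (SimpleGraph.Iso.mapEdgeSet (SimpleGraph.Iso.comap e _))).symm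

theorem exists_large_degree {V : Type*} [DecidableEq V] (G : SimpleGraph V) [DecidableRel G.Adj]
    (A : Finset V) (q : ℝ) (hA : 0 < A.card)
    (h : (A.card : ℝ) ^ 2 * q ≤ (Nat.card (G.induce (A : Set V)).edgeSet : ℝ)) :
    ∃ v ∈ A, q * A.card ≤ ((A.filter (G.Adj v)).card : ℝ) := by
  by_contra! hcon
  have hlt : ∑ v ∈ A, ((A.filter (G.Adj v)).card : ℝ) < ∑ _v ∈ A, q * (A.card : ℝ) :=
    Finset.sum_lt_sum_of_nonempty (Finset.card_pos.mp hA) hcon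
  have h2 := sum_degree_induce G A
  have h3 : ∑ v ∈ A, ((A.filter (G.Adj v)).card : ℝ) =
      2 * (Nat.card (G.induce (A : Set V)).edgeSet : ℝ) := by exact_mod_cast h2
  rw [h3, Finset.sum_const, nsmul_eq_mul] at hlt
  have : (0 : ℝ) ≤ (Nat.card (G.induce (A : Set V)).edgeSet : ℝ) := by positivity
  nlinarith

/-- Since being `F`-free passes to subsets, it suffices that `B` contains no `F`-free set of size
exactly `s`. -/
theorem fIndepNum_induce_le {V W : Type*} [Fintype V] (F : SimpleGraph W) (G : SimpleGraph V)
    (s : ℕ) (B : Finset V) (hB : ∀ S : Finset V, S.card = s →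
      ¬ ContainsCopy F (G.induce (S : Set V)) → ¬ S ⊆ B) :
    fIndepNum F (G.induce (B : Set V)) ≤ s := by
  classical
  refine csSup_le' ?_
  rintro k ⟨S, rfl, hS⟩
  by_contra! hlt
  obtain ⟨S', hS', hcard⟩ := Finset.exists_subset_card_eq hlt.le
  refine hB (S'.map (Function.Embedding.subtype _)) (by simpa using hcard) ?_ ?_
  · rintro ⟨f, hf, hadj⟩
    have hmem : ∀ w, ∃ x : (S : Set (B : Set V)), x.1.1 = (f w).1 := by
      intro w
      have := (f w).2
      simp only [Finset.coe_map, Set.mem_image, Finset.mem_coe] at this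
      obtain ⟨x, hx, hxw⟩ := this
      exact ⟨⟨x, hS' hx⟩, hxw⟩
    choose g hg using hmem
    refine hS ⟨g, fun w w' h => hf (Subtype.ext ?_), fun x y hxy => ?_⟩
    · rw [← hg, ← hg, h]
    · have := hadj hxy
      simp only [SimpleGraph.comap_adj, Function.Embedding.subtype_apply] at this ⊢
      rw [hg, hg]; exact this
  · intro x hx
    simp only [Finset.mem_map] at hx
    obtain ⟨y, -, rfl⟩ := hx
    exact y.2

/-- The combinatorial core, free of asymptotics. `R` bounds the size of a fingerprint: its queried
part has size at most `L * H_n / q`, and each vertex of its saturated part sends `L` edges to the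
queried part, while an `F`-free `s`-set spans at most `E` edges. -/
theorem exists_induced_of_count {V W : Type*} [Fintype V] (F : SimpleGraph W) (G : SimpleGraph V)
    (M L s m : ℕ) (q R E : ℝ) (hq : 0 < q) (hL : 0 < L)
    (hdense : ∀ A : Finset V, M < A.card →
      (A.card : ℝ) ^ 2 * q ≤ (Nat.card (G.induce (A : Set V)).edgeSet : ℝ))
    (hF : (turanNum s F : ℝ) ≤ E)
    (hR : L * (harmonic (Fintype.card V) : ℝ) / q + 2 * E / L ≤ R)
    (hm : m ≤ Fintype.card V)
    (hcount : (Fintype.card V + 1) ^ ⌊R⌋₊ * (⌊R⌋₊ + M).choose s * m.choose s <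
      (Fintype.card V).choose s) :
    ∃ B : Finset V, B.card = m ∧ fIndepNum F (G.induce (B : Set V)) ≤ s := by
  classical
  obtain ⟨g, hg, hcont⟩ := exists_containers G M L q
    (fun A hA => exists_large_degree G A q (by omega) (hdense A hA))
    (Fintype.card V) Finset.univ Finset.card_univ (fun _ => 0) (by simp)
  let 𝓕 : Finset (Finset V) := Finset.univ.filter fun S =>
    S.card = s ∧ ¬ ContainsCopy F (G.induce (S : Set V))
  have hfam : 𝓕.card ≤ (Fintype.card V + 1) ^ ⌊R⌋₊ * (⌊R⌋₊ + M).choose s := by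
    refine card_family_le s _ M 𝓕 g hg fun S hS => ?_
    simp only [𝓕, Finset.mem_filter, Finset.mem_univ, true_and] at hS
    obtain ⟨T₁, T₂, h1, h2, h3, h4, h5⟩ := hcont S (Finset.subset_univ _)
    refine ⟨hS.1, T₁ ∪ T₂, Nat.le_floor (le_trans ?_ hR), h3⟩
    have hT₁ : (T₁.card : ℝ) ≤ L * (harmonic (Fintype.card V) : ℝ) / q := by
      rw [le_div_iff₀ hq]
      simp only [Nat.cast_zero, Finset.sum_const_zero, zero_div, sub_zero] at h5
      linarith
    have hT₂ : (T₂.card : ℝ) ≤ 2 * E / L := by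
      have h6 : L * T₂.card ≤ 2 * turanNum s F := by
        calc L * T₂.card ≤ ∑ u ∈ T₂, (T₁.filter (G.Adj u)).card := by simpa using h4
          _ ≤ ∑ u ∈ T₂, (S.filter (G.Adj u)).card := by gcongr
          _ ≤ ∑ u ∈ S, (S.filter (G.Adj u)).card := Finset.sum_le_sum_of_subset h2
          _ = 2 * Nat.card (G.induce (S : Set V)).edgeSet := sum_degree_induce G S
          _ ≤ 2 * turanNum s F := by
            have := card_edgeSet_le_turanNum F G S hS.2
            rw [hS.1] at this
            omega
      have h7 : (L : ℝ) * T₂.card ≤ 2 * turanNum s F := by exact_mod_cast h6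
      rw [le_div_iff₀ (by exact_mod_cast hL)]
      linarith
    have : ((T₁ ∪ T₂).card : ℝ) ≤ T₁.card + T₂.card := by exact_mod_cast Finset.card_union_le _ _
    linarith
  obtain ⟨B, hBm, hB⟩ := exists_avoiding s m 𝓕
    (fun S hS => (Finset.mem_filter.mp hS).2.1) hm
    (lt_of_le_of_lt (Nat.mul_le_mul_right _ hfam) hcount)
  exact ⟨B, hBm, fIndepNum_induce_le F G s B fun S hS hfree =>
    hB S (Finset.mem_filter.mpr ⟨Finset.mem_univ _, hS, hfree⟩)⟩

/-- The condition `hX` makes the union bound work: after clearing factorials by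
`s ^ s ≤ e ^ s * s!`, it says that the left-hand side is a proper `s`-th power below the right. -/
theorem count_lt (n t X m s : ℕ) (K : ℝ) (hs : 0 < s) (hn : 2 * s ≤ n)
    (ht : (t : ℝ) * Real.log (n + 1) ≤ K * s)
    (hX : 2 * Real.exp (K + 1) * (X * m) < n * s) :
    (n + 1) ^ t * X.choose s * m.choose s < n.choose s := by
  have hs' : (0 : ℝ) < s := by exact_mod_cast hs
  have hn' : (2 : ℝ) * s ≤ n := by exact_mod_cast hn
  have hfac : (0 : ℝ) < (s.factorial : ℝ) := by exact_mod_cast s.factorial_pos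
  have h1 : ((n : ℝ) + 1) ^ t ≤ Real.exp K ^ s := by
    rw [← Real.exp_nat_mul, ← Real.exp_log (show (0 : ℝ) < (n : ℝ) + 1 by positivity),
      ← Real.exp_nat_mul, Real.exp_le_exp]
    linarith
  have h2 : (X.choose s : ℝ) * s.factorial ≤ (X : ℝ) ^ s := by
    rw [← le_div_iff₀ hfac]; exact Nat.choose_le_pow_div s X
  have h3 : (m.choose s : ℝ) * s.factorial ≤ (m : ℝ) ^ s := by
    rw [← le_div_iff₀ hfac]; exact Nat.choose_le_pow_div s m
  have h4 : ((n : ℝ) / 2) ^ s ≤ s.factorial * (n.choose s : ℝ) := by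
    have := Nat.pow_sub_le_descFactorial n s
    rw [Nat.descFactorial_eq_factorial_mul_choose] at this
    have h : (((n + 1 - s : ℕ) : ℝ)) ^ s ≤ s.factorial * (n.choose s : ℝ) := by
      exact_mod_cast this
    refine le_trans ?_ h
    gcongr
    rw [Nat.cast_sub (by omega)]
    push_cast
    linarith
  have h5 : (s : ℝ) ^ s ≤ Real.exp 1 ^ s * s.factorial := by
    have := Real.pow_div_factorial_le_exp (s : ℝ) hs'.le s
    rw [div_le_iff₀ hfac] at this
    rwa [← Real.exp_nat_mul, mul_one]
  have h6 : (Real.exp K * Real.exp 1 * (X * m)) ^ s < ((n : ℝ) / 2 * s) ^ s := by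
    refine pow_lt_pow_left₀ ?_ (by positivity) hs.ne'
    rw [← Real.exp_add]
    linarith
  have key : ((n : ℝ) + 1) ^ t * X.choose s * m.choose s < (n.choose s : ℝ) := by
    have hD : (0 : ℝ) < Real.exp 1 ^ s * s.factorial * s.factorial := by positivity
    refine lt_of_mul_lt_mul_right ?_ hD.le
    calc ((n : ℝ) + 1) ^ t * X.choose s * m.choose s *
          (Real.exp 1 ^ s * s.factorial * s.factorial)
        = ((n : ℝ) + 1) ^ t * Real.exp 1 ^ s * (X.choose s * s.factorial) *
          (m.choose s * s.factorial) := by ring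
      _ ≤ Real.exp K ^ s * Real.exp 1 ^ s * (X : ℝ) ^ s * (m : ℝ) ^ s := by gcongr
      _ = (Real.exp K * Real.exp 1 * (X * m)) ^ s := by rw [mul_pow, mul_pow, mul_pow]; ring
      _ < ((n : ℝ) / 2 * s) ^ s := h6
      _ = ((n : ℝ) / 2) ^ s * (s : ℝ) ^ s := mul_pow _ _ _
      _ ≤ (s.factorial * (n.choose s : ℝ)) * (Real.exp 1 ^ s * s.factorial) := by gcongr
      _ = _ := by ring
  exact_mod_cast key

/-! ### Asymptotic estimates -/

theorem eventually_ceil_le (p r θ ε : ℝ) (hp : p < θ) (hp0 : 0 < p) (hε : 0 < ε) :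
    ∀ᶠ x : ℝ in Filter.atTop, (⌈x ^ p * Real.log x ^ r⌉₊ : ℝ) ≤ ε * x ^ θ := by
  have h1 := (isLittleO_log_rpow_rpow_atTop r (sub_pos.mpr hp)).bound (half_pos hε)
  have h2 := ((tendsto_rpow_atTop (hp0.trans hp)).eventually_ge_atTop (2 / ε))
  filter_upwards [h1, h2, Filter.eventually_gt_atTop 1] with x h1 h2 hx
  have hx0 : 0 < x := by linarith
  have hl : 0 < Real.log x := Real.log_pos hx
  rw [Real.norm_of_nonneg (by positivity), Real.norm_of_nonneg (by positivity)] at h1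
  have h3 : x ^ p * Real.log x ^ r ≤ ε / 2 * x ^ θ := by
    calc _ ≤ x ^ p * (ε / 2 * x ^ (θ - p)) := by gcongr
      _ = ε / 2 * (x ^ p * x ^ (θ - p)) := by ring
      _ = _ := by rw [← Real.rpow_add hx0]; congr 2; ring
  have h4 := (Nat.ceil_lt_add_one (show 0 ≤ x ^ p * Real.log x ^ r by positivity)).le
  have h5 : 1 ≤ ε / 2 * x ^ θ := by
    rw [div_le_iff₀ hε] at h2; linarith
  linarith

/-- The upper bound on `s` in terms of `m = c s n^{1-θ}`. Up to constants `m` is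
`n^{D/(1-a)} (log n)^{3/(1-a)}` with `D = (1-a)(1-θ) + β`, so `m^{β/D}` supplies the full power
of `n` in `s`, and a power of `log m`, comparable to `log n`, supplies the missing logarithms. -/
theorem eventually_ceil_le_rpow (a β θ c : ℝ) (ha1 : a < 1) (hβ : 0 < β) (hθ1 : θ < 1)
    (hc : 0 < c) :
    ∃ C : ℝ, 0 < C ∧ ∀ᶠ x : ℝ in Filter.atTop,
      1 ≤ c * (⌈x ^ (β / (1 - a)) * Real.log x ^ (3 / (1 - a))⌉₊ : ℝ) * x ^ (1 - θ) ∧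
      (⌈x ^ (β / (1 - a)) * Real.log x ^ (3 / (1 - a))⌉₊ : ℝ) ≤
        C * (c * (⌈x ^ (β / (1 - a)) * Real.log x ^ (3 / (1 - a))⌉₊ : ℝ) *
          x ^ (1 - θ)) ^ (β / ((1 - a) * (1 - θ) + β)) *
          Real.log (c * (⌈x ^ (β / (1 - a)) * Real.log x ^ (3 / (1 - a))⌉₊ : ℝ) *
            x ^ (1 - θ)) ^ (3 * (1 - θ) / ((1 - a) * (1 - θ) + β)) := by
  have ha : 0 < 1 - a := by linarith
  have hθ : 0 < 1 - θ := by linarith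
  set D := (1 - a) * (1 - θ) + β with hD
  have hD0 : 0 < D := by positivity
  -- `m ≥ n ^ κ` for large `n`: half the true exponent absorbs the constant `c`.
  set κ := D / (2 * (1 - a)) with hκ
  have hκ0 : 0 < κ := by positivity
  refine ⟨2 / (c ^ (β / D) * κ ^ (3 * (1 - θ) / D)), by positivity, ?_⟩
  filter_upwards [(tendsto_rpow_atTop hκ0).eventually_ge_atTop (1 / c),
    Real.tendsto_log_atTop.eventually_ge_atTop 1, Filter.eventually_ge_atTop 1] with x h1 hl hx
  have hx0 : 0 < x := by linarith
  have hl0 : 0 < Real.log x := by linarith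
  set s₀ := x ^ (β / (1 - a)) * Real.log x ^ (3 / (1 - a)) with hs₀
  have hs₀1 : 1 ≤ s₀ := one_le_mul_of_one_le_of_one_le
    (Real.one_le_rpow hx (by positivity)) (Real.one_le_rpow hl (by positivity))
  have hle : s₀ ≤ (⌈s₀⌉₊ : ℝ) := Nat.le_ceil _
  have hle2 : (⌈s₀⌉₊ : ℝ) ≤ 2 * s₀ := by
    have := (Nat.ceil_lt_add_one (show 0 ≤ s₀ by linarith)).le
    linarith
  set m := c * (⌈s₀⌉₊ : ℝ) * x ^ (1 - θ) with hm
  have hDe : x ^ (β / (1 - a)) * x ^ (1 - θ) = x ^ (D / (1 - a)) := by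
    rw [← Real.rpow_add hx0]; congr 1; rw [hD]; field_simp; ring
  have hm1 : c * x ^ (D / (1 - a)) * Real.log x ^ (3 / (1 - a)) ≤ m := by
    calc _ = c * s₀ * x ^ (1 - θ) := by rw [hs₀, ← hDe]; ring
      _ ≤ m := by rw [hm]; gcongr
  have hm2 : x ^ κ ≤ m := by
    refine le_trans ?_ hm1
    have e : x ^ (D / (1 - a)) = x ^ κ * x ^ κ := by
      rw [← Real.rpow_add hx0]; congr 1; rw [hκ]; field_simp; ring
    have h2 : 1 ≤ Real.log x ^ (3 / (1 - a)) := Real.one_le_rpow hl (by positivity)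
    have h3 : 1 ≤ c * x ^ κ := by rw [div_le_iff₀ hc] at h1; linarith
    rw [e]
    have h4 : 0 < x ^ κ := by positivity
    calc x ^ κ = 1 * x ^ κ * 1 := by ring
      _ ≤ (c * x ^ κ) * x ^ κ * Real.log x ^ (3 / (1 - a)) := by gcongr
      _ = _ := by ring
  have hm3 : 1 ≤ m := le_trans (Real.one_le_rpow hx hκ0.le) hm2
  refine ⟨hm3, ?_⟩
  have hlog : κ * Real.log x ≤ Real.log m := by
    rw [← Real.log_rpow hx0]
    exact Real.log_le_log (by positivity) hm2
  have A1 : c ^ (β / D) * x ^ (β / (1 - a)) * Real.log x ^ (3 * β / ((1 - a) * D)) ≤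
      m ^ (β / D) := by
    calc _ = (c * x ^ (D / (1 - a)) * Real.log x ^ (3 / (1 - a))) ^ (β / D) := by
          rw [Real.mul_rpow (by positivity) (by positivity),
            Real.mul_rpow (by positivity) (by positivity), ← Real.rpow_mul hx0.le,
            ← Real.rpow_mul hl0.le]
          congr 3 <;> field_simp
      _ ≤ _ := Real.rpow_le_rpow (by positivity) hm1 (by positivity)
  have A2 : κ ^ (3 * (1 - θ) / D) * Real.log x ^ (3 * (1 - θ) / D) ≤
      Real.log m ^ (3 * (1 - θ) / D) := by
    rw [← Real.mul_rpow hκ0.le hl0.le]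
    exact Real.rpow_le_rpow (by positivity) hlog (by positivity)
  have hexp : Real.log x ^ (3 / (1 - a)) =
      Real.log x ^ (3 * β / ((1 - a) * D)) * Real.log x ^ (3 * (1 - θ) / D) := by
    rw [← Real.rpow_add hl0]; congr 1
    field_simp
    rw [hD]; ring
  have hcp : 0 < c ^ (β / D) := by positivity
  have hkp : 0 < κ ^ (3 * (1 - θ) / D) := by positivity
  calc (⌈s₀⌉₊ : ℝ) ≤ 2 * s₀ := hle2
    _ = 2 / (c ^ (β / D) * κ ^ (3 * (1 - θ) / D)) *
        (c ^ (β / D) * x ^ (β / (1 - a)) * Real.log x ^ (3 * β / ((1 - a) * D))) *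
        (κ ^ (3 * (1 - θ) / D) * Real.log x ^ (3 * (1 - θ) / D)) := by
      rw [hs₀, hexp]; field_simp
    _ ≤ _ := by gcongr

/-- With counters capped at `L = ⌈s^a log x⌉`, fingerprints have size `O(s / log x)`; this is where
`s^{1-a} ≥ x^β (log x)^3` is used. One logarithm comes from `L`, one from the harmonic sum and the
third is the saving that remains. -/
theorem fingerprint_bound (a β δ c₀ x : ℝ) (s n : ℕ) (ha0 : 0 ≤ a) (ha1 : a < 1) (hδ : 0 < δ)
    (hc₀ : 0 < c₀) (hxn : (n : ℝ) = x) (hx : 0 < x) (hl : 1 ≤ Real.log x) (hs1 : 1 ≤ s)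
    (hs : x ^ (β / (1 - a)) * Real.log x ^ (3 / (1 - a)) ≤ s) :
    (⌈(s : ℝ) ^ a * Real.log x⌉₊ : ℝ) * (harmonic n : ℝ) / (δ * x ^ (-β)) +
      2 * (c₀ * (s : ℝ) ^ (1 + a)) / (⌈(s : ℝ) ^ a * Real.log x⌉₊ : ℝ) ≤
      (4 / δ + 2 * c₀) * s / Real.log x := by
  have ha : 0 < 1 - a := by linarith
  have hsR : (1 : ℝ) ≤ s := by exact_mod_cast hs1
  have hs0 : (0 : ℝ) < s := by linarith
  set l := Real.log x with hldef
  have hl0 : 0 < l := by linarith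
  have hsa : 1 ≤ (s : ℝ) ^ a := Real.one_le_rpow hsR ha0
  have hone : 1 ≤ (s : ℝ) ^ a * l := one_le_mul_of_one_le_of_one_le hsa hl
  have hL1 : (s : ℝ) ^ a * l ≤ (⌈(s : ℝ) ^ a * l⌉₊ : ℝ) := Nat.le_ceil _
  have hL2 : (⌈(s : ℝ) ^ a * l⌉₊ : ℝ) ≤ 2 * ((s : ℝ) ^ a * l) := by
    have := (Nat.ceil_lt_add_one (show 0 ≤ (s : ℝ) ^ a * l by linarith)).le
    linarith
  have hH : (harmonic n : ℝ) ≤ 2 * l := by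
    have := harmonic_le_one_add_log n
    rw [hxn] at this
    linarith
  have hpow : x ^ β * l ^ (3 : ℕ) ≤ (s : ℝ) ^ (1 - a) := by
    calc x ^ β * l ^ (3 : ℕ) = (x ^ (β / (1 - a)) * l ^ (3 / (1 - a))) ^ (1 - a) := by
          rw [Real.mul_rpow (by positivity) (by positivity), ← Real.rpow_mul hx.le,
            ← Real.rpow_mul hl0.le, div_mul_cancel₀ _ ha.ne', div_mul_cancel₀ _ ha.ne']
          norm_cast
      _ ≤ _ := Real.rpow_le_rpow (by positivity) hs ha.le
  have hsplit : (s : ℝ) ^ a * (s : ℝ) ^ (1 - a) = s := by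
    rw [← Real.rpow_add hs0]; simp
  have h1 : (⌈(s : ℝ) ^ a * l⌉₊ : ℝ) * (harmonic n : ℝ) / (δ * x ^ (-β)) ≤ 4 / δ * s / l := by
    rw [Real.rpow_neg hx.le, div_le_div_iff₀ (by positivity) hl0]
    have hxb : 0 < x ^ β := by positivity
    calc (⌈(s : ℝ) ^ a * l⌉₊ : ℝ) * (harmonic n : ℝ) * l
        ≤ (2 * ((s : ℝ) ^ a * l)) * (2 * l) * l :=
          mul_le_mul_of_nonneg_right ((mul_le_mul_of_nonneg_left hH (Nat.cast_nonneg _)).trans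
            (mul_le_mul_of_nonneg_right hL2 (by positivity))) hl0.le
      _ = 4 * (s : ℝ) ^ a * (x ^ β * l ^ 3) * (x ^ β)⁻¹ := by field_simp; ring
      _ ≤ 4 * (s : ℝ) ^ a * (s : ℝ) ^ (1 - a) * (x ^ β)⁻¹ := by gcongr
      _ = 4 * s * (x ^ β)⁻¹ := by rw [mul_assoc 4, hsplit]
      _ = 4 / δ * s * (δ * (x ^ β)⁻¹) := by field_simp
  have h2 : 2 * (c₀ * (s : ℝ) ^ (1 + a)) / (⌈(s : ℝ) ^ a * l⌉₊ : ℝ) ≤ 2 * c₀ * s / l := by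
    calc _ ≤ 2 * (c₀ * (s : ℝ) ^ (1 + a)) / ((s : ℝ) ^ a * l) := by gcongr
      _ = _ := by
        rw [Real.rpow_add hs0, Real.rpow_one]
        have : (s : ℝ) ^ a ≠ 0 := by positivity
        field_simp
  calc _ ≤ 4 / δ * s / l + 2 * c₀ * s / l := add_le_add h1 h2
    _ = _ := by ring

theorem stmt4 {W : Type*} [Fintype W] (a β γ δ θ : ℝ)
    (ha0 : 0 ≤ a) (ha1 : a < 1) (hβ : 0 < β) (hγ : 0 < γ) (hδ : 0 < δ)
    (hθ0 : 0 < θ) (hθ1 : θ < 1) (hβθ : β < θ * (1 - a))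
    (F : SimpleGraph W) (c₀ : ℝ) (hc₀ : 0 < c₀)
    (hF : ∀ b : ℕ, 0 < b → (turanNum b F : ℝ) ≤ c₀ * (b : ℝ) ^ (1 + a)) :
    ∃ c C N : ℝ, 0 < c ∧ 0 < C ∧ 0 < N ∧
      ∀ n : ℕ, (n : ℝ) > N →
        ∀ (V : Type) [Fintype V], ∀ G : SimpleGraph V, Fintype.card V = n →
          (∀ A : Finset V, (A.card : ℝ) > γ * (n : ℝ) ^ θ →
            (Nat.card (G.induce (A : Set V)).edgeSet : ℝ) ≥
              (A.card : ℝ) ^ 2 * δ * (n : ℝ) ^ (-β)) →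
          ∃ B : Finset V,
            (B.card : ℝ) ≥
              c * (⌈(n : ℝ) ^ (β / (1 - a)) * Real.log n ^ (3 / (1 - a))⌉₊ : ℝ) *
                (n : ℝ) ^ (1 - θ) ∧
            fIndepNum F (G.induce (B : Set V)) ≤
              ⌈(n : ℝ) ^ (β / (1 - a)) * Real.log n ^ (3 / (1 - a))⌉₊ ∧
            (⌈(n : ℝ) ^ (β / (1 - a)) * Real.log n ^ (3 / (1 - a))⌉₊ : ℝ) ≤
              C * (c * (⌈(n : ℝ) ^ (β / (1 - a)) * Real.log n ^ (3 / (1 - a))⌉₊ : ℝ) *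
                    (n : ℝ) ^ (1 - θ)) ^ (β / ((1 - a) * (1 - θ) + β)) *
                Real.log (c * (⌈(n : ℝ) ^ (β / (1 - a)) * Real.log n ^ (3 / (1 - a))⌉₊ : ℝ) *
                    (n : ℝ) ^ (1 - θ)) ^ (3 * (1 - θ) / ((1 - a) * (1 - θ) + β)) := by
  have ha : 0 < 1 - a := by linarith
  have hp : β / (1 - a) < θ := by rwa [div_lt_iff₀ ha]
  set K : ℝ := 4 / δ + 2 * c₀ with hK
  have hK0 : 0 < K := by positivity
  -- Chosen so that `8 * γ * exp (2 * K + 1) * c = 1 / 2 < 1` in the union bound.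
  set c : ℝ := 1 / (16 * γ * Real.exp (2 * K + 1)) with hc
  have hc0 : 0 < c := by positivity
  obtain ⟨C, hC, hev⟩ := eventually_ceil_le_rpow a β θ c ha1 hβ hθ1 hc0
  -- The three bounds give `K s ≤ γ n^θ`, `2 s ≤ n` and `2 m ≤ n` respectively.
  set ε : ℝ := min (γ / K) (min (1 / 2) (1 / (2 * c))) with hε
  have hε0 : 0 < ε := by positivity
  have hev2 := eventually_ceil_le (β / (1 - a)) (3 / (1 - a)) θ ε hp (by positivity) hε0
  obtain ⟨N, hN⟩ := Filter.eventually_atTop.mp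
    (hev.and (hev2.and (Real.tendsto_log_atTop.eventually_ge_atTop 1)))
  -- `n > 4` ensures both `⌈c s n^{1-θ}⌉ ≤ n` and `n + 1 ≤ n ^ 2`.
  refine ⟨c, C, max N 4, hc0, hC, by positivity, fun n hn V _ G hV hdense => ?_⟩
  obtain ⟨⟨hm1, hfin⟩, hsε, hl⟩ := hN n ((le_max_left _ _).trans hn.le)
  have hn4 : (4 : ℝ) < n := lt_of_le_of_lt (le_max_right _ _) hn
  have hn0 : (0 : ℝ) < n := by linarith
  have hs₀ : (0 : ℝ) < (n : ℝ) ^ (β / (1 - a)) * Real.log n ^ (3 / (1 - a)) := by positivity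
  have hsle := Nat.le_ceil ((n : ℝ) ^ (β / (1 - a)) * Real.log n ^ (3 / (1 - a)))
  have hspos := Nat.ceil_pos.mpr hs₀
  generalize ⌈(n : ℝ) ^ (β / (1 - a)) * Real.log n ^ (3 / (1 - a))⌉₊ = s at *
  have hs0 : (0 : ℝ) < s := by exact_mod_cast hspos
  have hs1 : (1 : ℝ) ≤ s := by exact_mod_cast hspos
  have hnθ : (n : ℝ) ^ θ ≤ n := by
    simpa using Real.rpow_le_rpow_of_exponent_le (by linarith : (1 : ℝ) ≤ n) hθ1.le
  have hnθ0 : 0 < (n : ℝ) ^ θ := by positivity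
  have hsplit : (n : ℝ) ^ θ * (n : ℝ) ^ (1 - θ) = n := by
    rw [← Real.rpow_add hn0]; simp
  have hsK : K * s ≤ γ * (n : ℝ) ^ θ := by
    have : (s : ℝ) ≤ γ / K * (n : ℝ) ^ θ :=
      hsε.trans (mul_le_mul_of_nonneg_right (min_le_left _ _) hnθ0.le)
    calc K * s ≤ K * (γ / K * (n : ℝ) ^ θ) := by gcongr
      _ = _ := by field_simp
  have hs2 : (2 : ℝ) * s ≤ n := by
    have : (s : ℝ) ≤ 1 / 2 * (n : ℝ) ^ θ := hsε.trans (mul_le_mul_of_nonneg_right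
      ((min_le_right _ _).trans (min_le_left _ _)) hnθ0.le)
    linarith
  have hm2 : 2 * (c * s * (n : ℝ) ^ (1 - θ)) ≤ n := by
    have : (s : ℝ) ≤ 1 / (2 * c) * (n : ℝ) ^ θ := hsε.trans (mul_le_mul_of_nonneg_right
      ((min_le_right _ _).trans (min_le_right _ _)) hnθ0.le)
    calc _ ≤ 2 * (c * (1 / (2 * c) * (n : ℝ) ^ θ) * (n : ℝ) ^ (1 - θ)) := by gcongr
      _ = (n : ℝ) ^ θ * (n : ℝ) ^ (1 - θ) := by field_simp
      _ = n := hsplit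
  have hceil := (Nat.ceil_lt_add_one (zero_le_one.trans hm1)).le
  set m := ⌈c * s * (n : ℝ) ^ (1 - θ)⌉₊ with hm
  have hmn : m ≤ Fintype.card V := by
    have : (m : ℝ) ≤ n := by linarith
    rw [hV]; exact_mod_cast this
  have hR := fingerprint_bound a β δ c₀ n s n ha0 ha1 hδ hc₀ rfl hn0 hl hspos hsle
  rw [← hK] at hR
  set R := K * s / Real.log n with hRdef
  have hR0 : 0 ≤ R := by positivity
  have hfl : (⌊R⌋₊ : ℝ) ≤ R := Nat.floor_le hR0
  have hRle : R ≤ K * s := div_le_self (by positivity) hl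
  have hcount : (Fintype.card V + 1) ^ ⌊R⌋₊ * (⌊R⌋₊ + ⌊γ * (n : ℝ) ^ θ⌋₊).choose s * m.choose s <
      (Fintype.card V).choose s := by
    rw [hV]
    refine count_lt n _ _ m s (2 * K) hspos (by exact_mod_cast hs2) ?_ ?_
    · have hlog : Real.log ((n : ℝ) + 1) ≤ 2 * Real.log n := by
        rw [← Real.log_rpow hn0]
        refine Real.log_le_log (by positivity) ?_
        norm_num
        nlinarith
      calc (⌊R⌋₊ : ℝ) * Real.log (n + 1) ≤ R * (2 * Real.log n) :=
            mul_le_mul hfl hlog (Real.log_nonneg (by linarith)) hR0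
        _ = 2 * K * s := by rw [hRdef]; field_simp
    · have hX : ((⌊R⌋₊ + ⌊γ * (n : ℝ) ^ θ⌋₊ : ℕ) : ℝ) ≤ 2 * (γ * (n : ℝ) ^ θ) := by
        have := Nat.floor_le (show 0 ≤ γ * (n : ℝ) ^ θ by positivity)
        push_cast
        linarith
      have hmle : (m : ℝ) ≤ 2 * (c * s * (n : ℝ) ^ (1 - θ)) := by linarith
      calc _ ≤ 2 * Real.exp (2 * K + 1) * ((2 * (γ * (n : ℝ) ^ θ)) *
            (2 * (c * s * (n : ℝ) ^ (1 - θ)))) := by gcongr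
        _ = 8 * γ * Real.exp (2 * K + 1) * c * s * ((n : ℝ) ^ θ * (n : ℝ) ^ (1 - θ)) := by ring
        _ = n * s / 2 := by rw [hsplit, hc]; field_simp; norm_num
        _ < n * s := half_lt_self (by positivity)
  obtain ⟨B, hB, hind⟩ := exists_induced_of_count F G ⌊γ * (n : ℝ) ^ θ⌋₊
    ⌈(s : ℝ) ^ a * Real.log n⌉₊ s m (δ * (n : ℝ) ^ (-β)) R (c₀ * (s : ℝ) ^ (1 + a))
    (by positivity) (Nat.ceil_pos.mpr (by positivity))
    (fun A hA => by
      have := hdense A ((Nat.floor_lt (by positivity)).mp hA)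
      rwa [mul_assoc] at this)
    (hF s hspos) (by rw [hV]; exact hR) hmn hcount
  exact ⟨B, by rw [hB]; exact Nat.le_ceil _, hind, hfin⟩
end
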